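/- Fix an integer m ≥ 3 and a REAL coefficient vector a = (a_1, …, a_{m−1}) ∈ ℝ^{m−1}. Then all but finitely many eigenvalues of H(m,a) are real and positive; that is, the set {λ ∈ ℂ : λ is an eigenvalue of H and λ is not a positive real number} is finite. -/

import Mathlib

open Complex Real Filter Set MeasureTheory Asymptotics

/-- The polynomial `P(z) = a₁ z^{m-1} + a₂ z^{m-2} + ⋯ + a_{m-1} z`. -/
noncomputable def Ppoly (m : ℕ) (a : ℕ → ℂ) (z : ℂ) : ℂ :=
  ∑ j ∈ Finset.Icc 1 (m - 1), a j * z ^ (m - j)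

/-- `u` is an eigenfunction of `H(m,a)` associated with the eigenvalue `lam`:
`u` is a nonconstant entire solution of `-u'' - ((iz)^m + P(iz)) u = lam u` decaying
along the rays `arg z = -π/2 ± 2π/(m+2)`. -/
def IsEigenfunction (m : ℕ) (a : ℕ → ℂ) (lam : ℂ) (u : ℂ → ℂ) : Prop :=
  Differentiable ℂ u ∧
  (¬ ∃ c : ℂ, ∀ z : ℂ, u z = c) ∧
  (∀ z : ℂ, -(deriv (deriv u) z)
      - ((Complex.I * z) ^ m + Ppoly m a (Complex.I * z)) * u z = lam * u z) ∧
  Filter.Tendsto (fun r : ℝ =>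
      u ((r : ℂ) * Complex.exp (((-(Real.pi / 2) + 2 * Real.pi / ((m : ℝ) + 2) : ℝ) : ℂ)
        * Complex.I))) Filter.atTop (nhds 0) ∧
  Filter.Tendsto (fun r : ℝ =>
      u ((r : ℂ) * Complex.exp (((-(Real.pi / 2) - 2 * Real.pi / ((m : ℝ) + 2) : ℝ) : ℂ)
        * Complex.I))) Filter.atTop (nhds 0)

/-- `lam` is an eigenvalue of `H(m,a)`. -/
def IsEigenvalue (m : ℕ) (a : ℕ → ℂ) (lam : ℂ) : Prop :=
  ∃ u : ℂ → ℂ, IsEigenfunction m a lam u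

/-! Substituting `x = i z` turns the eigenvalue problem into `v'' = (x ^ m + P x + l) v` with decay
along the rays through `ω = exp (2πi / (m + 2))` and its conjugate. Since the coefficients are real,
`v ↦ conj ∘ v ∘ conj` exchanges the two rays, replaces `l` by its conjugate and preserves `|v|` on
the real axis. After rescaling `x = k s`, `l = k ^ m * e`, a Liouville–Green analysis along the ray
and then along an arc to the real axis shows that a solution decaying along the ray satisfies
`log |v 0 / v (k L)| = k ^ ((m + 2) / 2) * (S e + o(1))`, where `S e` is strictly smaller than
`S (conj e)` for `0 < Im e`. For an eigenfunction this ratio is the same at `e` and at `conj e`,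
which excludes large `l` whose argument stays away from `0` and `π`. Near the positive axis the gap
`S (conj e) - S e` is only of order `Im e`, but the `o(1)` is harmonic in `e`, so that it varies by
`o(Im e)` between `e` and `conj e`, and `Im e = 0`. Near the negative axis the decaying solution has
positive flux `Im (conj v * v')` at the origin, whereas conjugation changes the sign of the flux.
Finally a bounded set contains finitely many eigenvalues, because they are zeros of the holomorphic
Wronskian of the two decaying solutions. -/

open scoped ComplexConjugate Topology

/-! ### Comparison estimates on an interval -/

section Comparison

variable {I : Set ℝ} {f : ℝ → ℝ} {s t : ℝ}

theorem add_mul_sub_le_of_le_hasDerivAt (hI : Convex ℝ I) {C : ℝ}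
    (hf : ∀ t ∈ I, ∃ f', HasDerivAt f f' t ∧ C ≤ f') (hs : s ∈ I) (ht : t ∈ I) (hst : s ≤ t) :
    f s + C * (t - s) ≤ f t := by
  choose! f' hf' hC using hf
  have := hI.mul_sub_le_image_sub_of_le_deriv
    (fun t ht ↦ (hf' t ht).continuousAt.continuousWithinAt)
    (fun t ht ↦ (hf' t (interior_subset ht)).differentiableAt.differentiableWithinAt)
    (fun t ht ↦ (hf' t (interior_subset ht)).deriv ▸ hC t (interior_subset ht)) s hs t ht hst
  linarith

theorem monotoneOn_of_hasDerivAt_nonneg (hI : Convex ℝ I)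
    (hf : ∀ t ∈ I, ∃ f', HasDerivAt f f' t ∧ 0 ≤ f') : MonotoneOn f I := fun s hs t ht hst ↦ by
  simpa using add_mul_sub_le_of_le_hasDerivAt hI hf hs ht hst

theorem antitoneOn_of_hasDerivAt_nonpos (hI : Convex ℝ I)
    (hf : ∀ t ∈ I, ∃ f', HasDerivAt f f' t ∧ f' ≤ 0) : AntitoneOn f I := by
  have := monotoneOn_of_hasDerivAt_nonneg hI (f := -f) fun t ht ↦ by
    obtain ⟨f', hf', h0⟩ := hf t ht
    exact ⟨-f', hf'.neg, by linarith⟩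
  simpa using this.neg

theorem tendsto_atTop_of_le_hasDerivAt {C : ℝ} (hC : 0 < C)
    (hf : ∀ t ∈ Ici s, ∃ f', HasDerivAt f f' t ∧ C ≤ f') : Tendsto f atTop atTop := by
  have hlin : Tendsto (fun t ↦ f s + C * (t - s)) atTop atTop :=
    tendsto_atTop_add_const_left _ _ <|
      (tendsto_atTop_add_const_right _ (-s) tendsto_id).const_mul_atTop hC
  refine tendsto_atTop_mono' _ ?_ hlin
  filter_upwards [eventually_ge_atTop s] with t ht
  exact add_mul_sub_le_of_le_hasDerivAt (convex_Ici s) hf self_mem_Ici ht ht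

variable {Ψ Ψ' : ℝ → ℝ} {c : ℝ}

theorem mul_exp_le_of_mul_le_hasDerivAt (hI : Convex ℝ I)
    (hΨ : ∀ t ∈ I, HasDerivAt Ψ (Ψ' t) t)
    (hf : ∀ t ∈ I, ∃ f', HasDerivAt f f' t ∧ c * Ψ' t * f t ≤ f')
    (hs : s ∈ I) (ht : t ∈ I) (hst : s ≤ t) :
    f s * Real.exp (c * (Ψ t - Ψ s)) ≤ f t := by
  have hmono : MonotoneOn (fun t ↦ f t * Real.exp (-(c * Ψ t))) I := by
    refine monotoneOn_of_hasDerivAt_nonneg hI fun t ht ↦ ?_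
    obtain ⟨f', hf', hle⟩ := hf t ht
    refine ⟨(f' - c * Ψ' t * f t) * Real.exp (-(c * Ψ t)), ?_,
      mul_nonneg (by linarith) (Real.exp_nonneg _)⟩
    exact (hf'.mul ((hΨ t ht).const_mul c).neg.exp).congr_deriv
      (by simp only [Pi.neg_apply]; ring)
  calc f s * Real.exp (c * (Ψ t - Ψ s))
      = f s * Real.exp (-(c * Ψ s)) * Real.exp (c * Ψ t) := by
        rw [mul_assoc, ← Real.exp_add]; ring_nf
    _ ≤ f t * Real.exp (-(c * Ψ t)) * Real.exp (c * Ψ t) :=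
        mul_le_mul_of_nonneg_right (hmono hs ht hst) (Real.exp_nonneg _)
    _ = f t := by rw [mul_assoc, ← Real.exp_add]; simp

theorem le_mul_exp_of_hasDerivAt_le_mul (hI : Convex ℝ I)
    (hΨ : ∀ t ∈ I, HasDerivAt Ψ (Ψ' t) t)
    (hf : ∀ t ∈ I, ∃ f', HasDerivAt f f' t ∧ f' ≤ c * Ψ' t * f t)
    (hs : s ∈ I) (ht : t ∈ I) (hst : s ≤ t) :
    f t ≤ f s * Real.exp (c * (Ψ t - Ψ s)) := by
  have := mul_exp_le_of_mul_le_hasDerivAt (f := -f) (c := c) hI hΨ (fun t ht ↦ by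
    obtain ⟨f', hf', hle⟩ := hf t ht
    exact ⟨-f', hf'.neg, by simp only [Pi.neg_apply]; linarith⟩) hs ht hst
  simp only [Pi.neg_apply] at this
  linarith

theorem mul_exp_le_of_sq_mul_exp_le {A B x : ℝ} (hB : 0 ≤ B)
    (h : A ^ 2 * Real.exp (2 * x) ≤ B ^ 2) : A * Real.exp x ≤ B := by
  refine le_of_sq_le_sq ?_ hB
  rwa [mul_pow, ← Real.exp_nat_mul, Nat.cast_ofNat]

theorem le_mul_exp_of_sq_le_mul_exp {A B x : ℝ} (hA : 0 ≤ A)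
    (h : B ^ 2 ≤ A ^ 2 * Real.exp (2 * x)) : B ≤ A * Real.exp x := by
  refine le_of_sq_le_sq ?_ (by positivity)
  rwa [mul_pow, ← Real.exp_nat_mul, Nat.cast_ofNat]

end Comparison

theorem hasDerivAt_norm_sq {f : ℝ → ℂ} {f' : ℂ} {t : ℝ} (h : HasDerivAt f f' t) :
    HasDerivAt (fun t ↦ ‖f t‖ ^ 2) (2 * (conj (f t) * f').re) t := by
  have := h.norm_sq
  rwa [Complex.inner, mul_comm f'] at this

theorem hasDerivAt_norm_sq_of_linear {f : ℝ → ℂ} {c r : ℂ} {t : ℝ}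
    (h : HasDerivAt f (c * f t + r) t) :
    HasDerivAt (fun t ↦ ‖f t‖ ^ 2) (2 * c.re * ‖f t‖ ^ 2 + 2 * (conj (f t) * r).re) t := by
  refine (hasDerivAt_norm_sq h).congr_deriv ?_
  rw [Complex.sq_norm, normSq_apply]
  simp only [mul_re, add_re, conj_re, conj_im, mul_im, add_im]
  ring

/-! ### Second order equations on a half line -/

/-- `y'' = q y` on the set `I` of real times, as a first order system with `y₁ = y'`. -/
structure SolvesOn (I : Set ℝ) (q y y₁ : ℝ → ℂ) : Prop where
  hasDerivAt : ∀ t ∈ I, HasDerivAt y (y₁ t) t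
  hasDerivAt_deriv : ∀ t ∈ I, HasDerivAt y₁ (q t * y t) t

namespace SolvesOn

variable {I : Set ℝ} {q y y₁ : ℝ → ℂ}

theorem mono {J : Set ℝ} (h : SolvesOn I q y y₁) (hJ : J ⊆ I) : SolvesOn J q y y₁ :=
  ⟨fun t ht ↦ h.1 t (hJ ht), fun t ht ↦ h.2 t (hJ ht)⟩

theorem hasDerivAt_norm_sq (h : SolvesOn I q y y₁) {t : ℝ} (ht : t ∈ I) :
    HasDerivAt (fun t ↦ ‖y t‖ ^ 2) (2 * (conj (y t) * y₁ t).re) t :=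
  _root_.hasDerivAt_norm_sq (h.hasDerivAt t ht)

theorem hasDerivAt_conj_mul (h : SolvesOn I q y y₁) {t : ℝ} (ht : t ∈ I) :
    HasDerivAt (fun t ↦ conj (y t) * y₁ t) ((‖y₁ t‖ : ℂ) ^ 2 + q t * (‖y t‖ : ℂ) ^ 2) t := by
  refine ((h.hasDerivAt t ht).star.mul (h.hasDerivAt_deriv t ht)).congr_deriv ?_
  simp only [Complex.star_def, ← Complex.conj_mul']
  ring

theorem hasDerivAt_re_conj_mul (h : SolvesOn I q y y₁) {t : ℝ} (ht : t ∈ I) :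
    HasDerivAt (fun t ↦ (conj (y t) * y₁ t).re) (‖y₁ t‖ ^ 2 + (q t).re * ‖y t‖ ^ 2) t := by
  refine (Complex.reCLM.hasFDerivAt.comp_hasDerivAt t (h.hasDerivAt_conj_mul ht)).congr_deriv ?_
  simp [← ofReal_pow]

theorem tendsto_norm_sq_atTop_of_re_conj_mul_ge {s c : ℝ} (hc : 0 < c)
    (h : SolvesOn (Ici s) q y y₁) (hflux : ∀ t ∈ Ici s, c ≤ (conj (y t) * y₁ t).re) :
    Tendsto (fun t ↦ ‖y t‖ ^ 2) atTop atTop :=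
  tendsto_atTop_of_le_hasDerivAt (by positivity : 0 < 2 * c) fun t ht ↦
    ⟨_, h.hasDerivAt_norm_sq ht, by linarith [hflux t ht]⟩

theorem tendsto_norm_sq_atTop_of_energy_ge {s δ : ℝ} (hδ : 0 < δ)
    (h : SolvesOn (Ici s) q y y₁)
    (hE : ∀ t ∈ Ici s, δ ≤ ‖y₁ t‖ ^ 2 + (q t).re * ‖y t‖ ^ 2) :
    Tendsto (fun t ↦ ‖y t‖ ^ 2) atTop atTop := by
  have hflux : Tendsto (fun t ↦ (conj (y t) * y₁ t).re) atTop atTop :=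
    tendsto_atTop_of_le_hasDerivAt hδ fun t ht ↦ ⟨_, h.hasDerivAt_re_conj_mul ht, hE t ht⟩
  obtain ⟨s', hle⟩ := (hflux.eventually_ge_atTop 1).exists_forall_of_atTop
  exact (h.mono (Ici_subset_Ici.2 (le_max_left s s'))).tendsto_norm_sq_atTop_of_re_conj_mul_ge
    one_pos fun t ht ↦ hle t ((le_max_right _ _).trans ht)

end SolvesOn

/-! ### Liouville–Green estimates along a path -/

/-- The values `y` and derivatives `y₁` of a solution of `Y'' = Q Y` along a path with velocity `g`,
together with an approximate square root `φ` of `Q`. The WKB exponential `∫ φ g` must not decrease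
in modulus, and `μ` bounds the relative error made in replacing the equation by its WKB
approximation. -/
structure IsWKBPath (I : Set ℝ) (y y₁ g Q φ φ' : ℝ → ℂ) (μ : ℝ) : Prop where
  hasDerivAt : ∀ t ∈ I, HasDerivAt y (g t * y₁ t) t
  hasDerivAt_deriv : ∀ t ∈ I, HasDerivAt y₁ (g t * (Q t * y t)) t
  hasDerivAt_root : ∀ t ∈ I, HasDerivAt φ (φ' t) t
  root_ne_zero : ∀ t ∈ I, φ t ≠ 0
  re_nonneg : ∀ t ∈ I, 0 ≤ (φ t * g t).re
  defect_le : ∀ t ∈ I, ‖φ' t‖ + ‖g t‖ * ‖Q t - φ t ^ 2‖ ≤ μ * (φ t * g t).re * ‖φ t‖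
  le_half : μ ≤ 1 / 2

/-- The cone of Cauchy data `(y, y₁)` dominated by the growing WKB component `φ y + y₁`. -/
def IsDominant (φ y y₁ : ℂ) : Prop := ‖φ * y - y₁‖ ≤ ‖φ * y + y₁‖ / 3

/-- The cone of Cauchy data `(y, y₁)` dominated by the decaying WKB component `φ y - y₁`. -/
def IsRecessive (φ y y₁ : ℂ) : Prop := ‖φ * y + y₁‖ ≤ ‖φ * y - y₁‖ / 3

section Cones

variable {φ y y₁ : ℂ}

theorem isDominant_neg_iff : IsDominant φ y (-y₁) ↔ IsRecessive φ y y₁ := by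
  simp only [IsDominant, IsRecessive, sub_neg_eq_add, ← sub_eq_add_neg]

theorem isDominant_iff_sq : IsDominant φ y y₁ ↔ ‖φ * y - y₁‖ ^ 2 ≤ ‖φ * y + y₁‖ ^ 2 / 9 := by
  rw [IsDominant, ← sq_le_sq₀ (norm_nonneg _) (by positivity), div_pow]
  norm_num

theorem isRecessive_iff_sq : IsRecessive φ y y₁ ↔ ‖φ * y + y₁‖ ^ 2 ≤ ‖φ * y - y₁‖ ^ 2 / 9 := by
  rw [← isDominant_neg_iff, isDominant_iff_sq, sub_neg_eq_add, ← sub_eq_add_neg]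

theorem norm_mul_le_half (φ y y₁ : ℂ) :
    ‖φ * y‖ ≤ (‖φ * y - y₁‖ + ‖φ * y + y₁‖) / 2 := by
  have := norm_add_le (φ * y - y₁) (φ * y + y₁)
  rw [show φ * y - y₁ + (φ * y + y₁) = 2 * (φ * y) by ring, norm_mul, Complex.norm_ofNat] at this
  linarith

theorem norm_le_half (φ y y₁ : ℂ) : ‖y₁‖ ≤ (‖φ * y - y₁‖ + ‖φ * y + y₁‖) / 2 := by
  have := norm_sub_le (φ * y + y₁) (φ * y - y₁)
  rw [show φ * y + y₁ - (φ * y - y₁) = 2 * y₁ by ring, norm_mul, Complex.norm_ofNat] at this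
  linarith

theorem IsRecessive.norm_mul_le (h : IsRecessive φ y y₁) :
    ‖φ * y‖ ≤ 2 / 3 * ‖φ * y - y₁‖ := by
  have := norm_mul_le_half φ y y₁
  unfold IsRecessive at h
  linarith

theorem IsRecessive.norm_sub_le (h : IsRecessive φ y y₁) : ‖φ * y - y₁‖ ≤ 3 * ‖φ * y‖ := by
  have := _root_.norm_sub_le (2 * (φ * y)) (φ * y + y₁)
  rw [show 2 * (φ * y) - (φ * y + y₁) = φ * y - y₁ by ring, norm_mul, Complex.norm_ofNat] at this
  unfold IsRecessive at h
  linarith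

theorem IsRecessive.norm_deriv_le (h : IsRecessive φ y y₁) : ‖y₁‖ ≤ 2 * ‖φ * y‖ := by
  have h₁ := norm_le_half φ y y₁
  have h₂ := h.norm_sub_le
  unfold IsRecessive at h
  linarith

theorem isRecessive_neg_mul_iff {ω : ℂ} (hω : ω ≠ 0) :
    IsRecessive (-(ω * φ)) y (ω * y₁) ↔ IsDominant φ y y₁ := by
  have hω' : 0 < ‖ω‖ := norm_pos_iff.2 hω
  rw [IsRecessive, IsDominant, show -(ω * φ) * y + ω * y₁ = -(ω * (φ * y - y₁)) by ring,
    show -(ω * φ) * y - ω * y₁ = -(ω * (φ * y + y₁)) by ring, norm_neg, norm_neg, norm_mul,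
    norm_mul, mul_div_assoc, mul_le_mul_iff_right₀ hω']

theorem IsDominant.isRecessive_neg (h : IsDominant φ y y₁) : IsRecessive φ y (-y₁) := by
  simpa using (isRecessive_neg_mul_iff (neg_ne_zero.2 one_ne_zero)).2 h

theorem IsDominant.norm_mul_le (h : IsDominant φ y y₁) : ‖φ * y‖ ≤ 2 / 3 * ‖φ * y + y₁‖ := by
  simpa using h.isRecessive_neg.norm_mul_le

theorem IsDominant.norm_add_le (h : IsDominant φ y y₁) : ‖φ * y + y₁‖ ≤ 3 * ‖φ * y‖ := by
  simpa using h.isRecessive_neg.norm_sub_le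

theorem IsRecessive.ne_zero (h : IsRecessive φ y y₁) (h₀ : y = 0 → y₁ ≠ 0) : y ≠ 0 := fun hy ↦
  h₀ hy <| norm_le_zero_iff.1 <| by simpa [hy] using h.norm_deriv_le

end Cones

/-- The cone inequality behind the monotonicity of `B² - A² / 9` along a WKB path, where `A`, `B`
are the norms of the decaying and growing components. -/
theorem deriv_growing_sub_decaying_nonneg {A B P μ ra rb : ℝ} (hP : 0 ≤ P) (hA : 0 ≤ A)
    (hB : 0 ≤ B) (hμ : μ ≤ 1 / 2) (hra : |ra| ≤ μ * P * (A + B) * A)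
    (hrb : |rb| ≤ μ * P * (A + B) * B) :
    0 ≤ (2 * P * B ^ 2 + rb) - (-2 * P * A ^ 2 + ra) / 9 := by
  have hra' : ra ≤ 1 / 2 * P * (A + B) * A :=
    (le_abs_self ra).trans (hra.trans (by gcongr))
  have hrb' : -(1 / 2 * P * (A + B) * B) ≤ rb :=
    neg_le_of_abs_le (hrb.trans (by gcongr))
  have : 0 ≤ P * (2 * B ^ 2 + 2 * A ^ 2 / 9 - 1 / 2 * (A + B) * B - 1 / 2 * (A + B) * A / 9) :=
    mul_nonneg hP (by nlinarith [sq_nonneg (B - A / 3)])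
  linarith

theorem abs_two_mul_re_conj_mul_le {z r : ℂ} {C : ℝ} (hr : ‖r‖ ≤ C / 2) :
    |2 * (conj z * r).re| ≤ C * ‖z‖ := by
  have := Complex.abs_re_le_norm (conj z * r)
  rw [norm_mul, RCLike.norm_conj] at this
  rw [abs_mul, abs_two]
  nlinarith [norm_nonneg z]

namespace IsWKBPath

variable {I : Set ℝ} {y y₁ g Q φ φ' : ℝ → ℂ} {μ s t : ℝ}

theorem mul_re_nonneg (h : IsWKBPath I y y₁ g Q φ φ' μ) (ht : t ∈ I) :
    0 ≤ μ * (φ t * g t).re := by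
  have hφ : 0 < ‖φ t‖ := norm_pos_iff.2 (h.root_ne_zero t ht)
  exact nonneg_of_mul_nonneg_left (le_trans (by positivity) (h.defect_le t ht)) hφ

theorem norm_defect_mul_le (h : IsWKBPath I y y₁ g Q φ φ' μ) (ht : t ∈ I) {b : ℂ}
    (hb : ‖b‖ ≤ ‖φ' t‖ + ‖g t‖ * ‖Q t - φ t ^ 2‖) :
    ‖b * y t‖ ≤ μ * (φ t * g t).re * (‖φ t * y t - y₁ t‖ + ‖φ t * y t + y₁ t‖) / 2 :=
  calc ‖b * y t‖ ≤ μ * (φ t * g t).re * ‖φ t‖ * ‖y t‖ := by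
        rw [norm_mul]; gcongr; exact hb.trans (h.defect_le t ht)
    _ = μ * (φ t * g t).re * ‖φ t * y t‖ := by rw [norm_mul]; ring
    _ ≤ μ * (φ t * g t).re * ((‖φ t * y t - y₁ t‖ + ‖φ t * y t + y₁ t‖) / 2) :=
        mul_le_mul_of_nonneg_left (norm_mul_le_half _ _ _) (h.mul_re_nonneg ht)
    _ = _ := by ring

theorem hasDerivAt_growing (h : IsWKBPath I y y₁ g Q φ φ' μ) (ht : t ∈ I) :
    ∃ r : ℝ, HasDerivAt (fun t ↦ ‖φ t * y t + y₁ t‖ ^ 2)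
      (2 * (φ t * g t).re * ‖φ t * y t + y₁ t‖ ^ 2 + r) t ∧
      |r| ≤ μ * (φ t * g t).re * (‖φ t * y t - y₁ t‖ + ‖φ t * y t + y₁ t‖) *
        ‖φ t * y t + y₁ t‖ := by
  have hderiv : HasDerivAt (fun t ↦ φ t * y t + y₁ t)
      (φ t * g t * (φ t * y t + y₁ t) + (φ' t + g t * (Q t - φ t ^ 2)) * y t) t :=
    (((h.hasDerivAt_root t ht).mul (h.hasDerivAt t ht)).add
      (h.hasDerivAt_deriv t ht)).congr_deriv (by ring)
  exact ⟨_, hasDerivAt_norm_sq_of_linear hderiv,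
    abs_two_mul_re_conj_mul_le (h.norm_defect_mul_le ht
      ((norm_add_le _ _).trans_eq (by rw [norm_mul])))⟩

theorem hasDerivAt_decaying (h : IsWKBPath I y y₁ g Q φ φ' μ) (ht : t ∈ I) :
    ∃ r : ℝ, HasDerivAt (fun t ↦ ‖φ t * y t - y₁ t‖ ^ 2)
      (-2 * (φ t * g t).re * ‖φ t * y t - y₁ t‖ ^ 2 + r) t ∧
      |r| ≤ μ * (φ t * g t).re * (‖φ t * y t - y₁ t‖ + ‖φ t * y t + y₁ t‖) *
        ‖φ t * y t - y₁ t‖ := by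
  have hderiv : HasDerivAt (fun t ↦ φ t * y t - y₁ t)
      (-(φ t * g t) * (φ t * y t - y₁ t) + (φ' t - g t * (Q t - φ t ^ 2)) * y t) t :=
    (((h.hasDerivAt_root t ht).mul (h.hasDerivAt t ht)).sub
      (h.hasDerivAt_deriv t ht)).congr_deriv (by ring)
  refine ⟨_, (hasDerivAt_norm_sq_of_linear hderiv).congr_deriv (by rw [neg_re]; ring),
    abs_two_mul_re_conj_mul_le (h.norm_defect_mul_le ht
      ((_root_.norm_sub_le _ _).trans_eq (by rw [norm_mul])))⟩

theorem monotoneOn_growing_sub_decaying (h : IsWKBPath I y y₁ g Q φ φ' μ) (hI : Convex ℝ I) :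
    MonotoneOn (fun t ↦ ‖φ t * y t + y₁ t‖ ^ 2 - ‖φ t * y t - y₁ t‖ ^ 2 / 9) I := by
  refine monotoneOn_of_hasDerivAt_nonneg hI fun t ht ↦ ?_
  obtain ⟨ra, hA, hra⟩ := h.hasDerivAt_decaying ht
  obtain ⟨rb, hB, hrb⟩ := h.hasDerivAt_growing ht
  exact ⟨_, hB.sub (hA.div_const 9), deriv_growing_sub_decaying_nonneg (h.re_nonneg t ht)
    (norm_nonneg _) (norm_nonneg _) h.le_half hra hrb⟩

theorem antitoneOn_decaying_sub_growing (h : IsWKBPath I y y₁ g Q φ φ' μ) (hI : Convex ℝ I) :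
    AntitoneOn (fun t ↦ ‖φ t * y t - y₁ t‖ ^ 2 - ‖φ t * y t + y₁ t‖ ^ 2 / 9) I := by
  refine antitoneOn_of_hasDerivAt_nonpos hI fun t ht ↦ ?_
  obtain ⟨ra, hA, hra⟩ := h.hasDerivAt_decaying ht
  obtain ⟨rb, hB, hrb⟩ := h.hasDerivAt_growing ht
  rw [add_comm ‖φ t * y t - y₁ t‖] at hra hrb
  have := deriv_growing_sub_decaying_nonneg (ra := -rb) (rb := -ra) (h.re_nonneg t ht)
    (norm_nonneg _) (norm_nonneg _) h.le_half (by rwa [abs_neg]) (by rwa [abs_neg])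
  exact ⟨_, hA.sub (hB.div_const 9), by linarith⟩

theorem isDominant_of_le (h : IsWKBPath I y y₁ g Q φ φ' μ) (hI : Convex ℝ I) (hs : s ∈ I)
    (ht : t ∈ I) (hst : s ≤ t) (hdom : IsDominant (φ s) (y s) (y₁ s)) :
    IsDominant (φ t) (y t) (y₁ t) := by
  have := h.antitoneOn_decaying_sub_growing hI hs ht hst
  rw [isDominant_iff_sq] at hdom ⊢
  simp only at this
  linarith

variable {Ψ : ℝ → ℝ}

theorem growing_bounds (h : IsWKBPath I y y₁ g Q φ φ' μ) (hI : Convex ℝ I)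
    (hΨ : ∀ t ∈ I, HasDerivAt Ψ (φ t * g t).re t) (hs : s ∈ I) (ht : t ∈ I) (hst : s ≤ t)
    (hdom : ∀ t ∈ I, IsDominant (φ t) (y t) (y₁ t)) :
    ‖φ s * y s + y₁ s‖ * Real.exp ((1 - μ) * (Ψ t - Ψ s)) ≤ ‖φ t * y t + y₁ t‖ ∧
      ‖φ t * y t + y₁ t‖ ≤ ‖φ s * y s + y₁ s‖ * Real.exp ((1 + μ) * (Ψ t - Ψ s)) := by
  have key : ∀ t ∈ I, ∃ d, HasDerivAt (fun t ↦ ‖φ t * y t + y₁ t‖ ^ 2) d t ∧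
      2 * (1 - μ) * (φ t * g t).re * ‖φ t * y t + y₁ t‖ ^ 2 ≤ d ∧
      d ≤ 2 * (1 + μ) * (φ t * g t).re * ‖φ t * y t + y₁ t‖ ^ 2 := by
    intro t ht
    obtain ⟨r, hd, hr⟩ := h.hasDerivAt_growing ht
    have hcone : ‖φ t * y t - y₁ t‖ ≤ ‖φ t * y t + y₁ t‖ / 3 := hdom t ht
    have hr' := abs_le.1 <| hr.trans <| mul_le_mul_of_nonneg_right
      (mul_le_mul_of_nonneg_left (by linarith [norm_nonneg (φ t * y t + y₁ t)] :
        _ ≤ 2 * ‖φ t * y t + y₁ t‖) (h.mul_re_nonneg ht)) (norm_nonneg _)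
    exact ⟨_, hd, by linarith [hr'.1], by linarith [hr'.2]⟩
  constructor
  · refine mul_exp_le_of_sq_mul_exp_le (norm_nonneg _) ?_
    rw [← mul_assoc]
    exact mul_exp_le_of_mul_le_hasDerivAt hI hΨ
      (fun t ht ↦ (key t ht).imp fun _ hd ↦ ⟨hd.1, hd.2.1⟩) hs ht hst
  · refine le_mul_exp_of_sq_le_mul_exp (norm_nonneg _) ?_
    rw [← mul_assoc]
    exact le_mul_exp_of_hasDerivAt_le_mul hI hΨ
      (fun t ht ↦ (key t ht).imp fun _ hd ↦ ⟨hd.1, hd.2.2⟩) hs ht hst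

theorem decaying_le (h : IsWKBPath I y y₁ g Q φ φ' μ) (hI : Convex ℝ I)
    (hΨ : ∀ t ∈ I, HasDerivAt Ψ (φ t * g t).re t) (hs : s ∈ I) (ht : t ∈ I) (hst : s ≤ t)
    (hrec : ∀ t ∈ I, IsRecessive (φ t) (y t) (y₁ t)) :
    ‖φ t * y t - y₁ t‖ ≤ ‖φ s * y s - y₁ s‖ * Real.exp (-(1 - μ) * (Ψ t - Ψ s)) := by
  refine le_mul_exp_of_sq_le_mul_exp (norm_nonneg _) ?_
  rw [← mul_assoc]
  refine le_mul_exp_of_hasDerivAt_le_mul (f := fun t ↦ ‖φ t * y t - y₁ t‖ ^ 2) hI hΨ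
    (fun t ht ↦ ?_) hs ht hst
  obtain ⟨r, hd, hr⟩ := h.hasDerivAt_decaying ht
  have hcone : ‖φ t * y t + y₁ t‖ ≤ ‖φ t * y t - y₁ t‖ / 3 := hrec t ht
  have hr' := (le_abs_self r).trans <| hr.trans <| mul_le_mul_of_nonneg_right
    (mul_le_mul_of_nonneg_left (by linarith [norm_nonneg (φ t * y t - y₁ t)] :
      _ ≤ 2 * ‖φ t * y t - y₁ t‖) (h.mul_re_nonneg ht)) (norm_nonneg _)
  exact ⟨_, hd, by linarith⟩

/-- Leaving the recessive cone is irreversible and keeps the energy `‖y₁‖² + Re q ‖y‖²` bounded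
below, which forces growth. -/
theorem isRecessive_of_tendsto_zero {q : ℝ → ℂ} {s₀ C t₀ : ℝ}
    (h : IsWKBPath (Ici s₀) y y₁ (fun _ ↦ 1) q φ φ' μ) (hC : 0 < C)
    (hq : ∀ t, t₀ ≤ t → ‖φ t‖ ^ 2 ≤ C * (q t).re) (hlim : Tendsto y atTop (𝓝 0)) :
    ∀ t ∈ Ici s₀, IsRecessive (φ t) (y t) (y₁ t) := by
  intro t₁ ht₁
  by_contra hcon
  rw [isRecessive_iff_sq, not_le] at hcon
  set F := ‖φ t₁ * y t₁ + y₁ t₁‖ ^ 2 - ‖φ t₁ * y t₁ - y₁ t₁‖ ^ 2 / 9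
  have hF₀ : 0 < F := sub_pos.2 hcon
  have hsub : Ici (max t₁ t₀) ⊆ Ici s₀ := Ici_subset_Ici.2 (le_max_of_le_left ht₁)
  have hsol : SolvesOn (Ici (max t₁ t₀)) q y y₁ :=
    ⟨fun t ht ↦ by simpa using h.hasDerivAt t (hsub ht),
      fun t ht ↦ by simpa using h.hasDerivAt_deriv t (hsub ht)⟩
  have henergy : ∀ t ∈ Ici (max t₁ t₀),
      F / (2 * max C 1) ≤ ‖y₁ t‖ ^ 2 + (q t).re * ‖y t‖ ^ 2 := by
    intro t ht
    have hmono : F ≤ ‖φ t * y t + y₁ t‖ ^ 2 - ‖φ t * y t - y₁ t‖ ^ 2 / 9 :=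
      h.monotoneOn_growing_sub_decaying (convex_Ici s₀) ht₁ (hsub ht) ((le_max_left _ _).trans ht)
    have hsplit : ‖φ t * y t + y₁ t‖ ^ 2 ≤ 2 * (‖φ t * y t‖ ^ 2 + ‖y₁ t‖ ^ 2) :=
      (pow_le_pow_left₀ (norm_nonneg _) (norm_add_le _ _) 2).trans add_sq_le
    have hφ := hq t ((le_max_right _ _).trans ht)
    have hre : 0 ≤ (q t).re := nonneg_of_mul_nonneg_right ((sq_nonneg _).trans hφ) hC
    have hφy : ‖φ t * y t‖ ^ 2 ≤ max C 1 * ((q t).re * ‖y t‖ ^ 2) :=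
      calc ‖φ t * y t‖ ^ 2 = ‖φ t‖ ^ 2 * ‖y t‖ ^ 2 := by rw [norm_mul, mul_pow]
        _ ≤ max C 1 * (q t).re * ‖y t‖ ^ 2 := by
            gcongr; exact hφ.trans (by gcongr; exact le_max_left _ _)
        _ = _ := by ring
    have hy₁ : ‖y₁ t‖ ^ 2 ≤ max C 1 * ‖y₁ t‖ ^ 2 :=
      le_mul_of_one_le_left (sq_nonneg _) (le_max_right _ _)
    rw [div_le_iff₀ (by positivity)]
    nlinarith [sq_nonneg ‖φ t * y t - y₁ t‖]
  have hgrow := hsol.tendsto_norm_sq_atTop_of_energy_ge (div_pos hF₀ (by positivity)) henergy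
  exact not_tendsto_nhds_of_tendsto_atTop hgrow 0 (by simpa using hlim.norm.pow 2)

end IsWKBPath

/-! ### The principal square root and the action along a ray -/

section Sqrt

theorem complexSqrt_sq (z : ℂ) : Complex.sqrt z ^ 2 = z := by
  simp [Complex.sqrt]

theorem norm_complexSqrt_sq (z : ℂ) : ‖Complex.sqrt z‖ ^ 2 = ‖z‖ := by
  rw [← norm_pow, complexSqrt_sq]

theorem re_complexSqrt (z : ℂ) : (Complex.sqrt z).re = √((‖z‖ + z.re) / 2) :=
  Complex.cpow_inv_two_re z

theorem norm_add_re_nonneg (z : ℂ) : 0 ≤ ‖z‖ + z.re := by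
  linarith [neg_le_of_abs_le (Complex.abs_re_le_norm z)]

theorem re_complexSqrt_nonneg (z : ℂ) : 0 ≤ (Complex.sqrt z).re := by
  rw [re_complexSqrt]
  positivity

theorem re_complexSqrt_sq (z : ℂ) : (Complex.sqrt z).re ^ 2 = (‖z‖ + z.re) / 2 := by
  rw [re_complexSqrt, Real.sq_sqrt (by linarith [norm_add_re_nonneg z])]

theorem continuous_re_complexSqrt : Continuous fun z ↦ (Complex.sqrt z).re := by
  simp only [re_complexSqrt]
  fun_prop

theorem re_complexSqrt_le_add (z w : ℂ) :
    (Complex.sqrt w).re ≤ (Complex.sqrt z).re + √‖w - z‖ := by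
  refine le_of_sq_le_sq ?_ (add_nonneg (re_complexSqrt_nonneg z) (Real.sqrt_nonneg _))
  rw [add_sq, re_complexSqrt_sq, re_complexSqrt_sq, Real.sq_sqrt (norm_nonneg _)]
  have hnorm := norm_sub_norm_le w z
  have hre := Complex.re_le_norm (w - z)
  rw [sub_re] at hre
  have := mul_nonneg (re_complexSqrt_nonneg z) (Real.sqrt_nonneg ‖w - z‖)
  linarith

theorem mem_slitPlane_of_norm_add_re_pos {z : ℂ} (h : 0 < ‖z‖ + z.re) : z ∈ slitPlane := by
  rw [mem_slitPlane_iff_not_le_zero]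
  intro hz
  have hre : z.re ≤ 0 := (Complex.le_def.1 hz).1
  have him : z.im = 0 := (Complex.le_def.1 hz).2
  rw [show z = (z.re : ℂ) from Complex.ext rfl him, Complex.norm_real, Real.norm_of_nonpos hre,
    ofReal_re] at h
  linarith

theorem hasDerivAt_complexSqrt {z : ℂ} (h : z ∈ slitPlane) :
    HasDerivAt Complex.sqrt (2 * Complex.sqrt z)⁻¹ z := by
  refine (Complex.hasDerivAt_sqrt h).congr_deriv ?_
  rw [Complex.sqrt, show (-1 / 2 : ℂ) = -2⁻¹ by norm_num, Complex.cpow_neg]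
  ring

theorem hasDerivAt_complexSqrt_comp {f : ℝ → ℂ} {f' : ℂ} {t : ℝ} (hf : HasDerivAt f f' t)
    (h : f t ∈ slitPlane) :
    HasDerivAt (fun t ↦ Complex.sqrt (f t)) (f' / (2 * Complex.sqrt (f t))) t :=
  ((hasDerivAt_complexSqrt h).comp t hf).congr_deriv (inv_mul_eq_div _ _)

theorem norm_add_re_le_ofReal_add (A : ℂ) {T : ℝ} (hT : 0 ≤ T) :
    ‖A‖ + A.re ≤ ‖(T : ℂ) + A‖ + ((T : ℂ) + A).re := by
  have := norm_sub_le ((T : ℂ) + A) T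
  rw [add_sub_cancel_left, Complex.norm_real, Real.norm_of_nonneg hT] at this
  rw [add_re, ofReal_re]
  linarith

theorem mul_one_add_le_re_complexSqrt_sq {A : ℂ} {c T : ℝ} (hc : 0 ≤ c) (hcA : c ≤ ‖A‖ + A.re)
    (hA : ‖A‖ ≤ 2) (hT : 0 ≤ T) :
    c / 10 * (1 + T) ≤ (Complex.sqrt ((T : ℂ) + A)).re ^ 2 := by
  rw [re_complexSqrt_sq]
  rcases le_total T 4 with hT₄ | hT₄
  · nlinarith [norm_add_re_le_ofReal_add A hT]
  · have := neg_le_of_abs_le (Complex.abs_re_le_norm A)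
    have hnorm := Complex.re_le_norm ((T : ℂ) + A)
    have hc₄ : c ≤ 4 := by linarith [Complex.re_le_norm A]
    rw [add_re, ofReal_re] at hnorm ⊢
    nlinarith

theorem exists_norm_sub_eq_le_abs_im (A : ℂ) {η : ℝ} (hη : 0 ≤ η) :
    ∃ B : ℂ, ‖B - A‖ = η ∧ η ≤ |B.im| := by
  rcases le_total 0 A.im with h | h
  · refine ⟨A + η * Complex.I, by simp [abs_of_nonneg hη], ?_⟩
    simpa using (by linarith : η ≤ A.im + η).trans (le_abs_self _)
  · refine ⟨A - η * Complex.I, by simp [abs_of_nonneg hη], ?_⟩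
    simpa using (by linarith : η ≤ -(A.im - η)).trans (neg_le_abs _)

end Sqrt

/-- The real part of the action `∫₀ᴸ √(t^m + A) dt` along a ray. -/
noncomputable def rayAction (m : ℕ) (A : ℂ) (L : ℝ) : ℝ :=
  ∫ t in (0 : ℝ)..L, (Complex.sqrt ((t : ℂ) ^ m + A)).re

section RayAction

variable {m : ℕ} {A : ℂ} {L t : ℝ}

theorem continuous_re_complexSqrt_ray (m : ℕ) (A : ℂ) :
    Continuous fun t : ℝ ↦ (Complex.sqrt ((t : ℂ) ^ m + A)).re :=
  continuous_re_complexSqrt.comp (by fun_prop)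

theorem hasDerivAt_rayAction (m : ℕ) (A : ℂ) (L : ℝ) :
    HasDerivAt (rayAction m A) (Complex.sqrt ((L : ℂ) ^ m + A)).re L :=
  (continuous_re_complexSqrt_ray m A).integral_hasStrictDerivAt 0 L |>.hasDerivAt

@[simp]
theorem rayAction_zero (m : ℕ) (A : ℂ) : rayAction m A 0 = 0 :=
  intervalIntegral.integral_same

theorem rayAction_nonneg (m : ℕ) (A : ℂ) (hL : 0 ≤ L) : 0 ≤ rayAction m A L :=
  intervalIntegral.integral_nonneg hL fun _ _ ↦ re_complexSqrt_nonneg _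

theorem norm_ray_add_le (m : ℕ) (A : ℂ) (ht : 0 ≤ t) : ‖(t : ℂ) ^ m + A‖ ≤ t ^ m + ‖A‖ := by
  simpa [abs_of_nonneg ht] using norm_add_le ((t : ℂ) ^ m) A

theorem rayAction_le (hA : ‖A‖ ≤ 2) (hL : 0 ≤ L) : rayAction m A L ≤ L * (L ^ m + 2) := by
  have hle : ∀ t ∈ Icc 0 L, (Complex.sqrt ((t : ℂ) ^ m + A)).re ≤ L ^ m + 2 := fun t ht ↦ by
    have hnorm : ‖(t : ℂ) ^ m + A‖ ≤ L ^ m + 2 :=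
      (norm_ray_add_le m A ht.1).trans (add_le_add (pow_le_pow_left₀ ht.1 ht.2 m) hA)
    have hone : 1 ≤ L ^ m + 2 := by linarith [pow_nonneg hL m]
    refine le_of_sq_le_sq ?_ (by linarith)
    rw [re_complexSqrt_sq]
    nlinarith [Complex.re_le_norm ((t : ℂ) ^ m + A)]
  calc rayAction m A L ≤ ∫ _ in (0 : ℝ)..L, (L ^ m + 2) :=
        intervalIntegral.integral_mono_on hL
          ((continuous_re_complexSqrt_ray m A).intervalIntegrable _ _)
          (continuous_const.intervalIntegrable _ _) hle
    _ = L * (L ^ m + 2) := by rw [intervalIntegral.integral_const, smul_eq_mul, sub_zero]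

theorem rayAction_le_add (m : ℕ) (A B : ℂ) (hL : 0 ≤ L) :
    rayAction m B L ≤ rayAction m A L + L * √‖B - A‖ := by
  have hsqrt := (continuous_re_complexSqrt_ray m A).intervalIntegrable (μ := volume) 0 L
  calc rayAction m B L
      ≤ ∫ t in (0 : ℝ)..L, ((Complex.sqrt ((t : ℂ) ^ m + A)).re + √‖B - A‖) :=
        intervalIntegral.integral_mono_on hL
          ((continuous_re_complexSqrt_ray m B).intervalIntegrable _ _)
          (hsqrt.add (continuous_const.intervalIntegrable _ _)) fun t _ ↦ by
            simpa using re_complexSqrt_le_add ((t : ℂ) ^ m + A) ((t : ℂ) ^ m + B)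
    _ = rayAction m A L + L * √‖B - A‖ := by
        rw [intervalIntegral.integral_add hsqrt (continuous_const.intervalIntegrable _ _)]
        simp [rayAction]

theorem norm_ray_add_sq (m : ℕ) (t : ℝ) (A : ℂ) :
    ‖(t : ℂ) ^ m + A‖ ^ 2 = t ^ m * t ^ m + 2 * t ^ m * A.re + ‖A‖ ^ 2 := by
  rw [Complex.sq_norm, Complex.sq_norm, normSq_apply, normSq_apply, ← ofReal_pow, add_re, add_im,
    ofReal_re, ofReal_im]
  ring

theorem rayAction_add_le {B : ℂ} {d : ℝ} (hA : ‖A‖ ≤ 2) (hB : ‖B‖ = ‖A‖) (hd : 0 ≤ d)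
    (hre : A.re + 8 * d ≤ B.re) (hL : 1 ≤ L) : rayAction m A L + d ≤ rayAction m B L := by
  have hsq : ∀ t : ℝ, 0 ≤ t → (Complex.sqrt ((t : ℂ) ^ m + A)).re ^ 2 + 4 * d ≤
      (Complex.sqrt ((t : ℂ) ^ m + B)).re ^ 2 := fun t ht ↦ by
    have hnorm : ‖(t : ℂ) ^ m + A‖ ≤ ‖(t : ℂ) ^ m + B‖ :=
      le_of_sq_le_sq (by
        have hAB : A.re ≤ B.re := by linarith
        rw [norm_ray_add_sq, norm_ray_add_sq, hB]
        gcongr) (norm_nonneg _)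
    rw [re_complexSqrt_sq, re_complexSqrt_sq, add_re, add_re]
    linarith
  have hmono : ∀ t : ℝ, 0 ≤ t → (Complex.sqrt ((t : ℂ) ^ m + A)).re ≤
      (Complex.sqrt ((t : ℂ) ^ m + B)).re := fun t ht ↦
    le_of_sq_le_sq (by linarith [hsq t ht]) (re_complexSqrt_nonneg _)
  have hle : ∀ t ∈ Icc (0 : ℝ) 1, ∀ C : ℂ, ‖C‖ ≤ 2 →
      (Complex.sqrt ((t : ℂ) ^ m + C)).re ≤ 2 := fun t ht C hC ↦ by
    refine (Complex.re_le_norm _).trans (le_of_sq_le_sq ?_ zero_le_two)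
    rw [norm_complexSqrt_sq]
    linarith [norm_ray_add_le m C ht.1, pow_le_one₀ (n := m) ht.1 ht.2]
  have hdiff : ∀ t ∈ Icc (0 : ℝ) 1, (Complex.sqrt ((t : ℂ) ^ m + A)).re + d ≤
      (Complex.sqrt ((t : ℂ) ^ m + B)).re := fun t ht ↦ by
    nlinarith [hsq t ht.1, hmono t ht.1, hle t ht A hA, hle t ht B (hB.trans_le hA),
      re_complexSqrt_nonneg ((t : ℂ) ^ m + A)]
  have hA' := fun a b ↦ (continuous_re_complexSqrt_ray m A).intervalIntegrable (μ := volume) a b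
  have hB' := fun a b ↦ (continuous_re_complexSqrt_ray m B).intervalIntegrable (μ := volume) a b
  have hzero_one := intervalIntegral.integral_mono_on (μ := volume) zero_le_one
    ((hA' 0 1).add intervalIntegrable_const) (hB' 0 1) hdiff
  rw [intervalIntegral.integral_add (hA' 0 1) intervalIntegrable_const,
    intervalIntegral.integral_const, sub_zero, one_smul] at hzero_one
  have hone_L := intervalIntegral.integral_mono_on (μ := volume) hL (hA' 1 L) (hB' 1 L)
    fun t ht ↦ hmono t (zero_le_one.trans ht.1)
  rw [rayAction, rayAction, ← intervalIntegral.integral_add_adjacent_intervals (hA' 0 1) (hA' 1 L),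
    ← intervalIntegral.integral_add_adjacent_intervals (hB' 0 1) (hB' 1 L)]
  linarith

end RayAction

/-! ### Solutions on a ray in the semiclassical limit -/

/-- The semiclassical limit: a large parameter `K` and a small perturbation size `ν ≥ 0`. -/
def semiclassical : Filter (ℝ × ℝ) := atTop ×ˢ 𝓝[≥] 0

section Semiclassical

theorem le_exp_mul_of_le_mul_mul_exp {C x y u v w : ℝ} (hC : C ≤ Real.exp w) (hy : 0 ≤ y)
    (h : x ≤ C * (y * Real.exp u)) (huv : w + u ≤ v) : x ≤ Real.exp v * y :=
  calc x ≤ C * (y * Real.exp u) := h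
    _ ≤ Real.exp w * (y * Real.exp u) := by gcongr
    _ = Real.exp (w + u) * y := by rw [Real.exp_add, mul_right_comm, mul_assoc]
    _ ≤ Real.exp v * y := by gcongr

theorem eventually_semiclassical_ge (C : ℝ) : ∀ᶠ p in semiclassical, C ≤ p.1 :=
  (eventually_ge_atTop C).prod_inl _

theorem eventually_semiclassical_le {δ : ℝ} (hδ : 0 < δ) :
    ∀ᶠ p in semiclassical, 0 ≤ p.2 ∧ p.2 ≤ δ :=
  ((eventually_mem_nhdsWithin.and
    (eventually_nhdsWithin_of_eventually_nhds (eventually_le_nhds hδ)))).prod_inr _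

theorem eventually_semiclassical_le_exp (C : ℝ) {ε : ℝ} (hε : 0 < ε) :
    ∀ᶠ p in semiclassical, C ≤ Real.exp (p.1 * ε) :=
  ((Real.tendsto_exp_atTop.comp (tendsto_id.atTop_mul_const hε)).eventually_ge_atTop C).prod_inl _

end Semiclassical

theorem neg_mul_le_deriv_energy {φ φ' q p y y₁ : ℂ} {E : ℝ} (hp : p = φ * y)
    (hφ' : ‖φ'‖ ≤ E * ‖φ‖) (hq : ‖q - φ ^ 2‖ ≤ 2 * E * ‖φ‖) (hφ : 0 ≤ φ.re)
    (hE : 0 ≤ E) :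
    -2 * (φ.re + 2 * E) * (‖p‖ ^ 2 + ‖y₁‖ ^ 2) ≤
      2 * (conj p * (φ' * y + φ * y₁)).re + 2 * (conj y₁ * (q * y)).re := by
  have hexpand : (conj p * (φ' * y + φ * y₁)).re + (conj y₁ * (q * y)).re =
      φ.re * (2 * (conj p * y₁).re) + (conj p * (φ' * y)).re +
        (conj y₁ * ((q - φ ^ 2) * y)).re := by
    simp only [hp, mul_re, mul_im, add_re, add_im, sub_re, sub_im, conj_re, conj_im, pow_two]
    ring
  have hcross : -(‖p‖ ^ 2 + ‖y₁‖ ^ 2) ≤ 2 * (conj p * y₁).re := by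
    have := neg_le_of_abs_le (Complex.abs_re_le_norm (conj p * y₁))
    rw [norm_mul, RCLike.norm_conj] at this
    linarith [two_mul_le_add_sq ‖p‖ ‖y₁‖]
  have hφ'y : -(E * ‖p‖ ^ 2) ≤ (conj p * (φ' * y)).re :=
    neg_le_of_abs_le <| (Complex.abs_re_le_norm _).trans <| calc
      ‖conj p * (φ' * y)‖ ≤ ‖p‖ * (E * ‖φ‖ * ‖y‖) := by
        rw [norm_mul, norm_mul, RCLike.norm_conj]; gcongr
      _ = E * ‖p‖ ^ 2 := by rw [hp, norm_mul]; ring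
  have hqy : -(E * (2 * ‖p‖ * ‖y₁‖)) ≤ (conj y₁ * ((q - φ ^ 2) * y)).re :=
    neg_le_of_abs_le <| (Complex.abs_re_le_norm _).trans <| calc
      ‖conj y₁ * ((q - φ ^ 2) * y)‖ ≤ ‖y₁‖ * (2 * E * ‖φ‖ * ‖y‖) := by
        rw [norm_mul, norm_mul, RCLike.norm_conj]; gcongr
      _ = E * (2 * ‖p‖ * ‖y₁‖) := by rw [hp, norm_mul]; ring
  have hcross' := mul_le_mul_of_nonneg_left hcross hφ
  have hEpy := mul_le_mul_of_nonneg_left (two_mul_le_add_sq ‖p‖ ‖y₁‖) hE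
  have hEy := mul_nonneg hE (sq_nonneg ‖y₁‖)
  linarith

theorem SolvesOn.energy_mul_exp_le {I : Set ℝ} {q y y₁ φ φ' : ℝ → ℂ} {Ψ : ℝ → ℝ} {E s t : ℝ}
    (h : SolvesOn I q y y₁) (hI : Convex ℝ I) (hE : 0 ≤ E)
    (hφ : ∀ t ∈ I, HasDerivAt φ (φ' t) t) (hφ' : ∀ t ∈ I, ‖φ' t‖ ≤ E * ‖φ t‖)
    (hq : ∀ t ∈ I, ‖q t - φ t ^ 2‖ ≤ 2 * E * ‖φ t‖) (hre : ∀ t ∈ I, 0 ≤ (φ t).re)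
    (hΨ : ∀ t ∈ I, HasDerivAt Ψ ((φ t).re + 2 * E) t) (hs : s ∈ I) (ht : t ∈ I) (hst : s ≤ t) :
    (‖φ s * y s‖ ^ 2 + ‖y₁ s‖ ^ 2) * Real.exp (-2 * (Ψ t - Ψ s)) ≤
      ‖φ t * y t‖ ^ 2 + ‖y₁ t‖ ^ 2 :=
  mul_exp_le_of_mul_le_hasDerivAt (f := fun t ↦ ‖φ t * y t‖ ^ 2 + ‖y₁ t‖ ^ 2) hI hΨ
    (fun t ht ↦ ⟨_, (_root_.hasDerivAt_norm_sq ((hφ t ht).mul (h.hasDerivAt t ht))).add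
      (_root_.hasDerivAt_norm_sq (h.hasDerivAt_deriv t ht)),
      neg_mul_le_deriv_energy rfl (hφ' t ht) (hq t ht) (hre t ht) hE⟩) hs ht hst

/-- `y`, with derivative `y₁`, is a nontrivial solution of `y'' = K² (t^m + A + ρ) y` on `[0, ∞)`
which decays at infinity; `ν` measures the size of the perturbation `ρ`. -/
structure IsRaySolution (m : ℕ) (K ν : ℝ) (A : ℂ) (y y₁ ρ : ℝ → ℂ) : Prop extends
    SolvesOn (Ici 0) (fun t ↦ (K : ℂ) ^ 2 * ((t : ℂ) ^ m + A + ρ t)) y y₁ where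
  norm_perturbation_le : ∀ t ∈ Ici (0 : ℝ), ‖ρ t‖ ≤ ν * (1 + t ^ (m - 1))
  deriv_ne_zero : ∀ t ∈ Ici (0 : ℝ), y t = 0 → y₁ t ≠ 0
  tendsto_zero : Tendsto y atTop (𝓝 0)

/-- The approximate root `K √(t^m + B)` of the coefficient of the equation on a ray. -/
noncomputable def rayRoot (m : ℕ) (K : ℝ) (B : ℂ) (t : ℝ) : ℂ :=
  K * Complex.sqrt ((t : ℂ) ^ m + B)

section RayRoot

variable {m : ℕ} {K : ℝ} {B : ℂ} {t : ℝ}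

theorem re_rayRoot : (rayRoot m K B t).re = K * (Complex.sqrt ((t : ℂ) ^ m + B)).re :=
  re_ofReal_mul _ _

theorem norm_rayRoot (hK : 0 ≤ K) :
    ‖rayRoot m K B t‖ = K * ‖Complex.sqrt ((t : ℂ) ^ m + B)‖ := by
  rw [rayRoot, norm_mul, Complex.norm_real, Real.norm_of_nonneg hK]

theorem norm_rayRoot_sq (hK : 0 ≤ K) : ‖rayRoot m K B t‖ ^ 2 = K ^ 2 * ‖(t : ℂ) ^ m + B‖ := by
  rw [norm_rayRoot hK, mul_pow, norm_complexSqrt_sq]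

theorem rayRoot_sq : rayRoot m K B t ^ 2 = (K : ℂ) ^ 2 * ((t : ℂ) ^ m + B) := by
  rw [rayRoot, mul_pow, complexSqrt_sq]

theorem rayRoot_zero (ht : 0 ≤ t) : rayRoot m K 0 t = ((K * √(t ^ m) : ℝ) : ℂ) := by
  rw [rayRoot, add_zero, ← ofReal_pow, Complex.sqrt_of_nonneg (by exact_mod_cast pow_nonneg ht m),
    ofReal_re, ofReal_mul]

theorem hasDerivAt_rayRoot (h : (t : ℂ) ^ m + B ∈ slitPlane) :
    HasDerivAt (rayRoot m K B)
      (K * (m * (t : ℂ) ^ (m - 1) / (2 * Complex.sqrt ((t : ℂ) ^ m + B)))) t :=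
  (hasDerivAt_complexSqrt_comp (((hasDerivAt_pow m (t : ℂ)).comp_ofReal).add_const B) h).const_mul _

theorem norm_deriv_rayRoot (hK : 0 ≤ K) (ht : 0 ≤ t) (h : (t : ℂ) ^ m + B ∈ slitPlane) :
    ‖deriv (rayRoot m K B) t‖ =
      K * (m * t ^ (m - 1) / (2 * ‖Complex.sqrt ((t : ℂ) ^ m + B)‖)) := by
  rw [(hasDerivAt_rayRoot h).deriv]
  simp [abs_of_nonneg hK, abs_of_nonneg ht]

theorem norm_deriv_rayRoot_le {L δ : ℝ} (hK : 0 ≤ K) (hδ : 0 < δ) (ht : 0 ≤ t) (htL : t ≤ L)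
    (hKδ : m * L ^ (m - 1) ≤ 2 * K * δ ^ 3) (hslit : (t : ℂ) ^ m + B ∈ slitPlane)
    (hδS : δ ≤ ‖Complex.sqrt ((t : ℂ) ^ m + B)‖) :
    ‖deriv (rayRoot m K B) t‖ ≤ K * δ * ‖rayRoot m K B t‖ := by
  rw [norm_deriv_rayRoot hK ht hslit, norm_rayRoot hK, mul_assoc]
  have hS := hδ.trans_le hδS
  gcongr
  rw [div_le_iff₀ (by positivity)]
  calc m * t ^ (m - 1) ≤ m * L ^ (m - 1) := by gcongr
    _ ≤ 2 * K * δ ^ 3 := hKδ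
    _ = δ * (K * δ) * (2 * δ) := by ring
    _ ≤ _ := by gcongr

end RayRoot

namespace IsRaySolution

variable {m : ℕ} {K ν : ℝ} {A : ℂ} {y y₁ ρ : ℝ → ℂ}

theorem bound_nonneg (h : IsRaySolution m K ν A y y₁ ρ) : 0 ≤ ν := by
  have h0 := (norm_nonneg _).trans (h.norm_perturbation_le 0 self_mem_Ici)
  exact nonneg_of_mul_nonneg_left h0 (by positivity)

theorem norm_add_perturbation_le (h : IsRaySolution m K ν A y y₁ ρ) (hm : m ≠ 0) (hν : ν ≤ 1)
    (hA : ‖A‖ ≤ 2) {t : ℝ} (ht : 16 ≤ t) : ‖A + ρ t‖ ≤ t ^ m / 4 := by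
  have hρ : ‖ρ t‖ ≤ 1 * (1 + t ^ (m - 1)) :=
    (h.norm_perturbation_le t (by simp; linarith)).trans (by gcongr)
  have hone : 1 ≤ t ^ (m - 1) := one_le_pow₀ (by linarith)
  have hpow : 16 * t ^ (m - 1) ≤ t ^ m := by
    rw [← mul_pow_sub_one hm t]; gcongr
  linarith [norm_add_le A (ρ t)]

theorem isWKBPath (h : IsRaySolution m K ν A y y₁ ρ) {I : Set ℝ} (hI : I ⊆ Ici 0) (hK : 0 < K)
    {B : ℂ} {μ : ℝ} (hμ : μ ≤ 1 / 2) (hslit : ∀ t ∈ I, (t : ℂ) ^ m + B ∈ slitPlane)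
    (hdefect : ∀ t ∈ I, m * t ^ (m - 1) / (2 * ‖Complex.sqrt ((t : ℂ) ^ m + B)‖) +
      K * ‖A + ρ t - B‖ ≤
        μ * K * (Complex.sqrt ((t : ℂ) ^ m + B)).re * ‖Complex.sqrt ((t : ℂ) ^ m + B)‖) :
    IsWKBPath I y y₁ (fun _ ↦ 1) (fun t ↦ (K : ℂ) ^ 2 * ((t : ℂ) ^ m + A + ρ t))
      (rayRoot m K B) (deriv (rayRoot m K B)) μ where
  hasDerivAt t ht := by simpa using h.hasDerivAt t (hI ht)
  hasDerivAt_deriv t ht := by simpa using h.hasDerivAt_deriv t (hI ht)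
  hasDerivAt_root t ht := (hasDerivAt_rayRoot (hslit t ht)).differentiableAt.hasDerivAt
  root_ne_zero t ht := by
    rw [← pow_ne_zero_iff two_ne_zero, rayRoot_sq]
    exact mul_ne_zero (pow_ne_zero 2 (by exact_mod_cast hK.ne')) (slitPlane_ne_zero (hslit t ht))
  re_nonneg t _ := by
    rw [mul_one, re_rayRoot]
    exact mul_nonneg hK.le (re_complexSqrt_nonneg _)
  defect_le t ht := by
    rw [mul_one, re_rayRoot, norm_rayRoot hK.le, norm_deriv_rayRoot hK.le (hI ht) (hslit t ht),
      rayRoot_sq, ← mul_sub, norm_one, one_mul, norm_mul, norm_pow, Complex.norm_real,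
      Real.norm_of_nonneg hK.le, show (t : ℂ) ^ m + A + ρ t - (t ^ m + B) = A + ρ t - B by ring]
    linarith [mul_le_mul_of_nonneg_left (hdefect t ht) hK.le]
  le_half := hμ

theorem isRecessive (h : IsRaySolution m K ν A y y₁ ρ) (hm : m ≠ 0) (hK : 0 ≤ K) (hν : ν ≤ 1)
    (hA : ‖A‖ ≤ 2) {B : ℂ} (hB : ‖B‖ ≤ 2) {s₀ μ : ℝ}
    (hpath : IsWKBPath (Ici s₀) y y₁ (fun _ ↦ 1) (fun t ↦ (K : ℂ) ^ 2 * ((t : ℂ) ^ m + A + ρ t))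
      (rayRoot m K B) (deriv (rayRoot m K B)) μ) :
    ∀ t ∈ Ici s₀, IsRecessive (rayRoot m K B t) (y t) (y₁ t) := by
  refine hpath.isRecessive_of_tendsto_zero (C := 4) (t₀ := 16) (by norm_num) (fun t ht ↦ ?_)
    h.tendsto_zero
  have ht₀ : 0 ≤ t := by linarith
  have hnorm := norm_ray_add_le m B ht₀
  have htail := neg_le_of_abs_le ((Complex.abs_re_le_norm _).trans
    (h.norm_add_perturbation_le hm hν hA ht))
  have hone : 1 ≤ t ^ m := one_le_pow₀ (by linarith)
  rw [norm_rayRoot_sq hK, ← ofReal_pow K, re_ofReal_mul, add_assoc, add_re, ← ofReal_pow t m,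
    ofReal_re, ofReal_pow, mul_left_comm]
  gcongr
  linarith

theorem isRecessive_mul_sqrt_pow (h : IsRaySolution m K ν A y y₁ ρ) (hm : m ≠ 0) (hK : 4 * m ≤ K)
    (hν : ν ≤ 1) (hA : ‖A‖ ≤ 2) {L : ℝ} (hL : 16 ≤ L) :
    IsRecessive ((K * √(L ^ m) : ℝ) : ℂ) (y L) (y₁ L) := by
  have hm' : (1 : ℝ) ≤ m := by exact_mod_cast Nat.one_le_iff_ne_zero.2 hm
  have hK₀ : 0 ≤ K := by linarith
  have hpath := h.isWKBPath (I := Ici 16) (B := 0) (Ici_subset_Ici.2 (by norm_num)) (by linarith)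
    le_rfl (fun t ht ↦ ?_) fun t ht ↦ ?_
  · rw [← rayRoot_zero (by linarith)]
    exact h.isRecessive hm (by linarith) hν hA (by simp) hpath L hL
  · rw [add_zero, ← ofReal_pow, ofReal_mem_slitPlane]
    exact pow_pos (by linarith [mem_Ici.1 ht]) m
  · have ht' : 16 ≤ t := ht
    have hsqrt : 1 ≤ √(t ^ m) := Real.one_le_sqrt.2 (one_le_pow₀ (by linarith))
    have hpow : 16 * t ^ (m - 1) ≤ t ^ m := by rw [← mul_pow_sub_one hm t]; gcongr
    have : 0 ≤ t := by linarith
    have hderiv : m * t ^ (m - 1) / (2 * √(t ^ m)) ≤ K / 128 * t ^ m :=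
      calc m * t ^ (m - 1) / (2 * √(t ^ m)) ≤ K / 4 * t ^ (m - 1) / (2 * 1) := by
            gcongr; linarith
        _ = K / 128 * (16 * t ^ (m - 1)) := by ring
        _ ≤ K / 128 * t ^ m := by gcongr
    have htail := mul_le_mul_of_nonneg_left (h.norm_add_perturbation_le hm hν hA ht') hK₀
    have hTsq : √(t ^ m) * √(t ^ m) = t ^ m := Real.mul_self_sqrt (by positivity)
    have hKT : 0 ≤ K * t ^ m := by positivity
    rw [add_zero, sub_zero, ← ofReal_pow, Complex.sqrt_of_nonneg
      (by exact_mod_cast (by positivity : 0 ≤ t ^ m)), ofReal_re, ofReal_re, Complex.norm_real,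
      Real.norm_of_nonneg (Real.sqrt_nonneg _), mul_assoc, hTsq]
    linarith

theorem isWKBPath_of_mul_le (h : IsRaySolution m K ν A y y₁ ρ) (hK : 0 < K) {κ μ : ℝ} (hκ : 0 < κ)
    (hclean : ∀ t ∈ Ici (0 : ℝ), κ * (1 + t ^ m) ≤ (Complex.sqrt ((t : ℂ) ^ m + A)).re ^ 2)
    (hm : m ≠ 0) (hμ₀ : 0 ≤ μ) (hμ : μ ≤ 1 / 2) (hμK : m / (2 * √κ) + 2 * K * ν ≤ μ * κ * K) :
    IsWKBPath (Ici 0) y y₁ (fun _ ↦ 1) (fun t ↦ (K : ℂ) ^ 2 * ((t : ℂ) ^ m + A + ρ t))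
      (rayRoot m K A) (deriv (rayRoot m K A)) μ := by
  refine h.isWKBPath subset_rfl hK hμ (fun t (ht : 0 ≤ t) ↦ ?_) fun t (ht : 0 ≤ t) ↦ ?_
  · refine mem_slitPlane_of_norm_add_re_pos ?_
    have hpos : 0 < (Complex.sqrt ((t : ℂ) ^ m + A)).re ^ 2 :=
      lt_of_lt_of_le (by positivity) (hclean t ht)
    rw [re_complexSqrt_sq] at hpos
    linarith
  set T := t ^ m
  set R := (Complex.sqrt ((t : ℂ) ^ m + A)).re
  set S := ‖Complex.sqrt ((t : ℂ) ^ m + A)‖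
  have hR : 0 ≤ R := re_complexSqrt_nonneg _
  have hRS : R ≤ S := Complex.re_le_norm _
  have hκR : κ * (1 + T) ≤ R ^ 2 := hclean t ht
  have hT : 0 ≤ T := by positivity
  have hκS : √κ ≤ S := (Real.sqrt_le_left hR |>.2 (by nlinarith)).trans hRS
  have hpow : t ^ (m - 1) ≤ 1 + T := by
    rcases le_total t 1 with h₁ | h₁
    · linarith [pow_le_one₀ (n := m - 1) ht h₁]
    · linarith [pow_le_pow_right₀ h₁ (Nat.sub_le m 1)]
  have hρ : ‖ρ t‖ ≤ ν * (2 * (1 + T)) := (h.norm_perturbation_le t ht).trans <|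
    mul_le_mul_of_nonneg_left (by linarith) h.bound_nonneg
  rw [add_sub_cancel_left]
  calc m * t ^ (m - 1) / (2 * S) + K * ‖ρ t‖
      ≤ m * (1 + T) / (2 * √κ) + K * (ν * (2 * (1 + T))) := by gcongr
    _ = (m / (2 * √κ) + 2 * K * ν) * (1 + T) := by ring
    _ ≤ μ * κ * K * (1 + T) := by gcongr
    _ = μ * K * (κ * (1 + T)) := by ring
    _ ≤ μ * K * R ^ 2 := by gcongr
    _ = μ * K * R * R := by ring
    _ ≤ μ * K * R * S := by gcongr

theorem sqrt_mul_norm_le (h : IsRaySolution m K ν A y y₁ ρ) (hK : 0 < K) {κ μ : ℝ} (hκ : 0 < κ)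
    (hclean : ∀ t ∈ Ici (0 : ℝ), κ * (1 + t ^ m) ≤ (Complex.sqrt ((t : ℂ) ^ m + A)).re ^ 2)
    (hm : m ≠ 0) (hν : ν ≤ 1) (hA : ‖A‖ ≤ 2) (hμ₀ : 0 ≤ μ) (hμ : μ ≤ 1 / 2)
    (hμK : m / (2 * √κ) + 2 * K * ν ≤ μ * κ * K) {L : ℝ} (hL : 0 ≤ L) :
    y 0 ≠ 0 ∧ √κ * ‖y L‖ ≤ 4 * ‖y 0‖ * Real.exp (-(1 - μ) * (K * rayAction m A L)) := by
  have hpath := h.isWKBPath_of_mul_le hK hκ hclean hm hμ₀ hμ hμK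
  have hrec := h.isRecessive hm hK.le hν hA hA hpath
  refine ⟨(hrec 0 self_mem_Ici).ne_zero (h.deriv_ne_zero 0 self_mem_Ici), ?_⟩
  have hdecay := hpath.decaying_le (convex_Ici 0) (Ψ := fun t ↦ K * rayAction m A t)
    (fun t _ ↦ by
      rw [mul_one, re_rayRoot]
      exact (hasDerivAt_rayAction m A t).const_mul K) self_mem_Ici (mem_Ici.2 hL) hL hrec
  simp only [rayAction_zero, mul_zero, sub_zero] at hdecay
  have hS₀ : ‖rayRoot m K A 0‖ ≤ K * 2 := by
    rw [norm_rayRoot hK.le]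
    have hA₀ : ‖((0 : ℝ) : ℂ) ^ m + A‖ ≤ 2 := by simpa [hm] using hA
    gcongr
    exact le_of_sq_le_sq (by rw [norm_complexSqrt_sq]; linarith) zero_le_two
  have hSL : K * √κ ≤ ‖rayRoot m K A L‖ := by
    rw [norm_rayRoot hK.le]
    gcongr
    refine (Real.sqrt_le_left (re_complexSqrt_nonneg _) |>.2 ?_).trans (Complex.re_le_norm _)
    nlinarith [hclean L hL, pow_nonneg hL m]
  set X := Real.exp (-(1 - μ) * (K * rayAction m A L))
  refine le_of_mul_le_mul_left ?_ hK
  calc K * (√κ * ‖y L‖) = K * √κ * ‖y L‖ := (mul_assoc _ _ _).symm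
    _ ≤ ‖rayRoot m K A L * y L‖ := by rw [norm_mul]; gcongr
    _ ≤ 2 / 3 * ‖rayRoot m K A L * y L - y₁ L‖ := (hrec L hL).norm_mul_le
    _ ≤ 2 / 3 * (3 * ‖rayRoot m K A 0 * y 0‖ * X) := by
        gcongr
        exact hdecay.trans (by gcongr; exact (hrec 0 self_mem_Ici).norm_sub_le)
    _ ≤ 2 / 3 * (3 * (K * 2 * ‖y 0‖) * X) := by rw [norm_mul]; gcongr
    _ = K * (4 * ‖y 0‖ * X) := by ring

theorem eventually_exp_mul_norm_le (hm : m ≠ 0) {c ε L : ℝ} (hc : 0 < c) (hε : 0 < ε)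
    (hL : 0 ≤ L) :
    ∀ᶠ p in semiclassical, ∀ A y y₁ ρ, IsRaySolution m p.1 p.2 A y y₁ ρ → ‖A‖ ≤ 2 →
      c ≤ ‖A‖ + A.re → y 0 ≠ 0 ∧ Real.exp (p.1 * (rayAction m A L - ε)) * ‖y L‖ ≤ ‖y 0‖ := by
  set κ := c / 10
  have hκ : 0 < κ := by positivity
  set M := L * (L ^ m + 2) + 1
  have hM : 0 < M := by positivity
  set μ := min (1 / 2) (ε / (2 * M))
  have hμ : 0 < μ := lt_min (by norm_num) (by positivity)
  filter_upwards [eventually_semiclassical_ge (max 1 (m / (2 * √κ) / (μ * κ / 2))),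
    eventually_semiclassical_le (lt_min one_pos (by positivity : 0 < μ * κ / 4)),
    eventually_semiclassical_le_exp (4 / √κ) (half_pos hε)]
  rintro ⟨K, ν⟩ hK ⟨-, hν⟩ hexp A y y₁ ρ h hA hcA
  simp only at hK hν hexp h ⊢
  have hK₀ : 0 < K := one_pos.trans_le ((le_max_left _ _).trans hK)
  have hμK : m / (2 * √κ) + 2 * K * ν ≤ μ * κ * K := by
    have h₁ := (div_le_iff₀ (by positivity)).1 ((le_max_right _ _).trans hK)
    have h₂ := mul_le_mul_of_nonneg_left (hν.trans (min_le_right _ _)) hK₀.le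
    linarith
  have hclean : ∀ t ∈ Ici (0 : ℝ), κ * (1 + t ^ m) ≤ (Complex.sqrt ((t : ℂ) ^ m + A)).re ^ 2 :=
    fun t ht ↦ by
      simpa using mul_one_add_le_re_complexSqrt_sq hc.le hcA hA (pow_nonneg ht m)
  obtain ⟨hy₀, hyL⟩ := h.sqrt_mul_norm_le hK₀ hκ hclean hm (hν.trans (min_le_left _ _)) hA hμ.le
    (min_le_left _ _) hμK hL
  refine ⟨hy₀, ?_⟩
  have hμΦ : μ * rayAction m A L ≤ ε / 2 :=
    calc μ * rayAction m A L ≤ ε / (2 * M) * M :=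
          mul_le_mul (min_le_right _ _) ((rayAction_le hA hL).trans (by simp [M]))
            (rayAction_nonneg m A hL) (by positivity)
      _ = ε / 2 := by field_simp
  have hyL' : ‖y L‖ ≤ 4 / √κ * (‖y 0‖ * Real.exp (-(1 - μ) * (K * rayAction m A L))) := by
    rw [div_mul_eq_mul_div, le_div_iff₀ (by positivity)]
    linarith
  have hdecay : ‖y L‖ ≤ Real.exp (-(K * (rayAction m A L - ε))) * ‖y 0‖ :=
    le_exp_mul_of_le_mul_mul_exp hexp (norm_nonneg _) hyL' <| by
      linarith [mul_le_mul_of_nonneg_left hμΦ hK₀.le]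
  rwa [Real.exp_neg, ← div_eq_inv_mul, le_div_iff₀ (Real.exp_pos _), mul_comm] at hdecay

theorem norm_sub_rayRoot_sq_le (h : IsRaySolution m K ν A y y₁ ρ) (hK : 0 ≤ K) {B : ℂ}
    {δ t : ℝ} (ht : 0 ≤ t) (hδ : 0 ≤ δ) (hBA : ‖B - A‖ ≤ δ ^ 2)
    (hνδ : ν * (1 + t ^ (m - 1)) ≤ δ ^ 2) (hδS : δ ≤ ‖Complex.sqrt ((t : ℂ) ^ m + B)‖) :
    ‖(K : ℂ) ^ 2 * ((t : ℂ) ^ m + A + ρ t) - rayRoot m K B t ^ 2‖ ≤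
      2 * (K * δ) * ‖rayRoot m K B t‖ := by
  have hpert : ‖ρ t - (B - A)‖ ≤ δ ^ 2 + δ ^ 2 := (norm_sub_le _ _).trans <|
    add_le_add ((h.norm_perturbation_le t ht).trans hνδ) hBA
  rw [rayRoot_sq, ← mul_sub, norm_rayRoot hK, norm_mul, norm_pow, Complex.norm_real,
    Real.norm_of_nonneg hK, show (t : ℂ) ^ m + A + ρ t - (t ^ m + B) = ρ t - (B - A) by ring]
  calc K ^ 2 * ‖ρ t - (B - A)‖ ≤ K ^ 2 * (δ ^ 2 + δ ^ 2) := by gcongr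
    _ = 2 * (K * δ) * (K * δ) := by ring
    _ ≤ _ := by gcongr

/- Near a turning point the root degenerates, so `A` is first moved to a `B` at distance `δ²` for
which the root stays of size at least `δ`. -/
theorem exists_energy_mul_exp_le (h : IsRaySolution m K ν A y y₁ ρ) (hK : 0 < K)
    {L δ : ℝ} (hL : 0 ≤ L) (hδ : 0 < δ) (hKδ : m * L ^ (m - 1) ≤ 2 * K * δ ^ 3)
    (hνδ : ν * (1 + L ^ (m - 1)) ≤ δ ^ 2) :
    ∃ B, ‖B - A‖ = δ ^ 2 ∧ δ ≤ ‖Complex.sqrt (((0 : ℝ) : ℂ) ^ m + B)‖ ∧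
      (‖rayRoot m K B 0 * y 0‖ ^ 2 + ‖y₁ 0‖ ^ 2) *
        Real.exp (-2 * (K * rayAction m B L + 2 * (K * δ) * L)) ≤
          ‖rayRoot m K B L * y L‖ ^ 2 + ‖y₁ L‖ ^ 2 := by
  obtain ⟨B, hBA, hB⟩ := exists_norm_sub_eq_le_abs_im A (sq_nonneg δ)
  have him : ∀ t : ℝ, ((t : ℂ) ^ m + B).im = B.im := fun t ↦ by simp [← ofReal_pow]
  have hslit : ∀ t : ℝ, (t : ℂ) ^ m + B ∈ slitPlane := fun t ↦ by
    rw [mem_slitPlane_iff, him]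
    exact Or.inr (abs_pos.1 (lt_of_lt_of_le (by positivity) hB))
  have hδS : ∀ t : ℝ, δ ≤ ‖Complex.sqrt ((t : ℂ) ^ m + B)‖ := fun t ↦ by
    refine le_of_sq_le_sq ?_ (norm_nonneg _)
    rw [norm_complexSqrt_sq]
    exact hB.trans (him t ▸ Complex.abs_im_le_norm _)
  refine ⟨B, hBA, hδS 0, ?_⟩
  have henergy := (h.mono (Icc_subset_Ici_self : Icc 0 L ⊆ Ici 0)).energy_mul_exp_le
    (convex_Icc 0 L) (Ψ := fun t ↦ K * rayAction m B t + 2 * (K * δ) * t) (by positivity)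
    (fun t _ ↦ (hasDerivAt_rayRoot (hslit t)).differentiableAt.hasDerivAt)
    (fun t ht ↦ norm_deriv_rayRoot_le hK.le hδ ht.1 ht.2 hKδ (hslit t) (hδS t))
    (fun t ht ↦ h.norm_sub_rayRoot_sq_le hK.le ht.1 hδ.le hBA.le
      (hνδ.trans' (mul_le_mul_of_nonneg_left (by gcongr; exacts [ht.1, ht.2]) h.bound_nonneg))
      (hδS t))
    (fun t _ ↦ re_rayRoot ▸ mul_nonneg hK.le (re_complexSqrt_nonneg _))
    (fun t _ ↦ by
      rw [re_rayRoot]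
      exact (((hasDerivAt_rayAction m B t).const_mul K).add
        ((hasDerivAt_id t).const_mul (2 * (K * δ)))).congr_deriv (by ring))
    (left_mem_Icc.2 hL) (right_mem_Icc.2 hL) hL
  simpa using henergy

theorem sq_mul_norm_sq_le (h : IsRaySolution m K ν A y y₁ ρ) (hK : 0 < K) (hA : ‖A‖ ≤ 2)
    {L δ : ℝ} (hL : 0 ≤ L) (hδ : 0 < δ) (hδ₁ : δ ≤ 1) (hKδ : m * L ^ (m - 1) ≤ 2 * K * δ ^ 3)
    (hνδ : ν * (1 + L ^ (m - 1)) ≤ δ ^ 2) (hend : ‖y₁ L‖ ≤ 2 * (K * √(L ^ m) * ‖y L‖)) :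
    δ ^ 2 * ‖y 0‖ ^ 2 ≤
      (5 * L ^ m + 3) * ‖y L‖ ^ 2 * Real.exp (2 * (K * (rayAction m A L + 3 * L * δ))) := by
  obtain ⟨B, hBA, hδ₀, henergy⟩ := h.exists_energy_mul_exp_le hK hL hδ hKδ hνδ
  have hB : ‖(L : ℂ) ^ m + B‖ ≤ L ^ m + 3 := by
    refine (norm_ray_add_le m B hL).trans ?_
    have := norm_le_norm_add_norm_sub A B
    rw [norm_sub_rev, hBA] at this
    nlinarith
  have hend' : ‖y₁ L‖ ^ 2 ≤ K ^ 2 * (4 * L ^ m) * ‖y L‖ ^ 2 :=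
    calc ‖y₁ L‖ ^ 2 ≤ (2 * (K * √(L ^ m) * ‖y L‖)) ^ 2 := by gcongr
      _ = K ^ 2 * (4 * √(L ^ m) ^ 2) * ‖y L‖ ^ 2 := by ring
      _ = _ := by rw [Real.sq_sqrt (pow_nonneg hL m)]
  have hΦ : rayAction m B L ≤ rayAction m A L + L * δ := by
    simpa [hBA, Real.sqrt_sq hδ.le] using rayAction_le_add m A B hL
  set X := Real.exp (-2 * (K * rayAction m B L + 2 * (K * δ) * L))
  have hX : 1 ≤ X * Real.exp (2 * (K * (rayAction m A L + 3 * L * δ))) := by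
    rw [← Real.exp_add]
    exact Real.one_le_exp (by linarith [mul_le_mul_of_nonneg_left hΦ hK.le])
  refine le_of_mul_le_mul_left ?_ (pow_pos hK 2)
  set Y := Real.exp (2 * (K * (rayAction m A L + 3 * L * δ)))
  calc K ^ 2 * (δ ^ 2 * ‖y 0‖ ^ 2) = (K * δ * ‖y 0‖) ^ 2 * 1 := by ring
    _ ≤ (‖rayRoot m K B 0 * y 0‖ ^ 2 + ‖y₁ 0‖ ^ 2) * (X * Y) := by
        gcongr
        rw [norm_mul, norm_rayRoot hK.le]
        refine le_add_of_le_of_nonneg ?_ (sq_nonneg _)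
        gcongr
    _ = (‖rayRoot m K B 0 * y 0‖ ^ 2 + ‖y₁ 0‖ ^ 2) * X * Y := by ring
    _ ≤ (‖rayRoot m K B L * y L‖ ^ 2 + ‖y₁ L‖ ^ 2) * Y := by gcongr
    _ ≤ (K ^ 2 * (L ^ m + 3) * ‖y L‖ ^ 2 + K ^ 2 * (4 * L ^ m) * ‖y L‖ ^ 2) * Y := by
        rw [norm_mul, mul_pow, norm_rayRoot_sq hK.le]
        gcongr
    _ = K ^ 2 * ((5 * L ^ m + 3) * ‖y L‖ ^ 2 * Y) := by ring

theorem eventually_norm_le_exp_mul {m : ℕ} {ε L : ℝ} (hε : 0 < ε) (hL : 0 < L) :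
    ∀ᶠ p in semiclassical, ∀ A y y₁ ρ, IsRaySolution m p.1 p.2 A y y₁ ρ → ‖A‖ ≤ 2 →
      ‖y₁ L‖ ≤ 2 * (p.1 * √(L ^ m) * ‖y L‖) →
        ‖y 0‖ ≤ Real.exp (p.1 * (rayAction m A L + ε)) * ‖y L‖ := by
  set δ := min 1 (ε / (6 * L))
  have hδ : 0 < δ := lt_min one_pos (by positivity)
  have hδε : 3 * L * δ ≤ ε / 2 :=
    calc 3 * L * δ ≤ 3 * L * (ε / (6 * L)) := by gcongr; exact min_le_right _ _
      _ = ε / 2 := by field_simp; norm_num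
  filter_upwards [eventually_semiclassical_ge (max 1 (m * L ^ (m - 1) / (2 * δ ^ 3))),
    eventually_semiclassical_le (by positivity : 0 < δ ^ 2 / (1 + L ^ (m - 1))),
    eventually_semiclassical_le_exp ((5 * L ^ m + 3) / δ ^ 2) hε]
  rintro ⟨K, ν⟩ hK ⟨-, hν⟩ hexp A y y₁ ρ h hA hend
  simp only at hK hν hexp h hend ⊢
  have hK₀ : 0 < K := one_pos.trans_le ((le_max_left _ _).trans hK)
  have hKδ := (div_le_iff₀ (by positivity)).1 ((le_max_right _ _).trans hK)
  have hsq := h.sq_mul_norm_sq_le hK₀ hA hL.le hδ (min_le_left _ _) (by linarith)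
    ((le_div_iff₀ (by positivity)).1 hν) hend
  rw [div_le_iff₀ (by positivity)] at hexp
  refine le_of_sq_le_sq (le_of_mul_le_mul_left (hsq.trans ?_) (pow_pos hδ 2)) (by positivity)
  calc (5 * L ^ m + 3) * ‖y L‖ ^ 2 * Real.exp (2 * (K * (rayAction m A L + 3 * L * δ)))
      ≤ Real.exp (K * ε) * δ ^ 2 * ‖y L‖ ^ 2 *
          Real.exp (2 * (K * (rayAction m A L + ε / 2))) := by gcongr
    _ = δ ^ 2 * (Real.exp (K * (rayAction m A L + ε)) * ‖y L‖) ^ 2 := by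
        rw [mul_pow, ← Real.exp_nat_mul, mul_right_comm, mul_right_comm _ (δ ^ 2),
          ← Real.exp_add]
        push_cast
        ring_nf

end IsRaySolution

/-! ### From the ray to the real axis -/

/-- The exponent `2 / (m + 2)` of the inverse of the Liouville map `x ↦ x^((m+2)/2)`. -/
noncomputable def liouvilleExp (m : ℕ) : ℝ := 2 / ((m : ℝ) + 2)

/-- The angle `2π / (m + 2)` between the real axis and the ray on which solutions decay. -/
noncomputable def sectorAngle (m : ℕ) : ℝ := π * liouvilleExp m

/-- The unit vector `ω = exp (2πi / (m + 2))` along the ray on which solutions decay. -/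
noncomputable def sectorUnit (m : ℕ) : ℂ := Complex.exp (sectorAngle m * I)

section SectorUnit

variable {m : ℕ}

theorem liouvilleExp_pos : 0 < liouvilleExp m := by unfold liouvilleExp; positivity

theorem liouvilleExp_le_one : liouvilleExp m ≤ 1 := by
  rw [liouvilleExp, div_le_one (by positivity)]
  linarith [(Nat.cast_nonneg m : (0 : ℝ) ≤ m)]

theorem mul_liouvilleExp : m * liouvilleExp m = 2 * (1 - liouvilleExp m) := by
  unfold liouvilleExp
  field_simp
  ring

@[simp]
theorem norm_sectorUnit : ‖sectorUnit m‖ = 1 := Complex.norm_exp_ofReal_mul_I _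

theorem sectorUnit_ne_zero : sectorUnit m ≠ 0 := Complex.exp_ne_zero _

theorem sectorUnit_pow_mul_sq : sectorUnit m ^ m * sectorUnit m ^ 2 = 1 := by
  rw [sectorUnit, sectorAngle, ← pow_add, ← Complex.exp_nat_mul, ← Complex.exp_two_pi_mul_I]
  have h : (m : ℂ) * liouvilleExp m = 2 * (1 - liouvilleExp m) := by
    exact_mod_cast mul_liouvilleExp (m := m)
  congr 1
  push_cast
  linear_combination π * I * h

theorem sectorUnit_sq : sectorUnit m ^ 2 = Complex.exp ((2 * sectorAngle m : ℝ) * I) := by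
  rw [sectorUnit, ← Complex.exp_nat_mul]
  push_cast
  ring_nf

theorem sectorAngle_pos : 0 < sectorAngle m := mul_pos Real.pi_pos liouvilleExp_pos

theorem two_mul_sectorAngle_lt_pi (hm : 3 ≤ m) : 2 * sectorAngle m < π := by
  have hm' : (3 : ℝ) ≤ m := by exact_mod_cast hm
  have : 2 * liouvilleExp m < 1 := by
    rw [liouvilleExp, mul_div_assoc', div_lt_one (by positivity)]
    linarith
  rw [sectorAngle, mul_left_comm]
  exact mul_lt_of_lt_one_right Real.pi_pos this

theorem sin_two_mul_sectorAngle_pos (hm : 3 ≤ m) : 0 < Real.sin (2 * sectorAngle m) :=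
  Real.sin_pos_of_pos_of_lt_pi (mul_pos two_pos sectorAngle_pos) (two_mul_sectorAngle_lt_pi hm)

end SectorUnit

/-- The power `w^a` along the arc `w(t) = t + i (1 - t²)`, `t ∈ [-1, 1]`, from `-1` to `1` in the
upper half plane. It is written as `i^a (w/i)^a` since `w/i` avoids the cut of the logarithm. -/
noncomputable def arcPow (a t : ℝ) : ℂ :=
  Complex.exp ((π * a / 2 : ℝ) * I) * ((1 - t ^ 2 : ℝ) - t * I) ^ (a : ℂ)

section Arc

variable {a b t : ℝ}

theorem arc_mem_slitPlane (t : ℝ) : ((1 - t ^ 2 : ℝ) - t * I : ℂ) ∈ slitPlane := by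
  rw [mem_slitPlane_iff]
  rcases eq_or_ne t 0 with rfl | ht
  · simp
  · right; simpa [← ofReal_pow] using ht

theorem norm_arc_mem_Icc (ht : t ∈ Icc (-1) 1) :
    ‖((1 - t ^ 2 : ℝ) - t * I : ℂ)‖ ∈ Icc (1 / 2) 1 := by
  have hsq : ‖((1 - t ^ 2 : ℝ) - t * I : ℂ)‖ ^ 2 = (1 - t ^ 2) ^ 2 + t ^ 2 := by
    rw [Complex.sq_norm, normSq_apply]
    simp [-ofReal_pow]
    ring
  have ht' : t ^ 2 ≤ 1 := by nlinarith [ht.1, ht.2]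
  constructor
  · refine le_of_sq_le_sq ?_ (norm_nonneg _)
    nlinarith [sq_nonneg (2 * t ^ 2 - 1)]
  · refine le_of_sq_le_sq ?_ zero_le_one
    nlinarith [sq_nonneg t]

theorem norm_arcPow : ‖arcPow a t‖ = ‖((1 - t ^ 2 : ℝ) - t * I : ℂ)‖ ^ a := by
  rw [arcPow, norm_mul, Complex.norm_exp_ofReal_mul_I, one_mul, Complex.norm_cpow_real]

theorem half_le_norm_arcPow (ha : a ≤ 1) (ht : t ∈ Icc (-1) 1) : 1 / 2 ≤ ‖arcPow a t‖ := by
  obtain ⟨hle, hle_one⟩ := norm_arc_mem_Icc ht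
  rw [norm_arcPow]
  refine hle.trans ?_
  conv_lhs => rw [← Real.rpow_one ‖_‖]
  exact Real.rpow_le_rpow_of_exponent_ge (by linarith) hle_one ha

theorem norm_arcPow_le_one (ha : 0 ≤ a) (ht : t ∈ Icc (-1) 1) : ‖arcPow a t‖ ≤ 1 := by
  rw [norm_arcPow]
  exact Real.rpow_le_one (norm_nonneg _) (norm_arc_mem_Icc ht).2 ha

theorem arcPow_mul : arcPow a t * arcPow b t = arcPow (a + b) t := by
  have hexp : ((π * (a + b) / 2 : ℝ) : ℂ) * I = (π * a / 2 : ℝ) * I + (π * b / 2 : ℝ) * I := by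
    push_cast
    ring
  rw [arcPow, arcPow, arcPow, mul_mul_mul_comm, ← Complex.exp_add, ← hexp, ofReal_add a b,
    Complex.cpow_add _ _ (slitPlane_ne_zero (arc_mem_slitPlane t))]

theorem arcPow_pow (n : ℕ) : arcPow a t ^ n = arcPow (n * a) t := by
  rw [arcPow, arcPow, mul_pow, ← Complex.exp_nat_mul, ← Complex.cpow_nat_mul]
  push_cast
  ring_nf

theorem arcPow_zero : arcPow 0 t = 1 := by simp [arcPow]

theorem arcPow_at_one : arcPow a 1 = 1 := by
  rw [arcPow, show ((1 - 1 ^ 2 : ℝ) - (1 : ℝ) * I : ℂ) = -I by simp,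
    Complex.cpow_def_of_ne_zero (neg_ne_zero.2 I_ne_zero), Complex.log_neg_I, ← Complex.exp_add,
    Complex.exp_eq_one_iff]
  exact ⟨0, by push_cast; ring⟩

theorem arcPow_at_neg_one : arcPow a (-1) = Complex.exp ((π * a : ℝ) * I) := by
  rw [arcPow, show ((1 - (-1) ^ 2 : ℝ) - (-1 : ℝ) * I : ℂ) = I by simp,
    Complex.cpow_def_of_ne_zero I_ne_zero, Complex.log_I, ← Complex.exp_add]
  push_cast
  ring_nf

theorem hasDerivAt_arcPow (a t : ℝ) :
    HasDerivAt (arcPow a) (a * arcPow (a - 1) t * (1 - 2 * t * I)) t := by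
  have harc : HasDerivAt (fun t : ℝ ↦ ((1 - t ^ 2 : ℝ) - t * I : ℂ)) (-2 * t - I) t :=
    ((((hasDerivAt_pow 2 t).const_sub 1).ofReal_comp).sub
      ((hasDerivAt_id (t : ℂ)).comp_ofReal.mul_const I)).congr_deriv (by simp)
  have hexp : Complex.exp ((π * a / 2 : ℝ) * I) = Complex.exp ((π * (a - 1) / 2 : ℝ) * I) * I := by
    nth_rw 3 [← Complex.exp_pi_div_two_mul_I]
    rw [← Complex.exp_add]
    push_cast
    ring_nf
  have hcpow := ((hasDerivAt_id _).cpow_const (c := a) (arc_mem_slitPlane t)).comp_of_eq t harc rfl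
  refine (hcpow.const_mul (Complex.exp ((π * a / 2 : ℝ) * I))).congr_deriv ?_
  rw [hexp, arcPow, ofReal_sub a, ofReal_one, id]
  linear_combination (-(a : ℂ) * Complex.exp ((π * (a - 1) / 2 : ℝ) * I) *
    ((1 - t ^ 2 : ℝ) - t * I : ℂ) ^ ((a : ℂ) - 1)) * I_sq

theorem norm_deriv_arcPow_le (ha : 0 ≤ a) (ha' : a ≤ 1) (ht : t ∈ Icc (-1) 1) :
    ‖deriv (arcPow a) t‖ ≤ 6 := by
  obtain ⟨hle, hle_one⟩ := norm_arc_mem_Icc ht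
  have hpow : ‖arcPow (a - 1) t‖ ≤ 2 :=
    calc ‖arcPow (a - 1) t‖ = ‖((1 - t ^ 2 : ℝ) - t * I : ℂ)‖ ^ (a - 1) := norm_arcPow
      _ ≤ ‖((1 - t ^ 2 : ℝ) - t * I : ℂ)‖ ^ (-1 : ℝ) :=
          Real.rpow_le_rpow_of_exponent_ge (by linarith) hle_one (by linarith)
      _ ≤ (1 / 2)⁻¹ := by rw [Real.rpow_neg_one]; gcongr
      _ = 2 := by norm_num
  have hspeed : ‖(1 - 2 * t * I : ℂ)‖ ≤ 3 := by
    refine (norm_sub_le _ _).trans ?_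
    have := abs_le.2 ht
    simp only [norm_one, norm_mul, Complex.norm_ofNat, norm_real, Real.norm_eq_abs, norm_I]
    linarith
  rw [(hasDerivAt_arcPow a t).deriv, norm_mul, norm_mul, norm_real, Real.norm_of_nonneg ha]
  calc a * ‖arcPow (a - 1) t‖ * ‖(1 - 2 * t * I : ℂ)‖ ≤ 1 * 2 * 3 := by gcongr
    _ = 6 := by norm_num

end Arc

/-- The path from `ω L` to `L` whose image under the Liouville map is the arc of `arcPow`. -/
noncomputable def arcPath (m : ℕ) (L t : ℝ) : ℂ := L * arcPow (liouvilleExp m) t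

/-- The root `K x^(m/2)` of the leading coefficient `K² x^m` along `arcPath`. -/
noncomputable def arcRoot (m : ℕ) (K L t : ℝ) : ℂ :=
  (K * √(L ^ m) : ℝ) * arcPow (1 - liouvilleExp m) t

/-- The increment of the real part of the WKB phase `∫ x^(m/2) dx` along `arcPath`. -/
noncomputable def arcAction (m : ℕ) (L : ℝ) : ℝ := 2 * (liouvilleExp m * (L * √(L ^ m)))

section ArcPath

variable {m : ℕ} {K L t : ℝ}

theorem arcPath_neg_one : arcPath m L (-1) = sectorUnit m * L := by
  rw [arcPath, arcPow_at_neg_one, sectorUnit, sectorAngle, mul_comm]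

theorem arcPath_one : arcPath m L 1 = L := by rw [arcPath, arcPow_at_one, mul_one]

theorem arcRoot_one : arcRoot m K L 1 = (K * √(L ^ m) : ℝ) := by
  rw [arcRoot, arcPow_at_one, mul_one]

theorem neg_sectorUnit_mul_arcRoot_neg_one :
    -(sectorUnit m * arcRoot m K L (-1)) = (K * √(L ^ m) : ℝ) := by
  rw [arcRoot, arcPow_at_neg_one, sectorUnit, sectorAngle, mul_left_comm, ← Complex.exp_add,
    show ((π * liouvilleExp m : ℝ) : ℂ) * I + (π * (1 - liouvilleExp m) : ℝ) * I = π * I by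
      push_cast; ring, Complex.exp_pi_mul_I, mul_neg_one, neg_neg]

theorem norm_arcRoot_one (hK : 0 ≤ K) : ‖arcRoot m K L 1‖ = K * √(L ^ m) := by
  rw [arcRoot_one, norm_real, Real.norm_of_nonneg (by positivity)]

theorem norm_arcRoot_neg_one (hK : 0 ≤ K) : ‖arcRoot m K L (-1)‖ = K * √(L ^ m) := by
  have := congrArg norm (neg_sectorUnit_mul_arcRoot_neg_one (m := m) (K := K) (L := L))
  rwa [norm_neg, norm_mul, norm_sectorUnit, one_mul, norm_real,
    Real.norm_of_nonneg (by positivity)] at this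

theorem arcRoot_sq (hL : 0 ≤ L) : arcRoot m K L t ^ 2 = (K : ℂ) ^ 2 * arcPath m L t ^ m := by
  have hsq : (√(L ^ m) : ℂ) ^ 2 = (L : ℂ) ^ m := by
    exact_mod_cast Real.sq_sqrt (pow_nonneg hL m)
  rw [arcRoot, arcPath, mul_pow, mul_pow, arcPow_pow, arcPow_pow, mul_liouvilleExp, ofReal_mul,
    mul_pow, hsq, Nat.cast_ofNat, mul_assoc]

theorem hasDerivAt_arcPath : HasDerivAt (arcPath m L) (deriv (arcPath m L) t) t :=
  ((hasDerivAt_arcPow _ t).const_mul (L : ℂ)).differentiableAt.hasDerivAt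

theorem hasDerivAt_arcRoot : HasDerivAt (arcRoot m K L) (deriv (arcRoot m K L) t) t :=
  ((hasDerivAt_arcPow _ t).const_mul ((K * √(L ^ m) : ℝ) : ℂ)).differentiableAt.hasDerivAt

theorem re_arcRoot_mul_deriv_arcPath :
    (arcRoot m K L t * deriv (arcPath m L) t).re = K * (liouvilleExp m * (L * √(L ^ m))) := by
  have hderiv : deriv (arcPath m L) t = _ :=
    ((hasDerivAt_arcPow (liouvilleExp m) t).const_mul (L : ℂ)).deriv
  have hpow : arcPow (1 - liouvilleExp m) t * arcPow (liouvilleExp m - 1) t = 1 := by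
    rw [arcPow_mul, sub_add_sub_cancel, sub_self, arcPow_zero]
  have hmul : arcRoot m K L t * deriv (arcPath m L) t =
      (K * (liouvilleExp m * (L * √(L ^ m))) : ℝ) * (1 - 2 * t * I) := by
    rw [hderiv, arcRoot]
    push_cast
    linear_combination (K * (liouvilleExp m * (L * √(L ^ m))) * (1 - 2 * t * I) : ℂ) * hpow
  rw [hmul, re_ofReal_mul]
  simp

theorem norm_arcPath_le (hL : 0 ≤ L) (ht : t ∈ Icc (-1) 1) : ‖arcPath m L t‖ ≤ L := by
  rw [arcPath, norm_mul, norm_real, Real.norm_of_nonneg hL]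
  exact mul_le_of_le_one_right hL (norm_arcPow_le_one liouvilleExp_pos.le ht)

theorem norm_deriv_arcPath_le (hL : 0 ≤ L) (ht : t ∈ Icc (-1) 1) :
    ‖deriv (arcPath m L) t‖ ≤ 6 * L := by
  unfold arcPath
  rw [deriv_const_mul_field, norm_mul, norm_real, Real.norm_of_nonneg hL, mul_comm]
  gcongr
  exact norm_deriv_arcPow_le liouvilleExp_pos.le liouvilleExp_le_one ht

theorem norm_deriv_arcRoot_le (hK : 0 ≤ K) (ht : t ∈ Icc (-1) 1) :
    ‖deriv (arcRoot m K L) t‖ ≤ 6 * (K * √(L ^ m)) := by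
  unfold arcRoot
  rw [deriv_const_mul_field, norm_mul, norm_real, Real.norm_of_nonneg (by positivity), mul_comm]
  gcongr
  exact norm_deriv_arcPow_le (sub_nonneg.2 liouvilleExp_le_one)
    (sub_le_self _ liouvilleExp_pos.le) ht

theorem le_norm_arcRoot (hK : 0 ≤ K) (ht : t ∈ Icc (-1) 1) :
    K * √(L ^ m) * (1 / 2) ≤ ‖arcRoot m K L t‖ := by
  rw [arcRoot, norm_mul, norm_real, Real.norm_of_nonneg (by positivity)]
  gcongr
  exact half_le_norm_arcPow (sub_le_self _ liouvilleExp_pos.le) ht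

end ArcPath

/-- `V`, with derivative `D`, is a nontrivial entire solution of `V'' = K² (x^m + e + r) V` which
decays along the ray through `sectorUnit m`; `ν` measures the size of the perturbation `r`. -/
structure IsSectorSolution (m : ℕ) (K ν : ℝ) (e : ℂ) (V D r : ℂ → ℂ) : Prop where
  hasDerivAt : ∀ x, HasDerivAt V (D x) x
  hasDerivAt_deriv : ∀ x, HasDerivAt D ((K : ℂ) ^ 2 * (x ^ m + e + r x) * V x) x
  norm_perturbation_le : ∀ x, ‖r x‖ ≤ ν * (1 + ‖x‖ ^ (m - 1))
  deriv_ne_zero : ∀ x, V x = 0 → D x ≠ 0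
  tendsto_zero : Tendsto (fun t : ℝ ↦ V (sectorUnit m * t)) atTop (𝓝 0)

theorem hasDerivAt_comp_mul_ofReal {V : ℂ → ℂ} {d w : ℂ} {t : ℝ} (h : HasDerivAt V d (w * t)) :
    HasDerivAt (fun t : ℝ ↦ V (w * t)) (w * d) t :=
  ((h.comp_of_eq (t : ℂ) ((hasDerivAt_id (t : ℂ)).const_mul w) rfl).congr_deriv
    (by ring)).comp_ofReal

/-- The WKB exponent of `log |V 0 / V L|` for a solution `V` decaying along the ray through
`sectorUnit m`, divided by the large parameter. -/
noncomputable def sectorAction (m : ℕ) (e : ℂ) (L : ℝ) : ℝ :=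
  rayAction m (sectorUnit m ^ 2 * e) L - arcAction m L

theorem sectorAction_add_le_conj {m : ℕ} (hm : 3 ≤ m) {e : ℂ} (he : ‖e‖ ≤ 2) (him : 0 ≤ e.im)
    {L : ℝ} (hL : 1 ≤ L) :
    sectorAction m e L + Real.sin (2 * sectorAngle m) / 4 * e.im ≤ sectorAction m (conj e) L := by
  have hsin := sin_two_mul_sectorAngle_pos hm
  have hnorm : ‖sectorUnit m ^ 2 * e‖ = ‖e‖ := by simp
  have hre : (sectorUnit m ^ 2 * e).re + 8 * (Real.sin (2 * sectorAngle m) / 4 * e.im) ≤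
      (sectorUnit m ^ 2 * conj e).re := by
    rw [mul_re, mul_re, conj_re, conj_im, sectorUnit_sq, Complex.exp_ofReal_mul_I_im]
    linarith
  have := rayAction_add_le (m := m) (hnorm.trans_le he) (by simp) (by positivity) hre hL
  unfold sectorAction
  linarith

theorem exists_arc_error_le {m : ℕ} (hm : 3 ≤ m) {ε : ℝ} (hε : 0 < ε) :
    ∃ L : ℝ, 16 ≤ L ∧ ∃ μ : ℝ, 0 ≤ μ ∧ μ ≤ 1 / 2 ∧
      24 * (m + 2) ≤ μ * L ^ m ∧ μ * arcAction m L ≤ ε := by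
  set L := max (48 * ((m : ℝ) + 2)) ((96 / ε) ^ 2)
  have hLm : 48 * ((m : ℝ) + 2) ≤ L := le_max_left _ _
  have hLε : 96 / ε ≤ √L := Real.le_sqrt_of_sq_le (le_max_right _ _)
  have hm' : (3 : ℝ) ≤ m := by exact_mod_cast hm
  have hL : 1 ≤ L := by linarith
  have hpow : L ≤ L ^ m := le_self_pow₀ hL (by omega)
  refine ⟨L, by linarith, 24 * ((m : ℝ) + 2) / L ^ m, by positivity, ?_, ?_, ?_⟩
  · rw [div_le_iff₀ (by positivity)]
    linarith
  · rw [div_mul_cancel₀ _ (by positivity)]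
  have hsqrt : L * √L ≤ √(L ^ m) := Real.le_sqrt_of_sq_le <| by
    rw [mul_pow, Real.sq_sqrt (by linarith), ← pow_succ]
    exact pow_le_pow_right₀ hL hm
  have hs : 0 < √(L ^ m) := Real.sqrt_pos.2 (by positivity)
  calc 24 * ((m : ℝ) + 2) / L ^ m * arcAction m L = 96 * L / √(L ^ m) := by
        rw [arcAction, liouvilleExp, ← Real.mul_self_sqrt (by positivity : 0 ≤ L ^ m),
          Real.sqrt_mul_self hs.le]
        field_simp
        norm_num
    _ ≤ ε := by
        rw [div_le_iff₀ hs]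
        calc 96 * L = ε * (96 / ε) * L := by field_simp
          _ ≤ ε * √L * L := by gcongr
          _ = ε * (L * √L) := by ring
          _ ≤ ε * √(L ^ m) := by gcongr

namespace IsSectorSolution

variable {m : ℕ} {K ν L μ : ℝ} {e : ℂ} {V D r : ℂ → ℂ}

theorem isRaySolution (h : IsSectorSolution m K ν e V D r) :
    IsRaySolution m K ν (sectorUnit m ^ 2 * e) (fun t ↦ V (sectorUnit m * t))
      (fun t ↦ sectorUnit m * D (sectorUnit m * t))
      (fun t ↦ sectorUnit m ^ 2 * r (sectorUnit m * t)) where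
  hasDerivAt t _ := hasDerivAt_comp_mul_ofReal (h.hasDerivAt _)
  hasDerivAt_deriv t _ := by
    refine ((hasDerivAt_comp_mul_ofReal (h.hasDerivAt_deriv _)).const_mul _).congr_deriv ?_
    rw [mul_pow]
    linear_combination (K ^ 2 * t ^ m * V (sectorUnit m * t)) * sectorUnit_pow_mul_sq (m := m)
  norm_perturbation_le t ht := by
    simpa [abs_of_nonneg (mem_Ici.1 ht)] using h.norm_perturbation_le (sectorUnit m * t)
  deriv_ne_zero t _ h₀ := mul_ne_zero sectorUnit_ne_zero (h.deriv_ne_zero _ h₀)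
  tendsto_zero := h.tendsto_zero

theorem arc_defect_le (h : IsSectorSolution m K ν e V D r) (he : ‖e‖ ≤ 2) (hL : 1 ≤ L)
    (hK : √(L ^ m) ≤ K) (hν : ν * (1 + L ^ (m - 1)) ≤ 1) (hμ₀ : 0 ≤ μ)
    (hμ : 24 * (m + 2) ≤ μ * L ^ m) {t : ℝ} (ht : t ∈ Icc (-1) 1) :
    ‖deriv (arcRoot m K L) t‖ + ‖deriv (arcPath m L) t‖ *
        ‖(K : ℂ) ^ 2 * (arcPath m L t ^ m + e + r (arcPath m L t)) - arcRoot m K L t ^ 2‖ ≤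
      μ * (arcRoot m K L t * deriv (arcPath m L) t).re * ‖arcRoot m K L t‖ := by
  have hL₀ : 0 ≤ L := by linarith
  have hK₀ : 0 ≤ K := (Real.sqrt_nonneg _).trans hK
  have hν₀ : 0 ≤ ν := h.isRaySolution.bound_nonneg
  have hs := liouvilleExp_pos (m := m)
  have hpert : ‖e + r (arcPath m L t)‖ ≤ 3 := by
    have hr : ν * (1 + ‖arcPath m L t‖ ^ (m - 1)) ≤ ν * (1 + L ^ (m - 1)) := by
      gcongr
      exact norm_arcPath_le hL₀ ht
    linarith [norm_add_le e (r (arcPath m L t)), h.norm_perturbation_le (arcPath m L t)]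
  have hsub : (K : ℂ) ^ 2 * (arcPath m L t ^ m + e + r (arcPath m L t)) - arcRoot m K L t ^ 2 =
      (K : ℂ) ^ 2 * (e + r (arcPath m L t)) := by
    rw [arcRoot_sq hL₀]
    ring
  have hexp : liouvilleExp m * (24 * (m + 2)) = 48 := by
    unfold liouvilleExp
    field_simp
    norm_num
  have hsqrt : √(L ^ m) * √(L ^ m) = L ^ m := Real.mul_self_sqrt (pow_nonneg hL₀ m)
  rw [hsub, norm_mul, norm_pow, norm_real, Real.norm_of_nonneg hK₀, re_arcRoot_mul_deriv_arcPath]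
  calc ‖deriv (arcRoot m K L) t‖ +
        ‖deriv (arcPath m L) t‖ * (K ^ 2 * ‖e + r (arcPath m L t)‖)
      ≤ 6 * (K * K) * L + 6 * L * (K ^ 2 * 3) := by
        gcongr
        · calc ‖deriv (arcRoot m K L) t‖ ≤ 6 * (K * √(L ^ m)) := norm_deriv_arcRoot_le hK₀ ht
            _ ≤ 6 * (K * K) := by gcongr
            _ ≤ 6 * (K * K) * L := le_mul_of_one_le_right (by positivity) hL
        · exact norm_deriv_arcPath_le hL₀ ht
    _ = K ^ 2 * L / 2 * (liouvilleExp m * (24 * (m + 2))) := by rw [hexp]; ring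
    _ ≤ K ^ 2 * L / 2 * (liouvilleExp m * (μ * L ^ m)) := by gcongr
    _ = μ * (K * (liouvilleExp m * (L * √(L ^ m)))) * (K * √(L ^ m) * (1 / 2)) := by
        linear_combination (-(K ^ 2 * L / 2 * liouvilleExp m * μ)) * hsqrt
    _ ≤ _ := by gcongr; exact le_norm_arcRoot hK₀ ht

theorem isWKBPath_arc (h : IsSectorSolution m K ν e V D r) (he : ‖e‖ ≤ 2) (hL : 1 ≤ L)
    (hK : √(L ^ m) ≤ K) (hν : ν * (1 + L ^ (m - 1)) ≤ 1) (hμ₀ : 0 ≤ μ) (hμ' : μ ≤ 1 / 2)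
    (hμ : 24 * (m + 2) ≤ μ * L ^ m) :
    IsWKBPath (Icc (-1) 1) (V ∘ arcPath m L) (D ∘ arcPath m L) (deriv (arcPath m L))
      (fun t ↦ (K : ℂ) ^ 2 * (arcPath m L t ^ m + e + r (arcPath m L t))) (arcRoot m K L)
      (deriv (arcRoot m K L)) μ where
  hasDerivAt t _ := (h.hasDerivAt _).comp t hasDerivAt_arcPath |>.congr_deriv (mul_comm _ _)
  hasDerivAt_deriv t _ :=
    (h.hasDerivAt_deriv _).comp t hasDerivAt_arcPath |>.congr_deriv (mul_comm _ _)
  hasDerivAt_root t _ := hasDerivAt_arcRoot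
  root_ne_zero t ht := by
    have hsqrt : 1 ≤ √(L ^ m) := Real.one_le_sqrt.2 (one_le_pow₀ hL)
    rw [← norm_pos_iff]
    refine lt_of_lt_of_le ?_ (le_norm_arcRoot (by linarith) ht)
    have : 0 < K := by linarith
    positivity
  re_nonneg t _ := by
    have hK₀ : 0 ≤ K := (Real.sqrt_nonneg _).trans hK
    have := liouvilleExp_pos (m := m)
    rw [re_arcRoot_mul_deriv_arcPath]
    positivity
  defect_le t ht := h.arc_defect_le he hL hK hν hμ₀ hμ ht
  le_half := hμ'

theorem isDominant_arc (hrec : IsRecessive ((K * √(L ^ m) : ℝ) : ℂ) (V (sectorUnit m * L))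
      (sectorUnit m * D (sectorUnit m * L))) {Q : ℝ → ℂ}
    (hpath : IsWKBPath (Icc (-1) 1) (V ∘ arcPath m L) (D ∘ arcPath m L) (deriv (arcPath m L))
      Q (arcRoot m K L) (deriv (arcRoot m K L)) μ) :
    ∀ t ∈ Icc (-1 : ℝ) 1, IsDominant (arcRoot m K L t) (V (arcPath m L t)) (D (arcPath m L t)) := by
  intro t ht
  refine hpath.isDominant_of_le (convex_Icc _ _) (left_mem_Icc.2 (by norm_num)) ht ht.1 ?_
  rwa [Function.comp_apply, Function.comp_apply, arcPath_neg_one,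
    ← isRecessive_neg_mul_iff sectorUnit_ne_zero, neg_sectorUnit_mul_arcRoot_neg_one]

theorem norm_arc_bounds (hrec : IsRecessive ((K * √(L ^ m) : ℝ) : ℂ) (V (sectorUnit m * L))
      (sectorUnit m * D (sectorUnit m * L))) (hK : 0 < K) (hL : 0 < L) {Q : ℝ → ℂ}
    (hpath : IsWKBPath (Icc (-1) 1) (V ∘ arcPath m L) (D ∘ arcPath m L) (deriv (arcPath m L))
      Q (arcRoot m K L) (deriv (arcRoot m K L)) μ) :
    ‖V (sectorUnit m * L)‖ * Real.exp ((1 - μ) * (K * arcAction m L)) ≤ 2 * ‖V L‖ ∧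
      ‖V L‖ ≤ 2 * (‖V (sectorUnit m * L)‖ * Real.exp ((1 + μ) * (K * arcAction m L))) := by
  have hdom := isDominant_arc hrec hpath
  have hleft : (-1 : ℝ) ∈ Icc (-1 : ℝ) 1 := left_mem_Icc.2 (by norm_num)
  have hright : (1 : ℝ) ∈ Icc (-1 : ℝ) 1 := right_mem_Icc.2 (by norm_num)
  obtain ⟨hlower, hupper⟩ := hpath.growing_bounds (convex_Icc _ _)
    (Ψ := fun t ↦ K * (liouvilleExp m * (L * √(L ^ m))) * t) (fun t _ ↦ by
      rw [re_arcRoot_mul_deriv_arcPath]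
      exact ((hasDerivAt_id t).const_mul _).congr_deriv (mul_one _)) hleft hright (by norm_num) hdom
  have hΨ : K * (liouvilleExp m * (L * √(L ^ m))) * 1 - K * (liouvilleExp m * (L * √(L ^ m))) * -1
      = K * arcAction m L := by
    unfold arcAction
    ring
  have hF : 0 < K * √(L ^ m) := by positivity
  simp only [hΨ, Function.comp_apply, arcPath_neg_one, arcPath_one] at hlower hupper
  have hstart := hdom _ hleft
  have hend := hdom _ hright
  rw [arcPath_neg_one] at hstart
  rw [arcPath_one] at hend
  have hstart_le := hstart.norm_mul_le
  have hstart_ge := hstart.norm_add_le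
  have hend_le := hend.norm_mul_le
  have hend_ge := hend.norm_add_le
  rw [norm_mul, norm_arcRoot_neg_one hK.le] at hstart_le hstart_ge
  rw [norm_mul, norm_arcRoot_one hK.le] at hend_le hend_ge
  set b₀ := ‖arcRoot m K L (-1) * V (sectorUnit m * L) + D (sectorUnit m * L)‖
  set b₁ := ‖arcRoot m K L 1 * V L + D L‖
  constructor <;> refine le_of_mul_le_mul_left ?_ hF
  · linarith [mul_le_mul_of_nonneg_right hstart_le
      (Real.exp_nonneg ((1 - μ) * (K * arcAction m L)))]
  · linarith [mul_le_mul_of_nonneg_right hstart_ge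
      (Real.exp_nonneg ((1 + μ) * (K * arcAction m L)))]

theorem exists_eventually_arc_bounds (hm : 3 ≤ m) {ε : ℝ} (hε : 0 < ε) :
    ∃ L : ℝ, 1 ≤ L ∧ ∀ᶠ p in semiclassical,
      ∀ e V D r, IsSectorSolution m p.1 p.2 e V D r → ‖e‖ ≤ 2 →
      V (sectorUnit m * L) ≠ 0 ∧
      ‖sectorUnit m * D (sectorUnit m * L)‖ ≤ 2 * (p.1 * √(L ^ m) * ‖V (sectorUnit m * L)‖) ∧
      ‖V (sectorUnit m * L)‖ ≤ Real.exp (-(p.1 * (arcAction m L - ε))) * ‖V L‖ ∧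
      ‖V L‖ ≤ Real.exp (p.1 * (arcAction m L + ε)) * ‖V (sectorUnit m * L)‖ := by
  obtain ⟨L, hL, μ, hμ₀, hμ', hμ, hμε⟩ := exists_arc_error_le hm (half_pos hε)
  refine ⟨L, by linarith, ?_⟩
  filter_upwards [eventually_semiclassical_ge (max 1 (max √(L ^ m) (4 * m))),
    eventually_semiclassical_le (by positivity : 0 < 1 / (1 + L ^ (m - 1))),
    eventually_semiclassical_le_exp 2 (half_pos hε)]
  rintro ⟨K, ν⟩ hK ⟨-, hν⟩ hexp e V D r h he
  simp only [max_le_iff] at hK hν hexp h ⊢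
  rw [le_div_iff₀ (by positivity)] at hν
  have hK₀ : 0 < K := one_pos.trans_le hK.1
  have hν₁ : ν ≤ 1 := hν.trans' <| le_mul_of_one_le_right h.isRaySolution.bound_nonneg <|
    le_add_of_nonneg_right (by positivity)
  have hrec := h.isRaySolution.isRecessive_mul_sqrt_pow (by omega) hK.2.2 hν₁ (by simpa using he) hL
  have hne : V (sectorUnit m * L) ≠ 0 :=
    hrec.ne_zero (h.isRaySolution.deriv_ne_zero L (mem_Ici.2 (by linarith)))
  have hderiv := hrec.norm_deriv_le
  rw [norm_mul _ (V _), norm_real, Real.norm_of_nonneg (by positivity)] at hderiv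
  obtain ⟨hlower, hupper⟩ := norm_arc_bounds hrec hK₀ (by linarith)
    (h.isWKBPath_arc he (by linarith) hK.2.1 hν hμ₀ hμ' hμ)
  have hKμ := mul_le_mul_of_nonneg_left hμε hK₀.le
  have hlower' : ‖V (sectorUnit m * L)‖ ≤
      2 * (‖V L‖ * Real.exp (-((1 - μ) * (K * arcAction m L)))) := by
    rw [Real.exp_neg, ← mul_assoc, ← div_eq_mul_inv, le_div_iff₀ (Real.exp_pos _)]
    linarith
  exact ⟨hne, hderiv,
    le_exp_mul_of_le_mul_mul_exp hexp (norm_nonneg _) hlower' (by linarith),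
    le_exp_mul_of_le_mul_mul_exp hexp (norm_nonneg _) hupper (by linarith)⟩

theorem exists_eventually_norm_bounds (hm : 3 ≤ m) {c ε : ℝ} (hc : 0 < c) (hε : 0 < ε) :
    ∃ L : ℝ, 1 ≤ L ∧ ∀ᶠ p in semiclassical,
      ∀ e V D r, IsSectorSolution m p.1 p.2 e V D r → ‖e‖ ≤ 2 →
      V L ≠ 0 ∧ ‖V 0‖ ≤ Real.exp (p.1 * (sectorAction m e L + ε)) * ‖V L‖ ∧
      (c ≤ ‖e‖ + (sectorUnit m ^ 2 * e).re →
        V 0 ≠ 0 ∧ Real.exp (p.1 * (sectorAction m e L - ε)) * ‖V L‖ ≤ ‖V 0‖) := by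
  obtain ⟨L, hL, harc⟩ := exists_eventually_arc_bounds hm (half_pos hε)
  refine ⟨L, hL, ?_⟩
  filter_upwards [harc,
    IsRaySolution.eventually_norm_le_exp_mul (m := m) (half_pos hε) (one_pos.trans_le hL),
    IsRaySolution.eventually_exp_mul_norm_le (m := m) (by omega) hc (half_pos hε)
      (zero_le_one.trans hL)]
  rintro ⟨K, ν⟩ harc hupper hlower e V D r h he
  have hA : ‖sectorUnit m ^ 2 * e‖ = ‖e‖ := by simp
  obtain ⟨hω, hderiv, hωL, hLω⟩ := harc e V D r h he
  have hup := hupper _ _ _ _ h.isRaySolution (hA.trans_le he) hderiv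
  simp only [ofReal_zero, mul_zero] at hup hωL hLω
  refine ⟨fun hVL ↦ hω (by simpa [hVL] using hωL), ?_, fun hce ↦ ?_⟩
  · calc ‖V 0‖ ≤ _ := hup
      _ ≤ Real.exp (K * (rayAction m (sectorUnit m ^ 2 * e) L + ε / 2)) *
          (Real.exp (-(K * (arcAction m L - ε / 2))) * ‖V L‖) := by gcongr
      _ = Real.exp (K * (sectorAction m e L + ε)) * ‖V L‖ := by
          rw [← mul_assoc, ← Real.exp_add, sectorAction]
          ring_nf
  · obtain ⟨h₀, hlow⟩ := hlower _ _ _ _ h.isRaySolution (hA.trans_le he) (hA ▸ hce)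
    simp only [ofReal_zero, mul_zero] at h₀ hlow
    refine ⟨h₀, ?_⟩
    calc Real.exp (K * (sectorAction m e L - ε)) * ‖V L‖
        ≤ Real.exp (K * (sectorAction m e L - ε)) *
          (Real.exp (K * (arcAction m L + ε / 2)) * ‖V (sectorUnit m * L)‖) := by gcongr
      _ = Real.exp (K * (rayAction m (sectorUnit m ^ 2 * e) L - ε / 2)) *
          ‖V (sectorUnit m * L)‖ := by
          rw [← mul_assoc, ← Real.exp_add, sectorAction]
          ring_nf
      _ ≤ ‖V 0‖ := hlow

end IsSectorSolution

/-! ### Power series solutions depending on a parameter -/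

/-- A family `l ↦ ∑ₙ c l n * xⁿ` of entire functions of `x`, given by its Taylor coefficients, which
is holomorphic in the parameter `l` and locally uniformly convergent in both variables. -/
structure IsEntireFamily (c : ℂ → ℕ → ℂ) : Prop where
  differentiable : ∀ n, Differentiable ℂ fun l ↦ c l n
  bounded : ∀ r R : ℝ, 0 < R → ∃ G, ∀ l, ‖l‖ ≤ r → ∀ n, ‖c l n‖ * R ^ n ≤ G

namespace IsEntireFamily

variable {c : ℂ → ℕ → ℂ}

theorem derivative (h : IsEntireFamily c) :
    IsEntireFamily fun l n ↦ ((n : ℂ) + 1) * c l (n + 1) where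
  differentiable n := (h.differentiable (n + 1)).const_mul _
  bounded r R hR := by
    obtain ⟨G, hG⟩ := h.bounded r (2 * R) (by positivity)
    refine ⟨G / R, fun l hl n ↦ ?_⟩
    have hn : ‖(n : ℂ) + 1‖ ≤ 2 ^ (n + 1) := by
      rw [← Nat.cast_add_one, Complex.norm_natCast]
      exact_mod_cast (Nat.lt_two_pow_self (n := n + 1)).le
    rw [le_div_iff₀ hR, norm_mul]
    calc ‖(n : ℂ) + 1‖ * ‖c l (n + 1)‖ * R ^ n * R
        = ‖(n : ℂ) + 1‖ * (‖c l (n + 1)‖ * R ^ (n + 1)) := by ring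
      _ ≤ 2 ^ (n + 1) * (‖c l (n + 1)‖ * R ^ (n + 1)) := by gcongr
      _ = ‖c l (n + 1)‖ * (2 * R) ^ (n + 1) := by rw [mul_pow]; ring
      _ ≤ G := hG l hl (n + 1)

theorem exists_summable_majorant (h : IsEntireFamily c) (r : ℝ) {R : ℝ} (hR : 0 < R) :
    ∃ u : ℕ → ℝ, Summable u ∧ ∀ l, ‖l‖ ≤ r → ∀ x : ℂ, ‖x‖ ≤ R → ∀ n, ‖c l n * x ^ n‖ ≤ u n := by
  obtain ⟨G, hG⟩ := h.bounded r (2 * R) (by positivity)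
  refine ⟨fun n ↦ G * (1 / 2) ^ n, summable_geometric_two.mul_left G, fun l hl x hx n ↦ ?_⟩
  calc ‖c l n * x ^ n‖ ≤ ‖c l n‖ * R ^ n := by rw [norm_mul, norm_pow]; gcongr
    _ = ‖c l n‖ * (2 * R) ^ n * (1 / 2) ^ n := by rw [mul_assoc, ← mul_pow]; congr 2; ring
    _ ≤ G * (1 / 2) ^ n := by gcongr; exact hG l hl n

theorem summable_norm (h : IsEntireFamily c) (l x : ℂ) : Summable fun n ↦ ‖c l n * x ^ n‖ := by
  obtain ⟨u, hu, hcu⟩ := h.exists_summable_majorant ‖l‖ (R := ‖x‖ + 1) (by positivity)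
  exact hu.of_nonneg_of_le (fun n ↦ norm_nonneg _) (hcu l le_rfl x (by linarith))

theorem differentiable_tsum (h : IsEntireFamily c) (x : ℂ) :
    Differentiable ℂ fun l ↦ ∑' n, c l n * x ^ n := fun l ↦ by
  obtain ⟨u, hu, hcu⟩ := h.exists_summable_majorant (‖l‖ + 1) (R := ‖x‖ + 1) (by positivity)
  have hball : DifferentiableOn ℂ (fun l ↦ ∑' n, c l n * x ^ n) (Metric.ball 0 (‖l‖ + 1)) :=
    differentiableOn_tsum_of_summable_norm hu
      (fun n ↦ ((h.differentiable n).mul_const _).differentiableOn) Metric.isOpen_ball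
      fun n l' hl' ↦ hcu l' (mem_ball_zero_iff.1 hl').le x (by linarith) n
  exact hball.differentiableAt (Metric.isOpen_ball.mem_nhds (by simp))

theorem hasDerivAt_tsum (h : IsEntireFamily c) (l x : ℂ) :
    HasDerivAt (fun x ↦ ∑' n, c l n * x ^ n)
      (∑' n : ℕ, ((n : ℂ) + 1) * c l (n + 1) * x ^ n) x := by
  obtain ⟨u, hu, hcu⟩ :=
    h.derivative.exists_summable_majorant ‖l‖ (R := ‖x‖ + 1) (by positivity)
  have hmem : x ∈ Metric.ball (0 : ℂ) (‖x‖ + 1) := by simp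
  have hterm (n : ℕ) (y : ℂ) : HasDerivAt (fun y ↦ c l (n + 1) * y ^ (n + 1))
      (((n : ℂ) + 1) * c l (n + 1) * y ^ n) y :=
    ((hasDerivAt_pow (n + 1) y).const_mul _).congr_deriv (by push_cast; ring_nf)
  have htail := hasDerivAt_tsum_of_isPreconnected hu Metric.isOpen_ball
    (convex_ball _ _).isPreconnected (fun n y _ ↦ hterm n y)
    (fun n y hy ↦ hcu l le_rfl y (mem_ball_zero_iff.1 hy).le n) hmem
    ((summable_nat_add_iff 1).2 (h.summable_norm l x).of_norm) hmem
  refine (htail.const_add (c l 0)).congr_of_eventuallyEq (.of_forall fun y ↦ ?_)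
  simpa using (h.summable_norm l y).of_norm.tsum_eq_zero_add

end IsEntireFamily

/-- The Taylor coefficients of the solution of `v'' = q v` with `v 0 = α` and `v' 0 = β`, where `q`
is given by its own Taylor coefficients. -/
noncomputable def odeCoeff (q : ℕ → ℂ) (α β : ℂ) : ℕ → ℂ
  | 0 => α
  | 1 => β
  | n + 2 => (∑ k : Fin (n + 1), q k * odeCoeff q α β (n - k)) / (((n : ℂ) + 1) * ((n : ℂ) + 2))

theorem mul_odeCoeff_add_two (q : ℕ → ℂ) (α β : ℂ) (n : ℕ) :
    ((n : ℂ) + 1) * ((n : ℂ) + 2) * odeCoeff q α β (n + 2) =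
      ∑ k ∈ Finset.range (n + 1), q k * odeCoeff q α β (n - k) := by
  have h₁ : (n : ℂ) + 1 ≠ 0 := mod_cast n.succ_ne_zero
  have h₂ : (n : ℂ) + 2 ≠ 0 := mod_cast (n + 1).succ_ne_zero
  rw [odeCoeff, Finset.sum_range]
  field_simp

theorem differentiable_odeCoeff {q : ℂ → ℕ → ℂ} (hq : ∀ n, Differentiable ℂ fun l ↦ q l n)
    (α β : ℂ) (n : ℕ) : Differentiable ℂ fun l ↦ odeCoeff (q l) α β n := by
  induction n using Nat.strong_induction_on with
  | _ n ih =>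
    match n with
    | 0 => simp only [odeCoeff]; exact differentiable_const _
    | 1 => simp only [odeCoeff]; exact differentiable_const _
    | n + 2 =>
      simp only [odeCoeff]
      refine (Differentiable.fun_sum fun k _ ↦ ?_).div_const _
      exact (hq k).fun_mul (ih (n - k) (by lia))

theorem exists_forall_le_of_recurrence {A C : ℝ} (hA : 0 ≤ A) (hC : 0 ≤ C) :
    ∃ G, ∀ a : ℕ → ℝ, a 0 ≤ A → a 1 ≤ A →
      (∀ (n : ℕ) (E : ℝ), (∀ j ≤ n, a j ≤ E) → ((n : ℝ) + 1) * (n + 2) * a (n + 2) ≤ C * E) →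
      ∀ n, a n ≤ G := by
  obtain ⟨N, hN⟩ := exists_nat_ge C
  refine ⟨A * (C + 1) ^ N, fun a h₀ h₁ hrec n ↦ ?_⟩
  have hmono {i j : ℕ} (hij : i ≤ j) : A * (C + 1) ^ i ≤ A * (C + 1) ^ j := by
    gcongr
    linarith
  suffices h : ∀ n, a n ≤ A * (C + 1) ^ min n N from (h n).trans (hmono (min_le_right _ _))
  intro n
  induction n using Nat.strong_induction_on with
  | _ n ih =>
    match n with
    | 0 => simpa using h₀
    | 1 => exact h₁.trans (by simpa using hmono (Nat.zero_le (min 1 N)))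
    | n + 2 =>
      set E := A * (C + 1) ^ min n N with hE
      have hE₀ : 0 ≤ E := by positivity
      have hn : ((n : ℝ) + 1) * (n + 2) * a (n + 2) ≤ C * E :=
        hrec n E fun j hj ↦ (ih j (by lia)).trans (hmono (by lia))
      have : (0 : ℝ) ≤ n := n.cast_nonneg
      refine le_of_mul_le_mul_left (hn.trans ?_) (show 0 < ((n : ℝ) + 1) * (n + 2) by positivity)
      rcases lt_or_ge n N with hnN | hnN
      · have hstep : (C + 1) * E ≤ A * (C + 1) ^ min (n + 2) N := by
          calc (C + 1) * E = A * (C + 1) ^ (min n N + 1) := by rw [hE]; ring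
            _ ≤ A * (C + 1) ^ min (n + 2) N := hmono (by lia)
        have hone : 1 ≤ ((n : ℝ) + 1) * (n + 2) := by nlinarith
        calc C * E ≤ A * (C + 1) ^ min (n + 2) N := by linarith
          _ ≤ _ := le_mul_of_one_le_left (by positivity) hone
      · rw [show min (n + 2) N = min n N by lia, ← hE]
        have : (N : ℝ) ≤ n := mod_cast hnN
        gcongr
        nlinarith

theorem norm_odeCoeff_add_two_mul_pow_le {q : ℕ → ℂ} {α β : ℂ} {R S E : ℝ} (hR : 0 ≤ R)
    {n : ℕ} (hq : ∑ k ∈ Finset.range (n + 1), ‖q k‖ * R ^ k ≤ S)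
    (hE : ∀ j ≤ n, ‖odeCoeff q α β j‖ * R ^ j ≤ E) :
    ((n : ℝ) + 1) * (n + 2) * (‖odeCoeff q α β (n + 2)‖ * R ^ (n + 2)) ≤ R ^ 2 * S * E := by
  have hE₀ : 0 ≤ E := (by positivity : (0 : ℝ) ≤ _).trans (hE 0 n.zero_le)
  have hnorm : ((n : ℝ) + 1) * (n + 2) * ‖odeCoeff q α β (n + 2)‖ =
      ‖∑ k ∈ Finset.range (n + 1), q k * odeCoeff q α β (n - k)‖ := by
    rw [← mul_odeCoeff_add_two, norm_mul, norm_mul]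
    norm_cast
  calc ((n : ℝ) + 1) * (n + 2) * (‖odeCoeff q α β (n + 2)‖ * R ^ (n + 2))
      = R ^ 2 * (‖∑ k ∈ Finset.range (n + 1), q k * odeCoeff q α β (n - k)‖ * R ^ n) := by
        rw [← hnorm]; ring
    _ ≤ R ^ 2 * (∑ k ∈ Finset.range (n + 1), ‖q k‖ * R ^ k * E) := by
        gcongr
        refine (mul_le_mul_of_nonneg_right (norm_sum_le _ _) (by positivity)).trans ?_
        rw [Finset.sum_mul]
        refine Finset.sum_le_sum fun k hk ↦ ?_
        have hkn : k ≤ n := Finset.mem_range_succ_iff.1 hk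
        calc ‖q k * odeCoeff q α β (n - k)‖ * R ^ n
            = ‖q k‖ * R ^ k * (‖odeCoeff q α β (n - k)‖ * R ^ (n - k)) := by
              rw [norm_mul, ← Nat.add_sub_cancel' hkn, pow_add, Nat.add_sub_cancel' hkn]; ring
          _ ≤ ‖q k‖ * R ^ k * E := by gcongr; exact hE _ (n.sub_le k)
    _ ≤ R ^ 2 * S * E := by rw [← Finset.sum_mul, ← mul_assoc]; gcongr

theorem isEntireFamily_odeCoeff {q : ℂ → ℕ → ℂ} (hq : IsEntireFamily q) (α β : ℂ) :
    IsEntireFamily fun l ↦ odeCoeff (q l) α β where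
  differentiable := differentiable_odeCoeff hq.differentiable α β
  bounded r R hR := by
    obtain ⟨u, hu, hqu⟩ := hq.exists_summable_majorant r hR
    have hsum : ∀ l : ℂ, ‖l‖ ≤ r → ∀ n : ℕ,
        ∑ k ∈ Finset.range (n + 1), ‖q l k‖ * R ^ k ≤ |∑' k, u k| := fun l hl n ↦ by
      have hle : ∀ k, ‖q l k‖ * R ^ k ≤ u k := fun k ↦ by
        simpa [abs_of_pos hR] using hqu l hl R (by simp [abs_of_pos hR]) k
      have hu₀ : ∀ k, 0 ≤ u k := fun k ↦ (by positivity : (0 : ℝ) ≤ _).trans (hle k)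
      exact ((Finset.sum_le_sum fun k _ ↦ hle k).trans
        (hu.sum_le_tsum _ fun k _ ↦ hu₀ k)).trans (le_abs_self _)
    obtain ⟨G, hG⟩ := exists_forall_le_of_recurrence (A := ‖α‖ + ‖β‖ * R)
      (C := R ^ 2 * |∑' k, u k|) (by positivity) (by positivity)
    refine ⟨G, fun l hl ↦ hG _ ?_ ?_ fun n E hE ↦
      norm_odeCoeff_add_two_mul_pow_le hR.le (hsum l hl n) hE⟩
    · simpa [odeCoeff] using (by positivity : 0 ≤ ‖β‖ * R)
    · simp [odeCoeff]

theorem tsum_odeCoeff_derivative₂ {q : ℕ → ℂ} {α β x : ℂ} (hq : Summable fun n ↦ ‖q n * x ^ n‖)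
    (hc : Summable fun n ↦ ‖odeCoeff q α β n * x ^ n‖) :
    ∑' n : ℕ, ((n : ℂ) + 1) * (((n + 1 : ℕ) + 1) * odeCoeff q α β (n + 1 + 1)) * x ^ n =
      (∑' n, q n * x ^ n) * ∑' n, odeCoeff q α β n * x ^ n := by
  rw [tsum_mul_tsum_eq_tsum_sum_range_of_summable_norm hq hc]
  refine tsum_congr fun n ↦ ?_
  have hrec := mul_odeCoeff_add_two q α β n
  calc ((n : ℂ) + 1) * (((n + 1 : ℕ) + 1) * odeCoeff q α β (n + 1 + 1)) * x ^ n
      = ((n : ℂ) + 1) * (n + 2) * odeCoeff q α β (n + 2) * x ^ n := by push_cast; ring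
    _ = ∑ k ∈ Finset.range (n + 1), q k * x ^ k * (odeCoeff q α β (n - k) * x ^ (n - k)) := by
        rw [hrec, Finset.sum_mul]
        refine Finset.sum_congr rfl fun k hk ↦ ?_
        have hkn : k ≤ n := Finset.mem_range_succ_iff.1 hk
        rw [← pow_mul_pow_sub x hkn]
        ring

section Polynomial

variable (P : Polynomial ℂ)

/-- The Taylor coefficients of `x ↦ P x + l`. -/
noncomputable def addConstCoeff (l : ℂ) (n : ℕ) : ℂ :=
  P.coeff n + if n = 0 then l else 0

theorem addConstCoeff_eq_zero {n : ℕ} (hn : P.natDegree < n) (l : ℂ) :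
    addConstCoeff P l n = 0 := by
  rw [addConstCoeff, Polynomial.coeff_eq_zero_of_natDegree_lt hn, if_neg (by lia), add_zero]

theorem isEntireFamily_addConstCoeff : IsEntireFamily (addConstCoeff P) where
  differentiable n := by
    unfold addConstCoeff
    split_ifs <;> fun_prop
  bounded r R hR := by
    have hle : ∀ l : ℂ, ‖l‖ ≤ r → ∀ n, ‖addConstCoeff P l n‖ ≤ ‖P.coeff n‖ + r := fun l hl n ↦ by
      have hr : 0 ≤ r := (norm_nonneg l).trans hl
      refine (norm_add_le _ _).trans (by gcongr; split_ifs <;> simpa)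
    refine ⟨∑ k ∈ Finset.range (P.natDegree + 1), (‖P.coeff k‖ + |r|) * R ^ k, fun l hl n ↦ ?_⟩
    rcases lt_or_ge P.natDegree n with hn | hn
    · rw [addConstCoeff_eq_zero P hn, norm_zero, zero_mul]
      positivity
    · calc ‖addConstCoeff P l n‖ * R ^ n ≤ (‖P.coeff n‖ + |r|) * R ^ n := by
            gcongr; exact (hle l hl n).trans (by gcongr; exact le_abs_self r)
        _ ≤ _ := Finset.single_le_sum (f := fun k ↦ (‖P.coeff k‖ + |r|) * R ^ k)
            (fun k _ ↦ by positivity) (Finset.mem_range_succ_iff.2 hn)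

theorem tsum_addConstCoeff (l x : ℂ) : ∑' n, addConstCoeff P l n * x ^ n = P.eval x + l := by
  rw [tsum_eq_sum (s := Finset.range (P.natDegree + 1)) fun n hn ↦ by
    rw [addConstCoeff_eq_zero P (by simpa using hn), zero_mul]]
  simp [addConstCoeff, add_mul, Finset.sum_add_distrib, Polynomial.eval_eq_sum_range]

end Polynomial

/-! ### Entire solutions of `v'' = q v` -/

/-- `v` is an entire solution of `v'' = q v`, with derivative `d`. -/
structure IsEntireSolution (q v d : ℂ → ℂ) : Prop where
  hasDerivAt : ∀ x, HasDerivAt v (d x) x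
  hasDerivAt_deriv : ∀ x, HasDerivAt d (q x * v x) x

namespace IsEntireSolution

variable {q v d y y₁ : ℂ → ℂ}

theorem wronskian_eq (h : IsEntireSolution q v d) (h' : IsEntireSolution q y y₁) (x x₀ : ℂ) :
    v x * y₁ x - d x * y x = v x₀ * y₁ x₀ - d x₀ * y x₀ := by
  have hW : ∀ x, HasDerivAt (fun x ↦ v x * y₁ x - d x * y x) 0 x := fun x ↦
    (((h.hasDerivAt x).fun_mul (h'.hasDerivAt_deriv x)).fun_sub
      ((h.hasDerivAt_deriv x).fun_mul (h'.hasDerivAt x))).congr_deriv (by ring)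
  exact is_const_of_deriv_eq_zero (fun x ↦ (hW x).differentiableAt) (fun x ↦ (hW x).deriv) x x₀

theorem add_mul (h : IsEntireSolution q v d) (h' : IsEntireSolution q y y₁) (a : ℂ) :
    IsEntireSolution q (fun x ↦ v x + a * y x) fun x ↦ d x + a * y₁ x where
  hasDerivAt x := (h.hasDerivAt x).fun_add ((h'.hasDerivAt x).const_mul a)
  hasDerivAt_deriv x := ((h.hasDerivAt_deriv x).fun_add
    ((h'.hasDerivAt_deriv x).const_mul a)).congr_deriv (by ring)

theorem comp_sub_const (h : IsEntireSolution q v d) (x₀ : ℂ) :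
    IsEntireSolution (fun x ↦ q (x - x₀)) (fun x ↦ v (x - x₀)) fun x ↦ d (x - x₀) where
  hasDerivAt x := (h.hasDerivAt (x - x₀)).comp_sub_const x x₀
  hasDerivAt_deriv x := (h.hasDerivAt_deriv (x - x₀)).comp_sub_const x x₀

theorem star (h : IsEntireSolution q v d) :
    IsEntireSolution (fun x ↦ conj (q (conj x))) (fun x ↦ conj (v (conj x)))
      fun x ↦ conj (d (conj x)) where
  hasDerivAt x := hasDerivAt_conj_conj_iff.2 (by simpa using h.hasDerivAt (conj x))
  hasDerivAt_deriv x := hasDerivAt_conj_conj_iff.2 (by simpa using h.hasDerivAt_deriv (conj x))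

theorem solvesOn (h : IsEntireSolution q v d) (w : ℂ) (I : Set ℝ) :
    SolvesOn I (fun t ↦ w ^ 2 * q (w * t)) (fun t ↦ v (w * t)) fun t ↦ w * d (w * t) where
  hasDerivAt t _ := hasDerivAt_comp_mul_ofReal (h.hasDerivAt _)
  hasDerivAt_deriv t _ := ((hasDerivAt_comp_mul_ofReal (h.hasDerivAt_deriv _)).const_mul w
    ).congr_deriv (by ring)

end IsEntireSolution

/-- `c` and `s` are the solutions of `v'' = q v` normalised at `x₀` like the cosine and the sine
at `0`; `c₁` and `s₁` are their derivatives. -/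
structure IsFundamentalSystem (q : ℂ → ℂ) (x₀ : ℂ) (c c₁ s s₁ : ℂ → ℂ) : Prop where
  left : IsEntireSolution q c c₁
  right : IsEntireSolution q s s₁
  left_base : c x₀ = 1
  left_deriv_base : c₁ x₀ = 0
  right_base : s x₀ = 0
  right_deriv_base : s₁ x₀ = 1

namespace IsFundamentalSystem

variable {q c c₁ s s₁ v d : ℂ → ℂ} {x₀ : ℂ}

theorem wronskian_eq_one (hf : IsFundamentalSystem q x₀ c c₁ s s₁) (x : ℂ) :
    c x * s₁ x - c₁ x * s x = 1 := by
  simpa [hf.left_base, hf.left_deriv_base, hf.right_base, hf.right_deriv_base] using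
    hf.left.wronskian_eq hf.right x x₀

theorem eq_add_mul (hf : IsFundamentalSystem q x₀ c c₁ s s₁) (h : IsEntireSolution q v d)
    (x : ℂ) : v x = v x₀ * c x + d x₀ * s x ∧ d x = v x₀ * c₁ x + d x₀ * s₁ x := by
  have h₀ := hf.wronskian_eq_one x
  have hs := h.wronskian_eq hf.right x x₀
  have hc := hf.left.wronskian_eq h x x₀
  rw [hf.right_base, hf.right_deriv_base] at hs
  rw [hf.left_base, hf.left_deriv_base] at hc
  constructor
  · linear_combination -v x * h₀ + c x * hs + s x * hc
  · linear_combination -d x * h₀ + c₁ x * hs + s₁ x * hc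

end IsFundamentalSystem

theorem exists_solution_family_zero (P : Polynomial ℂ) (α β : ℂ) : ∃ y y₁ : ℂ → ℂ → ℂ,
    (∀ l, IsEntireSolution (fun x ↦ P.eval x + l) (y l) (y₁ l) ∧ y l 0 = α ∧ y₁ l 0 = β) ∧
    ∀ x, Differentiable ℂ (y · x) ∧ Differentiable ℂ (y₁ · x) := by
  have hq := isEntireFamily_addConstCoeff P
  have hc := isEntireFamily_odeCoeff hq α β
  have hzero (a : ℕ → ℂ) : ∑' n, a n * 0 ^ n = a 0 := by
    rw [tsum_eq_single 0 fun n hn ↦ by simp [hn]]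
    simp
  refine ⟨_, _, fun l ↦ ⟨⟨hc.hasDerivAt_tsum l, fun x ↦ ?_⟩, ?_, ?_⟩,
    fun x ↦ ⟨hc.differentiable_tsum x, hc.derivative.differentiable_tsum x⟩⟩
  · refine (hc.derivative.hasDerivAt_tsum l x).congr_deriv ?_
    rw [tsum_odeCoeff_derivative₂ (hq.summable_norm l x) (hc.summable_norm l x),
      tsum_addConstCoeff]
  · rw [hzero, odeCoeff]
  · rw [hzero]
    simp [odeCoeff]

theorem exists_solution_family (P : Polynomial ℂ) (x₀ α β : ℂ) : ∃ y y₁ : ℂ → ℂ → ℂ,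
    (∀ l, IsEntireSolution (fun x ↦ P.eval x + l) (y l) (y₁ l) ∧ y l x₀ = α ∧ y₁ l x₀ = β) ∧
    ∀ x, Differentiable ℂ (y · x) ∧ Differentiable ℂ (y₁ · x) := by
  obtain ⟨y, y₁, hy, hdiff⟩ :=
    exists_solution_family_zero (P.comp (Polynomial.X + Polynomial.C x₀)) α β
  refine ⟨fun l x ↦ y l (x - x₀), fun l x ↦ y₁ l (x - x₀), fun l ↦ ?_, fun x ↦ hdiff _⟩
  obtain ⟨hsol, hα, hβ⟩ := hy l
  exact ⟨by simpa using hsol.comp_sub_const x₀, by simpa using hα, by simpa using hβ⟩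

theorem exists_isFundamentalSystem_family (P : Polynomial ℂ) (x₀ : ℂ) :
    ∃ c c₁ s s₁ : ℂ → ℂ → ℂ,
      (∀ l, IsFundamentalSystem (fun x ↦ P.eval x + l) x₀ (c l) (c₁ l) (s l) (s₁ l)) ∧
      ∀ x, (Differentiable ℂ (c · x) ∧ Differentiable ℂ (c₁ · x)) ∧
        Differentiable ℂ (s · x) ∧ Differentiable ℂ (s₁ · x) := by
  obtain ⟨c, c₁, hc, hcd⟩ := exists_solution_family P x₀ 1 0
  obtain ⟨s, s₁, hs, hsd⟩ := exists_solution_family P x₀ 0 1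
  exact ⟨c, c₁, s, s₁, fun l ↦ ⟨(hc l).1, (hs l).1, (hc l).2.1, (hc l).2.2, (hs l).2.1,
    (hs l).2.2⟩, fun x ↦ ⟨hcd x, hsd x⟩⟩

theorem IsEntireSolution.deriv_ne_zero {P : Polynomial ℂ} {l : ℂ} {v d : ℂ → ℂ}
    (h : IsEntireSolution (fun x ↦ P.eval x + l) v d) (hv : ∃ x, v x ≠ 0) {x₀ : ℂ}
    (h₀ : v x₀ = 0) : d x₀ ≠ 0 := by
  rintro h₁
  obtain ⟨c, c₁, s, s₁, hf, -⟩ := exists_isFundamentalSystem_family P x₀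
  obtain ⟨x, hx⟩ := hv
  exact hx (by simpa [h₀, h₁] using ((hf l).eq_add_mul h x).1)

/-! ### Decaying solutions on a half line -/

theorem not_tendsto_norm_sq_atTop {y : ℝ → ℂ} {B : ℝ} (hB : ∀ᶠ t in atTop, ‖y t‖ ≤ B) :
    ¬ Tendsto (fun t ↦ ‖y t‖ ^ 2) atTop atTop := fun h ↦ by
  obtain ⟨t, ht, hBt⟩ := ((h.eventually_gt_atTop (B ^ 2)).and hB).exists
  exact ht.not_ge (by gcongr)

namespace SolvesOn

variable {I : Set ℝ} {q y y₁ : ℝ → ℂ} {B X T t : ℝ}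

theorem monotoneOn_re_conj_mul (h : SolvesOn I q y y₁) (hI : Convex ℝ I)
    (hq : ∀ t ∈ I, 0 ≤ (q t).re) : MonotoneOn (fun t ↦ (conj (y t) * y₁ t).re) I :=
  monotoneOn_of_hasDerivAt_nonneg hI fun t ht ↦
    ⟨_, h.hasDerivAt_re_conj_mul ht, by have := hq t ht; positivity⟩

theorem norm_le_norm_left_of_re_conj_mul_nonpos (h : SolvesOn (Icc X T) q y y₁)
    (hq : ∀ t ∈ Icc X T, 0 ≤ (q t).re) (hT : (conj (y T) * y₁ T).re ≤ 0) (ht : t ∈ Icc X T) :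
    ‖y t‖ ≤ ‖y X‖ := by
  have hXT : X ≤ T := ht.1.trans ht.2
  have hflux := h.monotoneOn_re_conj_mul (convex_Icc X T) hq
  have hanti : AntitoneOn (fun t ↦ ‖y t‖ ^ 2) (Icc X T) :=
    antitoneOn_of_hasDerivAt_nonpos (convex_Icc X T) fun s hs ↦
      ⟨_, h.hasDerivAt_norm_sq hs,
        by linarith [hflux hs (right_mem_Icc.2 hXT) hs.2]⟩
  exact le_of_sq_le_sq (hanti (left_mem_Icc.2 hXT) ht ht.1) (norm_nonneg _)

theorem re_conj_mul_nonpos_of_bounded (h : SolvesOn (Ici X) q y y₁)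
    (hq : ∀ t ∈ Ici X, 0 ≤ (q t).re) (hB : ∀ᶠ t in atTop, ‖y t‖ ≤ B) (ht : t ∈ Ici X) :
    (conj (y t) * y₁ t).re ≤ 0 := by
  by_contra! hpos
  have hsub : Ici t ⊆ Ici X := Ici_subset_Ici.2 ht
  exact not_tendsto_norm_sq_atTop hB <|
    (h.mono hsub).tendsto_norm_sq_atTop_of_re_conj_mul_ge hpos fun s hs ↦
      h.monotoneOn_re_conj_mul (convex_Ici X) hq ht (hsub hs) hs

theorem tendsto_zero_of_bounded (h : SolvesOn (Ici X) q y y₁)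
    (hq : ∀ t ∈ Ici X, 1 ≤ (q t).re) (hB : ∀ᶠ t in atTop, ‖y t‖ ≤ B) :
    Tendsto y atTop (𝓝 0) := by
  have hq₀ : ∀ t ∈ Ici X, 0 ≤ (q t).re := fun t ht ↦ zero_le_one.trans (hq t ht)
  refine Metric.tendsto_atTop.2 fun ε hε ↦ ?_
  obtain ⟨T, hXT, hT⟩ : ∃ T ∈ Ici X, ‖y T‖ < ε := by
    by_contra! hge
    refine not_tendsto_norm_sq_atTop hB
      (h.tendsto_norm_sq_atTop_of_energy_ge (sq_pos_of_pos hε) fun t ht ↦ ?_)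
    calc ε ^ 2 ≤ 1 * ‖y t‖ ^ 2 := by rw [one_mul]; gcongr; exact hge t ht
      _ ≤ (q t).re * ‖y t‖ ^ 2 := by gcongr; exact hq t ht
      _ ≤ _ := le_add_of_nonneg_left (sq_nonneg _)
  refine ⟨T, fun t hTt ↦ ?_⟩
  have hsub : Icc T t ⊆ Ici X := fun s hs ↦ le_trans hXT hs.1
  rw [dist_zero_right]
  exact ((h.mono hsub).norm_le_norm_left_of_re_conj_mul_nonpos (fun s hs ↦ hq₀ s (hsub hs))
    (h.re_conj_mul_nonpos_of_bounded hq₀ hB (le_trans hXT hTt)) ⟨hTt, le_rfl⟩).trans_lt hT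

/-- Completing the square with the slope `a` of the chord from `X` to `T` gives
`‖y₁‖² ≥ 2 re (conj a * y₁) - ‖a‖²`, which is then integrated. -/
theorem norm_sq_le_mul_re_conj_mul (h : SolvesOn (Icc X T) q y y₁)
    (hq : ∀ t ∈ Icc X T, 0 ≤ (q t).re) (h₀ : y X = 0) (hXT : X < T) :
    ‖y T‖ ^ 2 ≤ (T - X) * (conj (y T) * y₁ T).re := by
  have hT : 0 < T - X := sub_pos.2 hXT
  set a : ℂ := y T / ((T - X : ℝ) : ℂ) with ha
  have hsqrt := add_mul_sub_le_of_le_hasDerivAt (convex_Icc X T) (C := -‖a‖ ^ 2)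
    (f := fun t ↦ (conj (y t) * y₁ t).re - 2 * (conj a * y t).re) (fun t ht ↦ by
      have hre : HasDerivAt (fun t ↦ (conj a * y t).re) (conj a * y₁ t).re t :=
        Complex.reCLM.hasFDerivAt.comp_hasDerivAt t ((h.hasDerivAt t ht).const_mul _)
      refine ⟨_, (h.hasDerivAt_re_conj_mul ht).sub (hre.const_mul 2), ?_⟩
      have hsq : 0 ≤ ‖y₁ t - a‖ ^ 2 := sq_nonneg _
      have : 0 ≤ (q t).re * ‖y t‖ ^ 2 := mul_nonneg (hq t ht) (sq_nonneg _)
      rw [Complex.sq_norm, normSq_sub, ← Complex.sq_norm, ← Complex.sq_norm, mul_comm (y₁ t)] at hsq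
      linarith) (left_mem_Icc.2 hXT.le) (right_mem_Icc.2 hXT.le) hXT.le
  have hay : (conj a * y T).re = ‖y T‖ ^ 2 / (T - X) := by
    rw [ha, map_div₀, conj_ofReal, div_mul_eq_mul_div, Complex.conj_mul', div_ofReal_re,
      ← ofReal_pow, ofReal_re]
  have haa : ‖a‖ ^ 2 * (T - X) = ‖y T‖ ^ 2 / (T - X) := by
    rw [ha, norm_div, Complex.norm_real, Real.norm_of_nonneg hT.le]
    field_simp
  simp only [h₀, map_zero, zero_mul, mul_zero, zero_re, sub_zero, zero_add, hay] at hsqrt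
  have hfinal : ‖y T‖ ^ 2 / (T - X) ≤ (conj (y T) * y₁ T).re := by linarith
  rwa [div_le_iff₀' hT] at hfinal

theorem monotoneOn_norm_sq_div_sq (h : SolvesOn (Ici X) q y y₁)
    (hq : ∀ t ∈ Ici X, 0 ≤ (q t).re) (h₀ : y X = 0) :
    MonotoneOn (fun t ↦ ‖y t‖ ^ 2 / (t - X) ^ 2) (Ioi X) :=
  monotoneOn_of_hasDerivAt_nonneg (convex_Ioi X) fun t (ht : X < t) ↦ by
    have hXt : 0 < t - X := sub_pos.2 ht
    have hflux := (h.mono Icc_subset_Ici_self).norm_sq_le_mul_re_conj_mul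
      (fun s hs ↦ hq s hs.1) h₀ ht
    refine ⟨_, (h.hasDerivAt_norm_sq ht.le).div (((hasDerivAt_id t).sub_const X).pow 2)
      (by simpa using hXt.ne'), div_nonneg ?_ (by positivity)⟩
    simp only [id_eq, Nat.cast_ofNat, Nat.add_one_sub_one, pow_one, mul_one, sub_nonneg]
    nlinarith

theorem sub_le_norm (h : SolvesOn (Ici X) q y y₁) (hq : ∀ t ∈ Ici X, 0 ≤ (q t).re)
    (h₀ : y X = 0) (h₁ : ‖y₁ X‖ = 1) (hXT : X < T) : T - X ≤ ‖y T‖ := by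
  have hlim : Tendsto (fun t ↦ ‖y t‖ ^ 2 / (t - X) ^ 2) (𝓝[>] X) (𝓝 1) := by
    have hslope := (hasDerivWithinAt_iff_tendsto_slope' self_notMem_Ioi).1
      (h.hasDerivAt X self_mem_Ici).hasDerivWithinAt
    have hsq := hslope.norm.pow 2
    rw [h₁, one_pow] at hsq
    refine hsq.congr fun t ↦ ?_
    rw [slope_def_module, h₀, sub_zero, norm_smul, mul_pow, Real.norm_eq_abs, sq_abs, inv_pow,
      inv_mul_eq_div]
  have hle : 1 ≤ ‖y T‖ ^ 2 / (T - X) ^ 2 := by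
    refine le_of_tendsto hlim ?_
    filter_upwards [Ioo_mem_nhdsGT hXT] with t ht
    exact h.monotoneOn_norm_sq_div_sq hq h₀ ht.1 hXT ht.2.le
  rw [one_le_div (pow_pos (sub_pos.2 hXT) 2)] at hle
  exact le_of_sq_le_sq hle (norm_nonneg _)

end SolvesOn

section Weyl

/-- The sample points `X + n + 1` at which the approximate Weyl coefficients are defined. -/
noncomputable def weylPoint (X : ℝ) (n : ℕ) : ℝ := X + n + 1

/-- The coefficient `W` for which `c + W s` vanishes at the `n`-th sample point of the ray in the
direction `w`; the limit of these coefficients makes `c + W s` decay along the ray. -/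
noncomputable def weylCoeff (w : ℂ) (X : ℝ) (c s : ℂ → ℂ) (n : ℕ) : ℂ :=
  -c (w * weylPoint X n) / s (w * weylPoint X n)

theorem lt_weylPoint (X : ℝ) (n : ℕ) : X < weylPoint X n := by
  rw [weylPoint]
  have : (0 : ℝ) ≤ n := n.cast_nonneg
  linarith

variable {w : ℂ} {X : ℝ} {q c c₁ s s₁ v d : ℂ → ℂ}

namespace IsFundamentalSystem

theorem sub_le_norm_right (hf : IsFundamentalSystem q (w * X) c c₁ s s₁) (hw : ‖w‖ = 1)
    (hq : ∀ t ∈ Ici X, 1 ≤ (w ^ 2 * q (w * t)).re) {T : ℝ} (hT : X < T) :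
    T - X ≤ ‖s (w * T)‖ :=
  (hf.right.solvesOn w (Ici X)).sub_le_norm (fun t ht ↦ zero_le_one.trans (hq t ht))
    hf.right_base (by rw [hf.right_deriv_base, mul_one, hw]) hT

theorem add_one_le_norm_right (hf : IsFundamentalSystem q (w * X) c c₁ s s₁) (hw : ‖w‖ = 1)
    (hq : ∀ t ∈ Ici X, 1 ≤ (w ^ 2 * q (w * t)).re) (n : ℕ) :
    (n : ℝ) + 1 ≤ ‖s (w * weylPoint X n)‖ := by
  have := hf.sub_le_norm_right hw hq (lt_weylPoint X n)
  rw [weylPoint] at this ⊢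
  linarith

theorem right_weylPoint_ne_zero (hf : IsFundamentalSystem q (w * X) c c₁ s s₁) (hw : ‖w‖ = 1)
    (hq : ∀ t ∈ Ici X, 1 ≤ (w ^ 2 * q (w * t)).re) (n : ℕ) : s (w * weylPoint X n) ≠ 0 :=
  norm_pos_iff.1 (n.cast_add_one_pos.trans_le (hf.add_one_le_norm_right hw hq n))

theorem add_weylCoeff_mul_eq_zero (hf : IsFundamentalSystem q (w * X) c c₁ s s₁) (hw : ‖w‖ = 1)
    (hq : ∀ t ∈ Ici X, 1 ≤ (w ^ 2 * q (w * t)).re) (n : ℕ) :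
    c (w * weylPoint X n) + weylCoeff w X c s n * s (w * weylPoint X n) = 0 := by
  rw [weylCoeff, div_mul_cancel₀ _ (hf.right_weylPoint_ne_zero hw hq n), add_neg_cancel]

theorem norm_add_weylCoeff_mul_le_one (hf : IsFundamentalSystem q (w * X) c c₁ s s₁)
    (hw : ‖w‖ = 1) (hq : ∀ t ∈ Ici X, 1 ≤ (w ^ 2 * q (w * t)).re) {n : ℕ} {t : ℝ}
    (ht : t ∈ Icc X (weylPoint X n)) :
    ‖c (w * t) + weylCoeff w X c s n * s (w * t)‖ ≤ 1 := by
  have hle := ((hf.left.add_mul hf.right (weylCoeff w X c s n)).solvesOn w _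
    ).norm_le_norm_left_of_re_conj_mul_nonpos (fun t ht ↦ zero_le_one.trans (hq t ht.1))
    (by rw [hf.add_weylCoeff_mul_eq_zero hw hq, map_zero, zero_mul, zero_re]) ht
  simpa [hf.left_base, hf.right_base] using hle

theorem norm_weylCoeff_sub_le (hf : IsFundamentalSystem q (w * X) c c₁ s s₁) (hw : ‖w‖ = 1)
    (hq : ∀ t ∈ Ici X, 1 ≤ (w ^ 2 * q (w * t)).re) {n k : ℕ} (hnk : n ≤ k) :
    ‖weylCoeff w X c s k - weylCoeff w X c s n‖ ≤ 1 / ((n : ℝ) + 1) := by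
  have hmem : weylPoint X n ∈ Icc X (weylPoint X k) :=
    ⟨(lt_weylPoint X n).le, by unfold weylPoint; gcongr⟩
  have hle := hf.norm_add_weylCoeff_mul_le_one hw hq hmem
  rw [show c (w * weylPoint X n) + weylCoeff w X c s k * s (w * weylPoint X n) =
      (weylCoeff w X c s k - weylCoeff w X c s n) * s (w * weylPoint X n) by
    linear_combination hf.add_weylCoeff_mul_eq_zero hw hq n, norm_mul] at hle
  rw [le_div_iff₀ (by positivity)]
  exact (mul_le_mul_of_nonneg_left (hf.add_one_le_norm_right hw hq n) (norm_nonneg _)).trans hle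

theorem exists_weylCoeff_limit (hf : IsFundamentalSystem q (w * X) c c₁ s s₁) (hw : ‖w‖ = 1)
    (hq : ∀ t ∈ Ici X, 1 ≤ (w ^ 2 * q (w * t)).re) :
    ∃ W, (∀ n : ℕ, ‖W - weylCoeff w X c s n‖ ≤ 1 / ((n : ℝ) + 1)) ∧
      Tendsto (fun t : ℝ ↦ c (w * t) + W * s (w * t)) atTop (𝓝 0) := by
  have hcauchy : CauchySeq (weylCoeff w X c s) :=
    cauchySeq_of_le_tendsto_0' _ (fun n k hnk ↦ by
      rw [dist_comm, dist_eq_norm]; exact hf.norm_weylCoeff_sub_le hw hq hnk)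
      tendsto_one_div_add_atTop_nhds_zero_nat
  obtain ⟨W, hW⟩ := cauchySeq_tendsto_of_complete hcauchy
  have hbound : ∀ t ∈ Ici X, ‖c (w * t) + W * s (w * t)‖ ≤ 1 := fun t ht ↦ by
    refine le_of_tendsto ((hW.mul_const _).const_add _).norm ?_
    filter_upwards [eventually_ge_atTop ⌈t - X⌉₊] with n hn
    have : t - X ≤ n := Nat.ceil_le.1 hn
    exact hf.norm_add_weylCoeff_mul_le_one hw hq ⟨ht, by rw [weylPoint]; linarith⟩
  refine ⟨W, fun n ↦ le_of_tendsto (hW.sub_const _).norm ?_, ?_⟩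
  · filter_upwards [eventually_ge_atTop n] with k hk using hf.norm_weylCoeff_sub_le hw hq hk
  · exact ((hf.left.add_mul hf.right W).solvesOn w (Ici X)).tendsto_zero_of_bounded hq
      ((eventually_ge_atTop X).mono hbound)

theorem eq_mul_of_tendsto_zero (hf : IsFundamentalSystem q (w * X) c c₁ s s₁) (hw : ‖w‖ = 1)
    (hq : ∀ t ∈ Ici X, 1 ≤ (w ^ 2 * q (w * t)).re) {W : ℂ}
    (hW : Tendsto (fun t : ℝ ↦ c (w * t) + W * s (w * t)) atTop (𝓝 0))
    (h : IsEntireSolution q v d) (hv : Tendsto (fun t : ℝ ↦ v (w * t)) atTop (𝓝 0)) (x : ℂ) :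
    v x = v (w * X) * (c x + W * s x) ∧ d x = v (w * X) * (c₁ x + W * s₁ x) := by
  have hrepr := hf.eq_add_mul h
  have hW₀ : d (w * X) - v (w * X) * W = 0 := by
    by_contra hne
    have hpos := norm_pos_iff.2 hne
    have hlim : Tendsto (fun t : ℝ ↦ (d (w * X) - v (w * X) * W) * s (w * t)) atTop (𝓝 0) := by
      have := hv.sub (hW.const_mul (v (w * X)))
      rw [mul_zero, sub_zero] at this
      exact this.congr fun t ↦ by rw [(hrepr (w * t)).1]; ring
    obtain ⟨t, hlt, ht⟩ := ((hlim.norm.eventually_lt_const (by rwa [norm_zero])).and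
      (eventually_ge_atTop (X + 1))).exists
    have hs := hf.sub_le_norm_right hw hq (show X < t by linarith)
    rw [norm_mul] at hlt
    nlinarith
  obtain ⟨hvx, hdx⟩ := hrepr x
  constructor
  · rw [hvx]; linear_combination s x * hW₀
  · rw [hdx]; linear_combination s₁ x * hW₀

end IsFundamentalSystem

/-- A holomorphic choice, for the parameter `l` in `U`, of a nonzero solution of `v'' = q l v`
decaying along the ray in the direction `w`, where this solution is unique up to a factor. -/
structure IsDecayingFamily (w : ℂ) (q : ℂ → ℂ → ℂ) (U : Set ℂ) (f f₁ : ℂ → ℂ → ℂ) : Prop where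
  isEntireSolution : ∀ l ∈ U, IsEntireSolution (q l) (f l) (f₁ l)
  exists_ne_zero : ∀ l ∈ U, ∃ x, f l x ≠ 0
  tendsto_zero : ∀ l ∈ U, Tendsto (fun t : ℝ ↦ f l (w * t)) atTop (𝓝 0)
  exists_eq_mul : ∀ l ∈ U, ∀ v d, IsEntireSolution (q l) v d →
    Tendsto (fun t : ℝ ↦ v (w * t)) atTop (𝓝 0) → ∃ a, ∀ x, v x = a * f l x ∧ d x = a * f₁ l x
  differentiableOn : ∀ x, DifferentiableOn ℂ (f · x) U
  differentiableOn_deriv : ∀ x, DifferentiableOn ℂ (f₁ · x) U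

theorem exists_isDecayingFamily (P : Polynomial ℂ) (hw : ‖w‖ = 1) {U : Set ℂ} (hU : IsOpen U)
    (hP : ∀ l ∈ U, ∀ t ∈ Ici X, 1 ≤ (w ^ 2 * (P.eval (w * t) + l)).re) :
    ∃ f f₁, IsDecayingFamily w (fun l x ↦ P.eval x + l) U f f₁ := by
  obtain ⟨c, c₁, s, s₁, hf, hdiff⟩ := exists_isFundamentalSystem_family P (w * X)
  choose! W hWn hW using fun l hl ↦ (hf l).exists_weylCoeff_limit hw (hP l hl)
  have hWdiff : DifferentiableOn ℂ W U := by
    refine (Metric.tendstoUniformlyOn_iff.2 fun ε hε ↦ ?_ :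
      TendstoUniformlyOn (fun n l ↦ weylCoeff w X (c l) (s l) n) W atTop U
      ).tendstoLocallyUniformlyOn.differentiableOn (.of_forall fun n ↦ ?_) hU
    · filter_upwards [(tendsto_one_div_add_atTop_nhds_zero_nat (𝕜 := ℝ)).eventually_lt_const hε]
        with n hn l hl
      rw [dist_eq_norm]
      exact (hWn l hl n).trans_lt hn
    · exact (hdiff _).1.1.differentiableOn.fun_neg.fun_div (hdiff _).2.1.differentiableOn
        fun l hl ↦ (hf l).right_weylPoint_ne_zero hw (hP l hl) n
  exact ⟨fun l x ↦ c l x + W l * s l x, fun l x ↦ c₁ l x + W l * s₁ l x,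
    { isEntireSolution := fun l _ ↦ (hf l).left.add_mul (hf l).right (W l)
      exists_ne_zero := fun l _ ↦ ⟨w * X, by simp [(hf l).left_base, (hf l).right_base]⟩
      tendsto_zero := hW
      exists_eq_mul := fun l hl v d hv hlim ↦
        ⟨v (w * X), (hf l).eq_mul_of_tendsto_zero hw (hP l hl) (hW l hl) hv hlim⟩
      differentiableOn := fun x ↦
        (hdiff x).1.1.differentiableOn.fun_add (hWdiff.fun_mul (hdiff x).2.1.differentiableOn)
      differentiableOn_deriv := fun x ↦
        (hdiff x).1.2.differentiableOn.fun_add (hWdiff.fun_mul (hdiff x).2.2.differentiableOn) }⟩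

end Weyl

/-! ### Rotated eigenfunctions -/

/-- The polynomial `x ^ m + P x`. -/
noncomputable def potential (m : ℕ) (a : ℕ → ℝ) : Polynomial ℂ :=
  Polynomial.X ^ m + ∑ j ∈ Finset.Icc 1 (m - 1), Polynomial.C (a j : ℂ) * Polynomial.X ^ (m - j)

/-- The `ℓ¹` norm of the coefficients of `P`. -/
def coeffSum (m : ℕ) (a : ℕ → ℝ) : ℝ := ∑ j ∈ Finset.Icc 1 (m - 1), |a j|

section Potential

variable {m : ℕ} {a : ℕ → ℝ}

theorem eval_potential (x : ℂ) :
    (potential m a).eval x = x ^ m + Ppoly m (fun j ↦ (a j : ℂ)) x := by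
  simp [potential, Ppoly, Polynomial.eval_finsetSum]

theorem eval_conj_potential (x : ℂ) :
    (potential m a).eval (conj x) = conj ((potential m a).eval x) := by
  simp [eval_potential, Ppoly]

theorem coeffSum_nonneg : 0 ≤ coeffSum m a := Finset.sum_nonneg fun _ _ ↦ abs_nonneg _

theorem pow_le_one_add_pow {s : ℝ} (hs : 0 ≤ s) {i n : ℕ} (hin : i ≤ n) : s ^ i ≤ 1 + s ^ n := by
  rcases le_total s 1 with h | h
  · exact (pow_le_one₀ hs h).trans (le_add_of_nonneg_right (pow_nonneg hs n))
  · exact (pow_le_pow_right₀ h hin).trans (le_add_of_nonneg_left zero_le_one)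

theorem norm_Ppoly_le {k : ℝ} (hk : 1 ≤ k) (s : ℂ) :
    ‖Ppoly m (fun j ↦ (a j : ℂ)) (k * s)‖ ≤
      coeffSum m a * k ^ (m - 1) * (1 + ‖s‖ ^ (m - 1)) := by
  rw [Ppoly, coeffSum, Finset.sum_mul, Finset.sum_mul]
  refine (norm_sum_le _ _).trans (Finset.sum_le_sum fun j hj ↦ ?_)
  have hj' : m - j ≤ m - 1 := Nat.sub_le_sub_left (Finset.mem_Icc.1 hj).1 m
  calc ‖(a j : ℂ) * (k * s) ^ (m - j)‖ = |a j| * k ^ (m - j) * ‖s‖ ^ (m - j) := by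
        rw [norm_mul, norm_pow, norm_mul, mul_pow, Complex.norm_real, Complex.norm_real,
          Real.norm_of_nonneg (by linarith : 0 ≤ k), Real.norm_eq_abs, mul_assoc]
    _ ≤ |a j| * k ^ (m - 1) * (1 + ‖s‖ ^ (m - 1)) := by
        gcongr
        exact pow_le_one_add_pow (norm_nonneg s) hj'

theorem norm_Ppoly_sectorUnit_mul_le {t : ℝ} (ht : 0 ≤ t) :
    ‖Ppoly m (fun j ↦ (a j : ℂ)) (sectorUnit m * t)‖ ≤ coeffSum m a * (1 + t ^ (m - 1)) := by
  simpa [abs_of_nonneg ht] using norm_Ppoly_le (a := a) le_rfl (sectorUnit m * t)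

theorem one_le_re_sectorUnit_sq_mul (hm : 3 ≤ m) {l : ℂ} {t : ℝ}
    (ht : 2 * coeffSum m a + ‖l‖ + 1 ≤ t) :
    1 ≤ (sectorUnit m ^ 2 * ((potential m a).eval (sectorUnit m * t) + l)).re := by
  have hA : 0 ≤ coeffSum m a := coeffSum_nonneg
  have ht₁ : 1 ≤ t := by linarith [norm_nonneg l]
  have hpow : 1 ≤ t ^ (m - 1) := one_le_pow₀ ht₁
  set p := Ppoly m (fun j ↦ (a j : ℂ)) (sectorUnit m * t) with hp
  have hsplit : sectorUnit m ^ 2 * ((potential m a).eval (sectorUnit m * t) + l) =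
      ((t ^ m : ℝ) : ℂ) + sectorUnit m ^ 2 * (p + l) := by
    rw [eval_potential, mul_pow, ← hp, ofReal_pow]
    linear_combination (t : ℂ) ^ m * sectorUnit_pow_mul_sq (m := m)
  have hpert : ‖sectorUnit m ^ 2 * (p + l)‖ ≤ coeffSum m a * (1 + t ^ (m - 1)) + ‖l‖ := by
    rw [norm_mul, norm_pow, norm_sectorUnit, one_pow, one_mul]
    exact (norm_add_le p l).trans (by gcongr; exact norm_Ppoly_sectorUnit_mul_le (by linarith))
  rw [hsplit, add_re, ofReal_re, ← mul_pow_sub_one (by lia : m ≠ 0) t]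
  nlinarith [neg_le_of_abs_le (Complex.abs_re_le_norm (sectorUnit m ^ 2 * (p + l))), norm_nonneg l]

end Potential

/-- `v` is a nonzero entire solution of `v'' = (x ^ m + P x + l) v`, with derivative `d`, which
decays along the ray through `sectorUnit m`. -/
structure IsDecayingSolution (m : ℕ) (a : ℕ → ℝ) (l : ℂ) (v d : ℂ → ℂ) : Prop where
  isEntireSolution : IsEntireSolution (fun x ↦ (potential m a).eval x + l) v d
  exists_ne_zero : ∃ x, v x ≠ 0
  tendsto_zero : Tendsto (fun t : ℝ ↦ v (sectorUnit m * t)) atTop (𝓝 0)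

/-- `v` also decays along the conjugate ray: up to the rotation `v x = u (-i x)`, it is an
eigenfunction of `H(m, a)` for the eigenvalue `l`. -/
structure IsRotatedEigenfunction (m : ℕ) (a : ℕ → ℝ) (l : ℂ) (v d : ℂ → ℂ) : Prop extends
    IsDecayingSolution m a l v d where
  tendsto_zero_conj : Tendsto (fun t : ℝ ↦ v (conj (sectorUnit m) * t)) atTop (𝓝 0)

section RotatedEigenfunction

variable {m : ℕ} {a : ℕ → ℝ} {l : ℂ} {v d : ℂ → ℂ}

theorem IsEntireSolution.star_potential
    (h : IsEntireSolution (fun x ↦ (potential m a).eval x + l) v d) :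
    IsEntireSolution (fun x ↦ (potential m a).eval x + conj l) (fun x ↦ conj (v (conj x)))
      fun x ↦ conj (d (conj x)) := by
  simpa [eval_conj_potential] using h.star

theorem tendsto_zero_star {w : ℂ} (h : Tendsto (fun t : ℝ ↦ v (w * t)) atTop (𝓝 0)) :
    Tendsto (fun t : ℝ ↦ conj (v (conj (conj w * t)))) atTop (𝓝 0) := by
  simpa [Function.comp_def] using (Complex.continuous_conj.tendsto 0).comp h

theorem IsRotatedEigenfunction.star (h : IsRotatedEigenfunction m a l v d) :
    IsRotatedEigenfunction m a (conj l) (fun x ↦ conj (v (conj x)))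
      fun x ↦ conj (d (conj x)) where
  isEntireSolution := h.isEntireSolution.star_potential
  exists_ne_zero := h.exists_ne_zero.imp' conj fun x hx ↦ by simpa using hx
  tendsto_zero := by simpa using tendsto_zero_star h.tendsto_zero_conj
  tendsto_zero_conj := tendsto_zero_star h.tendsto_zero

theorem IsRotatedEigenfunction.star_pow_mul {k : ℝ} {e : ℂ}
    (h : IsRotatedEigenfunction m a ((k : ℂ) ^ m * e) v d) :
    IsRotatedEigenfunction m a ((k : ℂ) ^ m * conj e) (fun x ↦ conj (v (conj x)))
      fun x ↦ conj (d (conj x)) := by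
  simpa using h.star

theorem exp_neg_pi_div_two_add (θ : ℝ) :
    Complex.exp ((-(Real.pi / 2) + θ : ℝ) * I) = -I * Complex.exp (θ * I) := by
  rw [← Complex.exp_neg_pi_div_two_mul_I, ← Complex.exp_add]
  congr 1
  push_cast
  ring

theorem IsEigenvalue.exists_isRotatedEigenfunction
    (h : IsEigenvalue m (fun j ↦ (a j : ℂ)) l) : ∃ v d, IsRotatedEigenfunction m a l v d := by
  obtain ⟨u, hu, hconst, hode, hdecay, hdecay'⟩ := h
  have hu₂ : Differentiable ℂ (deriv u) :=
    (hu.contDiff : ContDiff ℂ 2 u).differentiable_deriv_two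
  have hrot (x : ℂ) : HasDerivAt (fun x ↦ -I * x) (-I) x := by
    simpa using (hasDerivAt_id x).const_mul (-I)
  have hangle : 2 * Real.pi / ((m : ℝ) + 2) = sectorAngle m := by
    rw [sectorAngle, liouvilleExp]
    ring
  refine ⟨fun x ↦ u (-I * x), fun x ↦ -I * deriv u (-I * x),
    ⟨⟨fun x ↦ ?_, fun x ↦ ?_⟩, ?_, ?_⟩, ?_⟩
  · exact ((hu _).hasDerivAt.comp x (hrot x)).congr_deriv (mul_comm _ _)
  · refine (((hu₂ _).hasDerivAt.comp x (hrot x)).const_mul (-I)).congr_deriv ?_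
    have hx := hode (-I * x)
    rw [show I * (-I * x) = x by linear_combination -x * I_sq] at hx
    rw [eval_potential]
    linear_combination hx + deriv (deriv u) (-I * x) * I_sq
  · by_contra! hzero
    refine hconst ⟨0, fun z ↦ ?_⟩
    simpa [← mul_assoc] using hzero (I * z)
  · refine hdecay.congr fun r ↦ ?_
    rw [exp_neg_pi_div_two_add, hangle, ← sectorUnit]
    ring_nf
  · refine hdecay'.congr fun r ↦ ?_
    have hconj : Complex.exp ((-sectorAngle m : ℝ) * I) = conj (sectorUnit m) := by
      rw [sectorUnit, ← Complex.exp_conj, map_mul, conj_ofReal, conj_I, ofReal_neg, neg_mul_comm]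
    rw [sub_eq_add_neg, exp_neg_pi_div_two_add, hangle, hconj]
    ring_nf

end RotatedEigenfunction

/-! ### Finiteness of bounded sets of eigenvalues -/

section Flux

variable {m : ℕ} {a : ℕ → ℝ} {l : ℂ} {v d : ℂ → ℂ}

theorem im_sectorUnit : (sectorUnit m).im = Real.sin (sectorAngle m) :=
  Complex.exp_ofReal_mul_I_im _

theorem sin_sectorAngle_pos (hm : 3 ≤ m) : 0 < Real.sin (sectorAngle m) :=
  Real.sin_pos_of_pos_of_lt_pi sectorAngle_pos
    (by linarith [two_mul_sectorAngle_lt_pi hm, sectorAngle_pos (m := m)])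

theorem conj_mul_self_sectorUnit : conj (sectorUnit m) * sectorUnit m = 1 := by
  rw [Complex.conj_mul', norm_sectorUnit]
  norm_num

theorem IsDecayingSolution.exists_hasDerivAt_flux_pos (hm : 3 ≤ m)
    (h : IsDecayingSolution m a l v d) {t : ℝ}
    (hq : (sectorUnit m * ((potential m a).eval (sectorUnit m * t) + l)).im < 0) :
    ∃ f', HasDerivAt (fun t : ℝ ↦ -(conj (sectorUnit m) *
      (conj (v (sectorUnit m * t)) * (sectorUnit m * d (sectorUnit m * t)))).im) f' t ∧
      0 < f' := by
  have hsol := (h.isEntireSolution.solvesOn (sectorUnit m) univ).hasDerivAt_conj_mul (mem_univ t)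
  refine ⟨_, (Complex.imCLM.hasFDerivAt.comp_hasDerivAt t
    (hsol.const_mul (conj (sectorUnit m)))).fun_neg, ?_⟩
  set q := sectorUnit m * ((potential m a).eval (sectorUnit m * t) + l) with hq_def
  set y := v (sectorUnit m * t)
  set y₁ := sectorUnit m * d (sectorUnit m * t)
  have hderiv : conj (sectorUnit m) * ((‖y₁‖ : ℂ) ^ 2 + sectorUnit m ^ 2 *
        ((potential m a).eval (sectorUnit m * t) + l) * (‖y‖ : ℂ) ^ 2) =
      ((‖y₁‖ ^ 2 : ℝ) : ℂ) * conj (sectorUnit m) + ((‖y‖ ^ 2 : ℝ) : ℂ) * q := by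
    rw [hq_def]
    push_cast
    linear_combination sectorUnit m * ((potential m a).eval (sectorUnit m * t) + l) *
      (‖y‖ : ℂ) ^ 2 * conj_mul_self_sectorUnit (m := m)
  rw [imCLM_apply, hderiv, add_im, im_ofReal_mul, im_ofReal_mul, conj_im, im_sectorUnit]
  have hsin := sin_sectorAngle_pos hm
  rcases eq_or_ne y 0 with h₀ | h₀
  · have hy₁' : 0 < ‖y₁‖ := norm_pos_iff.2 <| mul_ne_zero sectorUnit_ne_zero
      (h.isEntireSolution.deriv_ne_zero h.exists_ne_zero h₀)
    have := mul_pos (pow_pos hy₁' 2) hsin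
    rw [h₀, norm_zero]
    linarith
  · have := mul_pos (pow_pos (norm_pos_iff.2 h₀) 2) (neg_pos.2 hq)
    have := mul_nonneg (sq_nonneg ‖y₁‖) hsin.le
    linarith

/-- If the imaginary part of the flux were positive somewhere, it would stay so by monotonicity,
and the energy bound would make the solution grow. -/
theorem IsDecayingSolution.im_conj_mul_deriv_pos (hm : 3 ≤ m) (h : IsDecayingSolution m a l v d)
    (hq : ∀ t : ℝ, 0 ≤ t →
      (sectorUnit m * ((potential m a).eval (sectorUnit m * t) + l)).im < 0) :
    0 < (conj (v 0) * d 0).im := by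
  set H : ℝ → ℝ := fun t ↦ -(conj (sectorUnit m) *
    (conj (v (sectorUnit m * t)) * (sectorUnit m * d (sectorUnit m * t)))).im with hH
  choose! H' hH' hpos using fun t (ht : (0 : ℝ) ≤ t) ↦ h.exists_hasDerivAt_flux_pos hm (hq t ht)
  have hmono : StrictMonoOn H (Ici 0) := strictMonoOn_of_deriv_pos (convex_Ici 0)
    (fun t ht ↦ (hH' t ht).continuousAt.continuousWithinAt) fun t ht ↦ by
      have ht₀ : 0 ≤ t := interior_subset ht
      exact (hH' t ht₀).deriv ▸ hpos t ht₀
  have hle : H 1 ≤ 0 := by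
    by_contra! hpos₁
    set X := max 1 (2 * coeffSum m a + ‖l‖ + 1)
    have henergy : ∀ t ∈ Ici X, 2 * H 1 ≤ ‖sectorUnit m * d (sectorUnit m * t)‖ ^ 2 +
        (sectorUnit m ^ 2 * ((potential m a).eval (sectorUnit m * t) + l)).re *
          ‖v (sectorUnit m * t)‖ ^ 2 := fun t (ht : X ≤ t) ↦ by
      obtain ⟨ht₁, htX⟩ := max_le_iff.1 ht
      have hge : H 1 ≤ H t := hmono.monotoneOn (mem_Ici.2 zero_le_one)
        (mem_Ici.2 (zero_le_one.trans ht₁)) ht₁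
      have hflux : H t ≤ ‖v (sectorUnit m * t)‖ * ‖sectorUnit m * d (sectorUnit m * t)‖ := by
        refine (neg_le_abs _).trans ((Complex.abs_im_le_norm _).trans_eq ?_)
        rw [norm_mul, norm_mul, RCLike.norm_conj, RCLike.norm_conj, norm_sectorUnit, one_mul]
      have hre := one_le_re_sectorUnit_sq_mul hm htX
      nlinarith [sq_nonneg (‖v (sectorUnit m * t)‖ - ‖sectorUnit m * d (sectorUnit m * t)‖),
        sq_nonneg ‖v (sectorUnit m * t)‖]
    exact not_tendsto_norm_sq_atTop (h.tendsto_zero.norm.eventually_le_const (u := 1) (by simp))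
      ((h.isEntireSolution.solvesOn (sectorUnit m) (Ici X)).tendsto_norm_sq_atTop_of_energy_ge
        (mul_pos two_pos hpos₁) henergy)
  have h₀ : H 0 = -(conj (v 0) * d 0).im := by
    simp only [hH, ofReal_zero, mul_zero]
    rw [mul_left_comm, ← mul_assoc (conj (sectorUnit m)), conj_mul_self_sectorUnit, one_mul]
  linarith [hmono self_mem_Ici (zero_le_one' ℝ) one_pos]

theorem im_sectorUnit_mul_potential_add_le {t : ℝ} (ht : 0 ≤ t) :
    (sectorUnit m * ((potential m a).eval (sectorUnit m * t) + l)).im ≤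
      coeffSum m a * (1 + t ^ (m - 1)) - Real.sin (sectorAngle m) * t ^ m +
        (sectorUnit m * l).im := by
  set p := Ppoly m (fun j ↦ (a j : ℂ)) (sectorUnit m * t) with hp
  have hsplit : sectorUnit m * ((potential m a).eval (sectorUnit m * t) + l) =
      ((t ^ m : ℝ) : ℂ) * conj (sectorUnit m) + sectorUnit m * p + sectorUnit m * l := by
    rw [eval_potential, mul_pow, ← hp, ofReal_pow]
    linear_combination (t : ℂ) ^ m * conj (sectorUnit m) * sectorUnit_pow_mul_sq (m := m) -
      sectorUnit m ^ (m + 1) * (t : ℂ) ^ m * conj_mul_self_sectorUnit (m := m)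
  have hpert : (sectorUnit m * p).im ≤ coeffSum m a * (1 + t ^ (m - 1)) := by
    refine (le_abs_self _).trans ((Complex.abs_im_le_norm _).trans ?_)
    rw [norm_mul, norm_sectorUnit, one_mul]
    exact norm_Ppoly_sectorUnit_mul_le ht
  rw [hsplit, add_im, add_im, im_ofReal_mul, conj_im, im_sectorUnit]
  linarith

theorem im_sectorUnit_mul_le (hm : 3 ≤ m) (hre : l.re ≤ 0)
    (him : |l.im| ≤ Real.sin (sectorAngle m) / 4 * ‖l‖) :
    (sectorUnit m * l).im ≤ -(Real.sin (sectorAngle m) / 2 * ‖l‖) := by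
  have hs := sin_sectorAngle_pos hm
  have hcos : (sectorUnit m).re * l.im ≤ |l.im| := by
    refine (le_abs_self _).trans ?_
    rw [abs_mul]
    exact mul_le_of_le_one_left (abs_nonneg _)
      ((Complex.abs_re_le_norm _).trans_eq norm_sectorUnit)
  have hnorm : ‖l‖ ≤ -l.re + |l.im| := abs_of_nonpos hre ▸ Complex.norm_le_abs_re_add_abs_im l
  rw [mul_im, im_sectorUnit]
  nlinarith [Real.sin_le_one (sectorAngle m), abs_nonneg l.im]

theorem exists_mul_one_add_pow_le {A s : ℝ} (hA : 0 ≤ A) (hs : 0 < s) (n : ℕ) :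
    ∃ C, ∀ t : ℝ, 0 ≤ t → A * (1 + t ^ n) ≤ s * t ^ (n + 1) + C := by
  refine ⟨A * (1 + (A / s) ^ n), fun t ht ↦ ?_⟩
  rcases le_total t (A / s) with htT | htT
  · exact (mul_le_mul_of_nonneg_left (by gcongr) hA).trans (le_add_of_nonneg_left (by positivity))
  · have hpow : A * t ^ n ≤ s * t ^ (n + 1) :=
      calc A * t ^ n ≤ t * s * t ^ n := by gcongr; exact (div_le_iff₀ hs).1 htT
        _ = s * t ^ (n + 1) := by ring
    have : 0 ≤ A * (A / s) ^ n := by positivity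
    linarith

theorem eventually_im_sectorUnit_mul_potential_add_neg (hm : 3 ≤ m) :
    ∀ᶠ l : ℂ in Bornology.cobounded ℂ, l.re ≤ 0 →
      |l.im| ≤ Real.sin (sectorAngle m) / 4 * ‖l‖ → ∀ t : ℝ, 0 ≤ t →
        (sectorUnit m * ((potential m a).eval (sectorUnit m * t) + l)).im < 0 := by
  have hs := sin_sectorAngle_pos hm
  obtain ⟨C, hC⟩ := exists_mul_one_add_pow_le (coeffSum_nonneg (m := m) (a := a)) hs (m - 1)
  filter_upwards [(tendsto_norm_cobounded_atTop.const_mul_atTop (half_pos hs)).eventually_gt_atTop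
    C] with l hl hre him t ht
  have hpow := hC t ht
  rw [Nat.sub_add_cancel (by lia)] at hpow
  linarith [im_sectorUnit_mul_potential_add_le (m := m) (a := a) (l := l) ht,
    im_sectorUnit_mul_le hm hre him]

theorem eventually_im_conj_mul_deriv_pos (hm : 3 ≤ m) :
    ∀ᶠ l : ℂ in Bornology.cobounded ℂ, l.re ≤ 0 →
      |l.im| ≤ Real.sin (sectorAngle m) / 4 * ‖l‖ → ∀ v d, IsDecayingSolution m a l v d →
        0 < (conj (v 0) * d 0).im := by
  filter_upwards [eventually_im_sectorUnit_mul_potential_add_neg (a := a) hm]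
    with l hl hre him v d h using h.im_conj_mul_deriv_pos hm (hl hre him)

/-- The flux at the origin is odd under `v ↦ conj ∘ v ∘ conj`, which preserves eigenfunctions. -/
theorem eventually_not_isRotatedEigenfunction_of_re_nonpos (hm : 3 ≤ m) :
    ∀ᶠ l : ℂ in Bornology.cobounded ℂ, l.re ≤ 0 →
      |l.im| ≤ Real.sin (sectorAngle m) / 4 * ‖l‖ → ∀ v d, ¬ IsRotatedEigenfunction m a l v d := by
  filter_upwards [eventually_im_conj_mul_deriv_pos (a := a) hm,
    Complex.isometry_conj.antilipschitz.tendsto_cobounded.eventually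
      (eventually_im_conj_mul_deriv_pos (a := a) hm)]
    with l hl hl' hre him v d h
  have hpos := hl hre him v d h.toIsDecayingSolution
  have hneg := hl' (by simpa using hre) (by simpa using him) _ _ h.star.toIsDecayingSolution
  simp only [map_zero, Complex.conj_conj, mul_im, conj_re, conj_im] at hpos hneg
  linarith

end Flux

theorem finite_setOf_eq_zero_of_analyticOnNhd {f : ℂ → ℂ} {U K : Set ℂ} (hf : AnalyticOnNhd ℂ f U)
    (hU : IsPreconnected U) (hne : ∃ z ∈ U, f z ≠ 0) (hK : IsCompact K) (hKU : K ⊆ U) :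
    {z ∈ K | f z = 0}.Finite := by
  by_contra hinf
  obtain ⟨z, hz, hacc⟩ := Set.Infinite.exists_accPt_of_subset_isCompact hinf hK (sep_subset _ _)
  obtain ⟨w, hw, hfw⟩ := hne
  exact hfw (hf.eqOn_zero_of_preconnected_of_frequently_eq_zero hU (hKU hz)
    ((accPt_iff_frequently_nhdsNE.1 hacc).mono fun _ h ↦ h.2) hw)

section SpectralDet

variable {m : ℕ} {a : ℕ → ℝ} {l : ℂ} {v d : ℂ → ℂ} {U : Set ℂ} {f f₁ : ℂ → ℂ → ℂ}

/-- The Wronskian at the origin of the decaying solution `f l` and of its mirror image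
`conj ∘ f (conj l) ∘ conj`, which decays along the conjugate ray. It is holomorphic in `l` and
vanishes at the eigenvalues. -/
noncomputable def spectralDet (f f₁ : ℂ → ℂ → ℂ) (l : ℂ) : ℂ :=
  f l 0 * conj (f₁ (conj l) 0) - f₁ l 0 * conj (f (conj l) 0)

theorem differentiableOn_spectralDet (hU : IsOpen U) (hconj : ∀ l ∈ U, conj l ∈ U)
    (hf : DifferentiableOn ℂ (f · 0) U) (hf₁ : DifferentiableOn ℂ (f₁ · 0) U) :
    DifferentiableOn ℂ (spectralDet f f₁) U := by
  have hstar {g : ℂ → ℂ} (hg : DifferentiableOn ℂ g U) :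
      DifferentiableOn ℂ (fun l ↦ conj (g (conj l))) U := fun l hl ↦ by
    simpa [Function.comp_def] using (DifferentiableAt.conj_conj (hg.differentiableAt
      (hU.mem_nhds (hconj l hl)))).differentiableWithinAt (s := U)
  exact (hf.fun_mul (hstar hf₁)).fun_sub (hf₁.fun_mul (hstar hf))

theorem exists_isDecayingFamily_ball (hm : 3 ≤ m) (a : ℕ → ℝ) (R : ℝ) :
    ∃ f f₁, IsDecayingFamily (sectorUnit m) (fun l x ↦ (potential m a).eval x + l)
      (Metric.ball 0 R) f f₁ :=
  exists_isDecayingFamily (potential m a) norm_sectorUnit Metric.isOpen_ball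
    (X := 2 * coeffSum m a + R + 1) fun _ hl _ ht ↦ one_le_re_sectorUnit_sq_mul hm <|
      le_trans (by gcongr; exact (mem_ball_zero_iff.1 hl).le) ht

theorem IsDecayingFamily.isDecayingSolution
    (hf : IsDecayingFamily (sectorUnit m) (fun l x ↦ (potential m a).eval x + l) U f f₁)
    (hl : l ∈ U) : IsDecayingSolution m a l (f l) (f₁ l) :=
  ⟨hf.isEntireSolution l hl, hf.exists_ne_zero l hl, hf.tendsto_zero l hl⟩

theorem IsDecayingFamily.spectralDet_eq_zero
    (hf : IsDecayingFamily (sectorUnit m) (fun l x ↦ (potential m a).eval x + l) U f f₁)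
    (hl : l ∈ U) (hl' : conj l ∈ U) (h : IsRotatedEigenfunction m a l v d) :
    spectralDet f f₁ l = 0 := by
  obtain ⟨α, hα⟩ := hf.exists_eq_mul l hl v d h.isEntireSolution h.tendsto_zero
  obtain ⟨γ, hγ⟩ := hf.exists_eq_mul _ hl' _ _ h.star.isEntireSolution h.star.tendsto_zero
  have hα₀ : α ≠ 0 := by
    rintro rfl
    exact h.exists_ne_zero.elim fun x hx ↦ hx (by simp [hα x])
  have hγ₀ : conj γ ≠ 0 := by
    rintro hγ₀
    rw [map_eq_zero] at hγ₀
    exact h.star.exists_ne_zero.elim fun x hx ↦ hx (by simp [(hγ x).1, hγ₀])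
  have hv : v 0 = conj γ * conj (f (conj l) 0) := by simpa using congrArg conj (hγ 0).1
  have hd : d 0 = conj γ * conj (f₁ (conj l) 0) := by simpa using congrArg conj (hγ 0).2
  refine (mul_eq_zero.1 ?_).resolve_left (mul_ne_zero hα₀ hγ₀)
  calc α * conj γ * spectralDet f f₁ l
      = α * f l 0 * (conj γ * conj (f₁ (conj l) 0)) -
          α * f₁ l 0 * (conj γ * conj (f (conj l) 0)) := by rw [spectralDet]; ring
    _ = 0 := by rw [← (hα 0).1, ← (hα 0).2, ← hv, ← hd, mul_comm, sub_self]

theorem spectralDet_ofReal (x : ℝ) :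
    spectralDet f f₁ x = (-2 * (conj (f x 0) * f₁ x 0).im : ℝ) * I := by
  rw [spectralDet, conj_ofReal]
  apply Complex.ext <;> simp <;> ring

/-- At very negative reals the spectral determinant is the flux of the decaying solution. -/
theorem finite_setOf_norm_le_isRotatedEigenfunction (hm : 3 ≤ m) (R : ℝ) :
    {l : ℂ | ‖l‖ ≤ R ∧ ∃ v d, IsRotatedEigenfunction m a l v d}.Finite := by
  obtain ⟨x, hx⟩ : ∃ x : ℝ, ∀ v d, IsDecayingSolution m a x v d →
      0 < (conj (v 0) * d 0).im := by
    have hbot : Tendsto (fun x : ℝ ↦ (x : ℂ)) atBot (Bornology.cobounded ℂ) :=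
      tendsto_norm_atTop_iff_cobounded.1 (by simpa using tendsto_abs_atBot_atTop)
    obtain ⟨x, hx, hx₀⟩ := ((hbot.eventually (eventually_im_conj_mul_deriv_pos (a := a) hm)).and
      (eventually_le_atBot 0)).exists
    exact ⟨x, hx (by simpa) (by
      simpa using mul_nonneg (div_nonneg (sin_sectorAngle_pos hm).le zero_le_four) (abs_nonneg x))⟩
  obtain ⟨R', hR'⟩ := exists_gt (max R ‖(x : ℂ)‖)
  obtain ⟨hRR', hxR'⟩ := max_lt_iff.1 hR'
  set U := Metric.ball (0 : ℂ) R'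
  have hconj : ∀ l ∈ U, conj l ∈ U := fun l hl ↦ by simpa [U] using hl
  have hxU : (x : ℂ) ∈ U := mem_ball_zero_iff.2 hxR'
  have hRU : Metric.closedBall 0 R ⊆ U := Metric.closedBall_subset_ball hRR'
  obtain ⟨f, f₁, hf⟩ := exists_isDecayingFamily_ball hm a R'
  have han : AnalyticOnNhd ℂ (spectralDet f f₁) U := (differentiableOn_spectralDet
    Metric.isOpen_ball hconj (hf.differentiableOn 0) (hf.differentiableOn_deriv 0)).analyticOnNhd
      Metric.isOpen_ball
  have hne : spectralDet f f₁ x ≠ 0 := by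
    rw [spectralDet_ofReal]
    have hflux := (hx _ _ (hf.isDecayingSolution hxU)).ne'
    exact mul_ne_zero (ofReal_ne_zero.2 (mul_ne_zero (by norm_num) hflux)) I_ne_zero
  refine (finite_setOf_eq_zero_of_analyticOnNhd han (convex_ball 0 R').isPreconnected
    ⟨x, hxU, hne⟩ (isCompact_closedBall 0 R) hRU).subset ?_
  rintro l ⟨hlR, v, d, h⟩
  have hlK : l ∈ Metric.closedBall (0 : ℂ) R := by simpa using hlR
  exact ⟨hlK, hf.spectralDet_eq_zero (hRU hlK) (hconj l (hRU hlK)) h⟩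

end SpectralDet

/-! ### The semiclassical limit -/

section LogRatio

variable {m : ℕ} {a : ℕ → ℝ} {l x : ℂ} {v d : ℂ → ℂ} {U : Set ℂ} {f f₁ : ℂ → ℂ → ℂ}

/-- The logarithmic growth of `v` from `x` to the origin: the quantity computed by the WKB
asymptotics. -/
noncomputable def logRatio (v : ℂ → ℂ) (x : ℂ) : ℝ := Real.log ‖v 0 / v x‖

theorem logRatio_conj (v : ℂ → ℂ) (x : ℂ) :
    logRatio (fun z ↦ conj (v (conj z))) x = logRatio v (conj x) := by
  simp [logRatio]

theorem IsDecayingFamily.logRatio_eq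
    (hf : IsDecayingFamily (sectorUnit m) (fun l x ↦ (potential m a).eval x + l) U f f₁)
    (hl : l ∈ U) (h : IsDecayingSolution m a l v d) (x : ℂ) :
    logRatio v x = logRatio (f l) x := by
  obtain ⟨α, hα⟩ := hf.exists_eq_mul l hl v d h.isEntireSolution h.tendsto_zero
  have hα₀ : α ≠ 0 := by
    rintro rfl
    exact h.exists_ne_zero.elim fun x hx ↦ hx (by simp [hα x])
  rw [logRatio, (hα 0).1, (hα x).1, mul_div_mul_left _ _ hα₀, logRatio]

theorem IsDecayingFamily.harmonicAt_logRatio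
    (hf : IsDecayingFamily (sectorUnit m) (fun l x ↦ (potential m a).eval x + l) U f f₁)
    (hU : IsOpen U) {κ e : ℂ} (he : κ * e ∈ U) (h₀ : f (κ * e) 0 ≠ 0) (hx : f (κ * e) x ≠ 0) :
    InnerProductSpace.HarmonicAt (fun e ↦ logRatio (f (κ * e)) x) e :=
  have han (y : ℂ) : AnalyticAt ℂ (fun e ↦ f (κ * e) y) e :=
    ((hf.differentiableOn y).analyticAt (hU.mem_nhds he)).comp
      (analyticAt_const.mul analyticAt_id)
  ((han 0).div (han x) hx).harmonicAt_log_norm (div_ne_zero h₀ hx)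

end LogRatio

section Scaling

variable {m : ℕ} {a : ℕ → ℝ} {k : ℝ} {e : ℂ} {v d : ℂ → ℂ}

theorem IsDecayingSolution.isSectorSolution (hm : 3 ≤ m) (hk : 1 ≤ k)
    (h : IsDecayingSolution m a ((k : ℂ) ^ m * e) v d) :
    IsSectorSolution m (√(k ^ (m + 2))) (coeffSum m a / k) e (fun s ↦ v (k * s))
      (fun s ↦ k * d (k * s)) fun s ↦ Ppoly m (fun j ↦ (a j : ℂ)) (k * s) / (k : ℂ) ^ m := by
  have hk₀ : 0 < k := one_pos.trans_le hk
  have hkc : (k : ℂ) ≠ 0 := ofReal_ne_zero.2 hk₀.ne'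
  have hscale (x : ℂ) : HasDerivAt (fun s : ℂ ↦ k * s) k x := by
    simpa using (hasDerivAt_id x).const_mul (k : ℂ)
  refine ⟨fun x ↦ ?_, fun x ↦ ?_, fun x ↦ ?_, fun x hx ↦ ?_, ?_⟩
  · exact ((h.isEntireSolution.hasDerivAt _).comp x (hscale x)).congr_deriv (mul_comm _ _)
  · refine (((h.isEntireSolution.hasDerivAt_deriv _).comp x (hscale x)).const_mul
      (k : ℂ)).congr_deriv ?_
    have hK : (√(k ^ (m + 2)) : ℂ) ^ 2 = (k : ℂ) ^ m * (k : ℂ) ^ 2 := by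
      rw [← ofReal_pow, Real.sq_sqrt (by positivity), ofReal_pow, pow_add]
    rw [hK, eval_potential]
    field_simp
    ring
  · rw [norm_div, norm_pow, Complex.norm_real, Real.norm_of_nonneg hk₀.le,
      div_le_iff₀ (by positivity)]
    refine (norm_Ppoly_le hk x).trans_eq ?_
    rw [← mul_pow_sub_one (by lia : m ≠ 0) k]
    field_simp
  · exact mul_ne_zero hkc (h.isEntireSolution.deriv_ne_zero h.exists_ne_zero hx)
  · refine (h.tendsto_zero.comp (tendsto_id.const_mul_atTop hk₀)).congr fun t ↦ ?_
    simp [mul_left_comm]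

theorem tendsto_semiclassical (m : ℕ) {A : ℝ} (hA : 0 ≤ A) :
    Tendsto (fun k : ℝ ↦ (√(k ^ (m + 2)), A / k)) atTop semiclassical :=
  (Real.tendsto_sqrt_atTop.comp (tendsto_pow_atTop (by lia))).prodMk <|
    tendsto_nhdsWithin_iff.2 ⟨tendsto_id.const_div_atTop A, (eventually_ge_atTop 0).mono
      fun _ hk ↦ div_nonneg hA hk⟩

theorem exists_eventually_logRatio_bounds (hm : 3 ≤ m) (a : ℕ → ℝ) {c ε : ℝ} (hc : 0 < c)
    (hε : 0 < ε) : ∃ L : ℝ, 1 ≤ L ∧ ∀ᶠ k : ℝ in atTop, ∀ e v d,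
      IsDecayingSolution m a ((k : ℂ) ^ m * e) v d → ‖e‖ ≤ 2 → v (k * L) ≠ 0 ∧
        (v 0 ≠ 0 → logRatio v (k * L) ≤ √(k ^ (m + 2)) * (sectorAction m e L + ε)) ∧
        (c ≤ ‖e‖ + (sectorUnit m ^ 2 * e).re → v 0 ≠ 0 ∧
          √(k ^ (m + 2)) * (sectorAction m e L - ε) ≤ logRatio v (k * L)) := by
  obtain ⟨L, hL, hbounds⟩ := IsSectorSolution.exists_eventually_norm_bounds hm hc hε
  refine ⟨L, hL, ?_⟩
  filter_upwards [(tendsto_semiclassical m coeffSum_nonneg).eventually hbounds,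
    eventually_ge_atTop 1] with k hk hk₁ e v d h he
  obtain ⟨hne, hupper, hlower⟩ := hk _ _ _ _ (h.isSectorSolution hm hk₁) he
  simp only [mul_zero] at hupper hlower
  have hpos : 0 < ‖v (k * L)‖ := norm_pos_iff.2 hne
  refine ⟨hne, fun h₀ ↦ ?_, fun hce ↦ (hlower hce).imp_right fun hle ↦ ?_⟩
  · rwa [logRatio, norm_div, Real.log_le_iff_le_exp (div_pos (norm_pos_iff.2 h₀) hpos),
      div_le_iff₀ hpos]
  · have h₀ : 0 < ‖v 0‖ := norm_pos_iff.2 (hlower hce).1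
    rwa [logRatio, norm_div, Real.le_log_iff_exp_le (div_pos h₀ hpos), le_div_iff₀ hpos]

theorem norm_pow_mul (m : ℕ) (hk : 0 ≤ k) (e : ℂ) : ‖(k : ℂ) ^ m * e‖ = k ^ m * ‖e‖ := by
  rw [norm_mul, norm_pow, Complex.norm_real, Real.norm_of_nonneg hk]

theorem eventually_cobounded_of_eventually_pow_mul (hm : m ≠ 0) {p : ℂ → Prop}
    (h : ∀ᶠ k : ℝ in atTop, ∀ e : ℂ, ‖e‖ = 1 → p ((k : ℂ) ^ m * e)) :
    ∀ᶠ l in Bornology.cobounded ℂ, p l := by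
  have hroot : Tendsto (fun l : ℂ ↦ ‖l‖ ^ (m : ℝ)⁻¹) (Bornology.cobounded ℂ) atTop :=
    (tendsto_rpow_atTop (by positivity)).comp tendsto_norm_cobounded_atTop
  filter_upwards [hroot.eventually h, tendsto_norm_cobounded_atTop.eventually_gt_atTop 0]
    with l hl hl₀
  have hpow : ((‖l‖ ^ (m : ℝ)⁻¹ : ℝ) : ℂ) ^ m = ‖l‖ := by
    rw [← ofReal_pow, Real.rpow_inv_natCast_pow hl₀.le hm]
  have hlc : (‖l‖ : ℂ) ≠ 0 := ofReal_ne_zero.2 hl₀.ne'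
  simpa [hpow, mul_div_cancel₀, hlc, hl₀.ne'] using hl (l / ‖l‖) (by simp [hl₀.ne'])

end Scaling

section Admissible

variable {m : ℕ} {e : ℂ}

theorem le_norm_add_re_sectorUnit_sq_mul (he : ‖e‖ = 1)
    (him : Real.sin (2 * sectorAngle m) * e.im ≤ 0) :
    Real.sin (2 * sectorAngle m) ^ 2 / 2 ≤ ‖e‖ + (sectorUnit m ^ 2 * e).re := by
  have hre : (sectorUnit m ^ 2 * e).re =
      Real.cos (2 * sectorAngle m) * e.re - Real.sin (2 * sectorAngle m) * e.im := by
    rw [sectorUnit_sq, mul_re, Complex.exp_ofReal_mul_I_re, Complex.exp_ofReal_mul_I_im]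
  have hcos : -|Real.cos (2 * sectorAngle m)| ≤ Real.cos (2 * sectorAngle m) * e.re := by
    refine neg_le_of_abs_le ?_
    rw [abs_mul]
    exact mul_le_of_le_one_right (abs_nonneg _) ((Complex.abs_re_le_norm e).trans_eq he)
  rw [hre, he, Real.sin_sq, ← sq_abs (Real.cos _)]
  nlinarith [sq_nonneg (1 - |Real.cos (2 * sectorAngle m)|)]

theorem norm_le_two_and_le_of_norm_sub_one_le
    (he : ‖e - 1‖ ≤ Real.sin (2 * sectorAngle m) ^ 2 / 8) :
    ‖e‖ ≤ 2 ∧ Real.sin (2 * sectorAngle m) ^ 2 / 4 ≤ ‖e‖ + (sectorUnit m ^ 2 * e).re := by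
  have hone := le_norm_add_re_sectorUnit_sq_mul (m := m) (e := 1) (by simp) (by simp)
  have hsub : |‖e‖ - ‖(1 : ℂ)‖| ≤ ‖e - 1‖ := abs_norm_sub_norm_le e 1
  have hre : |(sectorUnit m ^ 2 * (e - 1)).re| ≤ ‖e - 1‖ :=
    (Complex.abs_re_le_norm _).trans_eq (by simp)
  rw [mul_sub, sub_re] at hre
  rw [norm_one] at hone hsub
  have := abs_le.1 hsub
  have := abs_le.1 hre
  exact ⟨by linarith [Real.sin_sq_le_one (2 * sectorAngle m)], by linarith⟩

end Admissible

/-! ### Eigenvalues near the positive axis -/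

theorem abs_sub_le_of_harmonicOnNhd_ball {h : ℂ → ℝ} {c w : ℂ} {R M : ℝ}
    (hh : InnerProductSpace.HarmonicOnNhd h (Metric.ball c R)) (hM₀ : 0 < M)
    (hM : ∀ z ∈ Metric.ball c R, |h z| ≤ M) (hw : w ∈ Metric.ball c R) :
    |h w - h c| ≤ 4 * M * ‖w - c‖ / (R - ‖w - c‖) := by
  obtain ⟨F, hF, hre⟩ := hh.exists_analyticOnNhd_ball_re_eq
  have hR : 0 < R := Metric.pos_of_mem_ball hw
  have hc : c ∈ Metric.ball c R := Metric.mem_ball_self hR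
  have hmaps : MapsTo (c + ·) (Metric.ball 0 R) (Metric.ball c R) := fun z hz ↦ by simpa using hz
  have hG : DifferentiableOn ℂ (fun z ↦ F (c + z) - F c) (Metric.ball 0 R) :=
    (hF.differentiableOn.fun_comp (f := (c + ·)) (by fun_prop) hmaps).sub_const _
  have hGre (z : ℂ) (hz : c + z ∈ Metric.ball c R) : (F (c + z) - F c).re = h (c + z) - h c := by
    rw [sub_re, ← hre hz, ← hre hc]
  have hbound : ‖F (c + (w - c)) - F c‖ ≤ 2 * (2 * M) * ‖w - c‖ / (R - ‖w - c‖) :=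
    Complex.borelCaratheodory_zero (by positivity) hG (fun z hz ↦ by
      rw [mem_ofPred_eq, hGre z (hmaps hz)]
      linarith [abs_le.1 (hM _ (hmaps hz)), abs_le.1 (hM c hc)]) hR
      (by simpa [dist_eq_norm] using hw) (by simp)
  have hle := (Complex.abs_re_le_norm _).trans hbound
  rw [hGre _ (by simpa using hw), add_sub_cancel] at hle
  exact hle.trans_eq (by ring)

section HarmonicAction

variable {m : ℕ} {A : ℂ} {L : ℝ}

theorem norm_add_re_le_pow_add (m : ℕ) (A : ℂ) {t : ℝ} (ht : 0 ≤ t) :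
    ‖A‖ + A.re ≤ ‖(t : ℂ) ^ m + A‖ + ((t : ℂ) ^ m + A).re := by
  simpa only [ofReal_pow] using norm_add_re_le_ofReal_add A (pow_nonneg ht m)

theorem continuousOn_complexSqrt_ray (m : ℕ) (hA : 0 < ‖A‖ + A.re) (hL : 0 ≤ L) :
    ContinuousOn (fun t : ℝ ↦ Complex.sqrt ((t : ℂ) ^ m + A)) (uIcc 0 L) := by
  rw [uIcc_of_le hL]
  exact fun t ht ↦ ((hasDerivAt_complexSqrt (mem_slitPlane_of_norm_add_re_pos
    (hA.trans_le (norm_add_re_le_pow_add m A ht.1)))).continuousAt.comp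
      (f := fun t : ℝ ↦ (t : ℂ) ^ m + A) (by fun_prop)).continuousWithinAt

theorem norm_inv_two_mul_complexSqrt_le {z : ℂ} {c : ℝ} (hc : 0 < c) (hz : c ≤ ‖z‖ + z.re) :
    ‖(2 * Complex.sqrt z)⁻¹‖ ≤ (√(2 * c))⁻¹ := by
  have hle : 2 * c ≤ (2 * ‖Complex.sqrt z‖) ^ 2 := by
    rw [mul_pow, norm_complexSqrt_sq]
    linarith [Complex.re_le_norm z]
  rw [norm_inv, norm_mul, Complex.norm_ofNat]
  exact inv_anti₀ (Real.sqrt_pos.2 (by positivity)) (Real.sqrt_le_iff.2 ⟨by positivity, hle⟩)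

theorem differentiableAt_integral_complexSqrt_ray (m : ℕ) (hA : 0 < ‖A‖ + A.re) (hL : 0 ≤ L) :
    DifferentiableAt ℂ (fun A ↦ ∫ t in (0 : ℝ)..L, Complex.sqrt ((t : ℂ) ^ m + A)) A := by
  set c := (‖A‖ + A.re) / 2
  set V := {B : ℂ | c < ‖B‖ + B.re}
  have hnhds : V ∈ 𝓝 A :=
    (isOpen_lt continuous_const (by fun_prop)).mem_nhds (half_lt_self hA)
  have hAc : A ∈ V := mem_of_mem_nhds hnhds
  have hcont {B : ℂ} (hB : B ∈ V) :
      ContinuousOn (fun t : ℝ ↦ Complex.sqrt ((t : ℂ) ^ m + B)) (uIcc 0 L) :=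
    continuousOn_complexSqrt_ray m ((half_pos hA).trans hB) hL
  have hlower {t : ℝ} (ht : t ∈ uIcc 0 L) {B : ℂ} (hB : B ∈ V) :
      c < ‖(t : ℂ) ^ m + B‖ + ((t : ℂ) ^ m + B).re :=
    hB.trans_le (norm_add_re_le_pow_add m B (uIcc_of_le hL ▸ ht).1)
  have hslit {t : ℝ} (ht : t ∈ uIcc 0 L) {B : ℂ} (hB : B ∈ V) :
      (t : ℂ) ^ m + B ∈ slitPlane :=
    mem_slitPlane_of_norm_add_re_pos ((half_pos hA).trans (hlower ht hB))
  have hcont' : ContinuousOn (fun t : ℝ ↦ (2 * Complex.sqrt ((t : ℂ) ^ m + A))⁻¹) (uIcc 0 L) :=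
    (continuousOn_const.mul (hcont hAc)).inv₀ fun t ht ↦ mul_ne_zero two_ne_zero <|
      (pow_ne_zero_iff two_ne_zero).1 <| (complexSqrt_sq _).trans_ne <|
        slitPlane_ne_zero (hslit ht hAc)
  refine (intervalIntegral.hasDerivAt_integral_of_dominated_loc_of_deriv_le
    (F' := fun B t ↦ (2 * Complex.sqrt ((t : ℂ) ^ m + B))⁻¹) (bound := fun _ ↦ (√(2 * c))⁻¹) hnhds
    (Filter.eventually_of_mem hnhds fun B hB ↦ ((hcont hB).mono
      uIoc_subset_uIcc).aestronglyMeasurable measurableSet_uIoc)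
    (hcont hAc).intervalIntegrable
    ((hcont'.mono uIoc_subset_uIcc).aestronglyMeasurable measurableSet_uIoc)
    (.of_forall fun t ht B hB ↦ ?_) intervalIntegrable_const
    (.of_forall fun t ht B hB ↦ ?_)).2.differentiableAt
  · exact norm_inv_two_mul_complexSqrt_le (half_pos hA) (hlower (uIoc_subset_uIcc ht) hB).le
  · exact (hasDerivAt_complexSqrt (hslit (uIoc_subset_uIcc ht) hB)).comp_const_add _ _

theorem harmonicAt_sectorAction {e : ℂ} (he : 0 < ‖e‖ + (sectorUnit m ^ 2 * e).re) (hL : 0 ≤ L) :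
    InnerProductSpace.HarmonicAt (fun e ↦ sectorAction m e L) e := by
  set U := {A : ℂ | 0 < ‖A‖ + A.re}
  have hU : IsOpen U := isOpen_lt continuous_const (by fun_prop)
  have heU : sectorUnit m ^ 2 * e ∈ U := by simpa [U] using he
  have han : AnalyticAt ℂ (fun e ↦ ∫ t in (0 : ℝ)..L,
      Complex.sqrt ((t : ℂ) ^ m + sectorUnit m ^ 2 * e)) e :=
    (DifferentiableOn.analyticAt (fun A hA ↦ (differentiableAt_integral_complexSqrt_ray m hA
      hL).differentiableWithinAt) (hU.mem_nhds heU)).comp (analyticAt_const.mul analyticAt_id)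
  have hre : (fun e ↦ rayAction m (sectorUnit m ^ 2 * e) L) =ᶠ[𝓝 e] fun e ↦ (∫ t in (0 : ℝ)..L,
      Complex.sqrt ((t : ℂ) ^ m + sectorUnit m ^ 2 * e)).re := by
    filter_upwards [(hU.preimage (continuous_const_mul (sectorUnit m ^ 2))).mem_nhds heU] with e he
    exact Complex.reCLM.intervalIntegral_comp_comm
      (continuousOn_complexSqrt_ray m he hL).intervalIntegrable
  exact ((InnerProductSpace.harmonicAt_congr_nhds hre).2 han.harmonicAt_re).sub
    (InnerProductSpace.harmonicAt_const _)

end HarmonicAction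

section PositiveAxis

variable {m : ℕ} {a : ℕ → ℝ}

theorem eventually_im_lt_of_isRotatedEigenfunction (hm : 3 ≤ m) {c : ℝ} (hc : 0 < c) :
    ∀ᶠ k : ℝ in atTop, ∀ e v d, ‖e‖ = 1 → IsRotatedEigenfunction m a ((k : ℂ) ^ m * e) v d →
      e.im < c := by
  have hs := sin_two_mul_sectorAngle_pos hm
  set s := Real.sin (2 * sectorAngle m)
  obtain ⟨L, hL, hbounds⟩ := exists_eventually_logRatio_bounds hm a
    (c := s ^ 2 / 2) (ε := s * c / 16) (by positivity) (by positivity)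
  filter_upwards [hbounds, eventually_gt_atTop 0] with k hk hk₀ e v d he h
  by_contra! him
  have him₀ : 0 ≤ e.im := hc.le.trans him
  have he₂ : ‖e‖ ≤ 2 := he.trans_le one_le_two
  have hlower := (hk _ _ _ h.star_pow_mul.toIsDecayingSolution (by simpa using he₂)).2.2
    (le_norm_add_re_sectorUnit_sq_mul (by simpa using he) (by
      rw [conj_im]; exact mul_nonpos_of_nonneg_of_nonpos hs.le (neg_nonpos.2 him₀)))
  obtain ⟨h₀, hlower⟩ := hlower
  have hupper := (hk _ _ _ h.toIsDecayingSolution he₂).2.1 (by simpa using h₀)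
  rw [logRatio_conj, map_mul, conj_ofReal, conj_ofReal] at hlower
  have hle := le_of_mul_le_mul_left (hlower.trans hupper) (Real.sqrt_pos.2 (by positivity))
  nlinarith [sectorAction_add_le_conj hm he₂ him₀ hL]

theorem exists_eventually_abs_logRatio_sub_le (hm : 3 ≤ m) (a : ℕ → ℝ) {ε : ℝ} (hε : 0 < ε) :
    ∃ L : ℝ, 1 ≤ L ∧ ∀ᶠ k : ℝ in atTop, ∀ e v d, IsDecayingSolution m a ((k : ℂ) ^ m * e) v d →
      ‖e - 1‖ ≤ Real.sin (2 * sectorAngle m) ^ 2 / 8 → v 0 ≠ 0 ∧ v (k * L) ≠ 0 ∧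
        |logRatio v (k * L) - √(k ^ (m + 2)) * sectorAction m e L| ≤ √(k ^ (m + 2)) * ε := by
  have hs := sin_two_mul_sectorAngle_pos hm
  obtain ⟨L, hL, hbounds⟩ := exists_eventually_logRatio_bounds hm a
    (c := Real.sin (2 * sectorAngle m) ^ 2 / 4) (by positivity) hε
  refine ⟨L, hL, hbounds.mono fun k hk e v d h he ↦ ?_⟩
  obtain ⟨he₂, hce⟩ := norm_le_two_and_le_of_norm_sub_one_le he
  obtain ⟨hne, hupper, hlower⟩ := hk e v d h he₂
  obtain ⟨h₀, hle⟩ := hlower hce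
  exact ⟨h₀, hne, abs_le.2 ⟨by linarith, by linarith [hupper h₀]⟩⟩

/-- The WKB error is harmonic in `e`, so its smallness on a disc makes it almost constant near
the centre, at a rate proportional to the distance. -/
theorem exists_eventually_abs_logRatio_sub_sub_le (hm : 3 ≤ m) (a : ℕ → ℝ) {η : ℝ} (hη : 0 < η) :
    ∃ L : ℝ, 1 ≤ L ∧ ∀ᶠ k : ℝ in atTop, ∃ C : ℝ, ∀ e v d,
      IsDecayingSolution m a ((k : ℂ) ^ m * e) v d →
        ‖e - 1‖ ≤ Real.sin (2 * sectorAngle m) ^ 2 / 16 →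
          |logRatio v (k * L) - √(k ^ (m + 2)) * sectorAction m e L - C| ≤
            √(k ^ (m + 2)) * (η * ‖e - 1‖) := by
  set R := Real.sin (2 * sectorAngle m) ^ 2 / 8 with hR
  have hR₀ : 0 < R := by have := sin_two_mul_sectorAngle_pos hm; positivity
  obtain ⟨L, hL, hsmall⟩ := exists_eventually_abs_logRatio_sub_le hm a (ε := η * R / 8)
    (by positivity)
  refine ⟨L, hL, ?_⟩
  filter_upwards [hsmall, eventually_gt_atTop 0] with k hk hk₀
  obtain ⟨f, f₁, hf⟩ := exists_isDecayingFamily_ball hm a (3 * k ^ m)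
  set K := √(k ^ (m + 2))
  have : 0 < K := Real.sqrt_pos.2 (by positivity)
  have hadm {e : ℂ} (he : e ∈ Metric.ball 1 R) :=
    norm_le_two_and_le_of_norm_sub_one_le (mem_ball_iff_norm.1 he).le
  have hmem {e : ℂ} (he : e ∈ Metric.ball 1 R) :
      (k : ℂ) ^ m * e ∈ Metric.ball (0 : ℂ) (3 * k ^ m) := by
    rw [mem_ball_zero_iff, norm_pow_mul m hk₀.le, mul_comm]
    gcongr
    exact (hadm he).1.trans_lt (by norm_num)
  have hwkb {e : ℂ} (he : e ∈ Metric.ball 1 R) :=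
    hk e _ _ (hf.isDecayingSolution (hmem he)) (mem_ball_iff_norm.1 he).le
  have hharm : InnerProductSpace.HarmonicOnNhd
      (fun e ↦ logRatio (f ((k : ℂ) ^ m * e)) (k * L) - K * sectorAction m e L)
      (Metric.ball 1 R) := fun e he ↦
    (hf.harmonicAt_logRatio Metric.isOpen_ball (hmem he) (hwkb he).1 (hwkb he).2.1).sub
      ((harmonicAt_sectorAction (lt_of_lt_of_le (by linarith) (hadm he).2)
        (zero_le_one.trans hL)).const_smul (c := K))
  refine ⟨logRatio (f ((k : ℂ) ^ m * 1)) (k * L) - K * sectorAction m 1 L, fun e v d h he ↦ ?_⟩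
  have heR : e ∈ Metric.ball 1 R := mem_ball_iff_norm.2 (by linarith)
  rw [hf.logRatio_eq (hmem heR) h]
  refine (abs_sub_le_of_harmonicOnNhd_ball hharm (M := K * (η * R / 8)) (by positivity)
    (fun z hz ↦ (hwkb hz).2.2) heR).trans ?_
  rw [div_le_iff₀ (by linarith)]
  have : 0 ≤ K * η * ‖e - 1‖ := by positivity
  nlinarith

theorem norm_sub_one_le_two_mul_abs_im {e : ℂ} (he : ‖e‖ = 1) (hre : 0 ≤ e.re) :
    ‖e - 1‖ ≤ 2 * |e.im| := by
  have hsq : e.re ^ 2 + e.im ^ 2 = 1 := by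
    rw [← one_pow (M := ℝ) 2, ← he, Complex.sq_norm, Complex.normSq_apply]; ring
  refine le_of_sq_le_sq ?_ (by positivity)
  rw [Complex.sq_norm, Complex.normSq_apply, mul_pow, sq_abs]
  simp only [sub_re, sub_im, one_re, one_im]
  nlinarith

theorem eventually_im_nonpos_of_isRotatedEigenfunction (hm : 3 ≤ m) :
    ∀ᶠ k : ℝ in atTop, ∀ e v d, ‖e‖ = 1 → 0 < e.re →
      IsRotatedEigenfunction m a ((k : ℂ) ^ m * e) v d → e.im ≤ 0 := by
  have hs := sin_two_mul_sectorAngle_pos hm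
  set s := Real.sin (2 * sectorAngle m)
  obtain ⟨L, hL, herror⟩ := exists_eventually_abs_logRatio_sub_sub_le hm a (η := s / 32)
    (by positivity)
  filter_upwards [herror, eventually_im_lt_of_isRotatedEigenfunction (a := a) hm
    (c := s ^ 2 / 32) (by positivity), eventually_gt_atTop 0]
    with k ⟨C, hk⟩ hsmall hk₀ e v d he hre h
  by_contra! him
  have hdist : ‖e - 1‖ ≤ 2 * e.im :=
    abs_of_pos him ▸ norm_sub_one_le_two_mul_abs_im he hre.le
  have hdist' : ‖conj e - 1‖ = ‖e - 1‖ := by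
    rw [← RCLike.norm_conj (e - 1), map_sub, map_one]
  have hlt := hsmall e v d he h
  have herr := hk _ _ _ h.toIsDecayingSolution (by linarith)
  have herr' := hk _ _ _ h.star_pow_mul.toIsDecayingSolution (by rw [hdist']; linarith)
  rw [logRatio_conj, map_mul, conj_ofReal, conj_ofReal, hdist'] at herr'
  have hgap := sectorAction_add_le_conj hm (he.trans_le one_le_two) him.le hL
  have hle : √(k ^ (m + 2)) * (sectorAction m (conj e) L - sectorAction m e L) ≤
      √(k ^ (m + 2)) * (2 * (s / 32 * ‖e - 1‖)) := by
    linarith [(abs_le.1 herr).2, (abs_le.1 herr').1]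
  have := le_of_mul_le_mul_left hle (Real.sqrt_pos.2 (by positivity))
  nlinarith

theorem eventually_cobounded_im_le (hm : 3 ≤ m) :
    ∀ᶠ l in Bornology.cobounded ℂ, ∀ v d, IsRotatedEigenfunction m a l v d →
      l.im ≤ Real.sin (sectorAngle m) / 4 * ‖l‖ ∧ (0 < l.re → l.im ≤ 0) := by
  have hs := sin_sectorAngle_pos hm
  refine eventually_cobounded_of_eventually_pow_mul (by lia : m ≠ 0) ?_
  filter_upwards [eventually_im_lt_of_isRotatedEigenfunction (a := a) hm
    (c := Real.sin (sectorAngle m) / 4) (by positivity),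
    eventually_im_nonpos_of_isRotatedEigenfunction (a := a) hm, eventually_gt_atTop 0]
    with k hlt hnonpos hk₀ e he v d h
  have hkm : 0 < k ^ m := pow_pos hk₀ m
  have him : ((k : ℂ) ^ m * e).im = k ^ m * e.im := by rw [← ofReal_pow, im_ofReal_mul]
  have hre : ((k : ℂ) ^ m * e).re = k ^ m * e.re := by rw [← ofReal_pow, re_ofReal_mul]
  rw [norm_pow_mul m hk₀.le, him, hre, he, mul_one, mul_comm _ (k ^ m)]
  exact ⟨mul_le_mul_of_nonneg_left (hlt e v d he h).le hkm.le, fun hpos ↦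
    mul_nonpos_of_nonneg_of_nonpos hkm.le
      (hnonpos e v d he (pos_of_mul_pos_right hpos hkm.le) h)⟩

theorem eventually_im_eq_zero_and_re_pos (hm : 3 ≤ m) :
    ∀ᶠ l in Bornology.cobounded ℂ, ∀ v d, IsRotatedEigenfunction m a l v d →
      l.im = 0 ∧ 0 < l.re := by
  filter_upwards [eventually_cobounded_im_le (a := a) hm,
    Complex.isometry_conj.antilipschitz.tendsto_cobounded.eventually
      (eventually_cobounded_im_le (a := a) hm),
    eventually_not_isRotatedEigenfunction_of_re_nonpos (a := a) hm] with l hl hl' hneg v d h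
  obtain ⟨him, him₀⟩ := hl v d h
  obtain ⟨him', him₀'⟩ := hl' _ _ h.star
  simp only [conj_im, conj_re, RCLike.norm_conj] at him' him₀'
  have hre : 0 < l.re := by
    by_contra! hre
    exact hneg hre (abs_le.2 ⟨by linarith, him⟩) v d h
  exact ⟨le_antisymm (him₀ hre) (by linarith [him₀' hre]), hre⟩

end PositiveAxis

/-- For real coefficients, all but finitely many eigenvalues of `H(m,a)` are real
and positive. -/
theorem stmt0 (m : ℕ) (hm : 3 ≤ m) (a : ℕ → ℝ) :
    {lam : ℂ | IsEigenvalue m (fun j => (a j : ℂ)) lam ∧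
      ¬ (lam.im = 0 ∧ 0 < lam.re)}.Finite := by
  obtain ⟨R, -, hR⟩ := Filter.hasBasis_cobounded_norm.eventually_iff.1
    (eventually_im_eq_zero_and_re_pos (a := a) hm)
  refine (finite_setOf_norm_le_isRotatedEigenfunction (a := a) hm R).subset ?_
  rintro l ⟨hl, hnot⟩
  obtain ⟨v, d, h⟩ := hl.exists_isRotatedEigenfunction
  exact ⟨le_of_not_ge fun hRl ↦ hnot (hR hRl v d h), v, d, h⟩
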